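/- arXiv:1805.09100 — 4 statements merged into one kernel-verified Lean document; each statement's English description precedes it below -/
import Mathlib

section
/- With Ω ⊂ ℝ^N a disjoint union of S shifted cubes Ω_i = a_i + [0,h)^N and the elementary operators 𝓔_{ij}^α[𝐀] on L²(Ω → ℂ^M) as defined in the context, the composition of two elementary operators satisfies 𝓔_{ij}^α[𝐀] ∘ 𝓔_{kl}^β[𝐁] = δ_{jk} 𝓔_{il}^{α∪β}[𝐀𝐁] for all 𝐀, 𝐁 ∈ ℂ^{M×M}, α, β ⊆ {1,...,N}, and i, j, k, l ∈ {1,...,S}, where δ_{jk} is the Kronecker delta and 𝐀𝐁 is the matrix product. -/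
/-!
STATEMENT 6: For the elementary operators 𝓔_{ij}^α[𝐀] on L²(Ω → ℂ^M):
𝓔_{ij}^α[𝐀] ∘ 𝓔_{kl}^β[𝐁] = δ_{jk} 𝓔_{il}^{α∪β}[𝐀𝐁].
-/

open MeasureTheory Finset

noncomputable section

namespace Stmt6

/-- `ℂ^M` with its Euclidean (Hilbert) structure. -/
abbrev V (M : ℕ) := EuclideanSpace ℂ (Fin M)

/-- The half-open cube `H = [0,h)^N`. -/
def cube (N : ℕ) (h : ℝ) : Set (Fin N → ℝ) := Set.univ.pi fun _ => Set.Ico 0 h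

/-- `combine α y x` agrees with `y` in the coordinates `n ∈ α` and with `x`
in the coordinates `n ∉ α`. -/
def combine {N : ℕ} (α : Finset (Fin N)) (y x : Fin N → ℝ) : Fin N → ℝ :=
  fun n => if n ∈ α then y n else x n

/-- The shifted cube `Ω_i = a_i + [0,h)^N`. -/
def OmegaI {N S : ℕ} (a : Fin S → Fin N → ℝ) (h : ℝ) (i : Fin S) :
    Set (Fin N → ℝ) := {x | x - a i ∈ cube N h}

/-- `Ω = ⋃_{i=1}^S Ω_i`. -/
def Omega {N S : ℕ} (a : Fin S → Fin N → ℝ) (h : ℝ) : Set (Fin N → ℝ) :=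
  ⋃ i, OmegaI a h i

/-- The pointwise formula for the elementary operator `𝓔_{ij}^α[𝐀]`:
`(𝓔_{ij}^α[𝐀]u)(x + a_i) = h^{−|α|} 𝐀 ∫_{[0,h)^{|α|}} u(x' + a_j) dx'_α` for
`x ∈ H`, and `0` outside `Ω_i`.  Here the partial integral over the coordinates
in `α` is realized as an integral over the whole cube `[0,h)^N` (the integrand
does not depend on the coordinates of `y` outside `α`), compensated by the
additional normalization `h^{−(N−|α|)}`. -/
def Efun {N M S : ℕ} (a : Fin S → Fin N → ℝ) (h : ℝ) (i j : Fin S)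
    (α : Finset (Fin N)) (A : Matrix (Fin M) (Fin M) ℂ)
    (u : (Fin N → ℝ) → V M) : (Fin N → ℝ) → V M :=
  (OmegaI a h i).indicator fun x =>
    ((h ^ α.card)⁻¹ * (h ^ (N - α.card))⁻¹ : ℝ) •
      (show V M from WithLp.toLp 2 (A.mulVec
        (show Fin M → ℂ from ∫ y in cube N h, u (a j + combine α y (x - a i)))))

/-!
Averaging over the coordinates in `α` against a product probability measure means resampling these
coordinates independently. Resampling those in `α` and then those in `β` resamples those in
`α ∪ β`, because a point of the product whose coordinates in `β` are replaced by independent ones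
still has the product law; with Fubini's theorem this gives the composition law for partial
averages. Read on the translate `Ω_i`, the operator `𝓔_{ij}^α[𝐀]` is the partial average over `α`
of the function on `Ω_j`, followed by the matrix `𝐀`, which commutes with integration.
-/

section PartialAverage

variable {ι : Type*} {X : ι → Type*} [DecidableEq ι]

lemma piecewise_piecewise_union (s t : Finset ι) (z y x : ∀ i, X i) :
    t.piecewise z (s.piecewise y x) = (s ∪ t).piecewise (t.piecewise z y) x := by
  ext i
  by_cases ht : i ∈ t <;> by_cases hs : i ∈ s <;> simp [hs, ht]

variable [∀ i, MeasurableSpace (X i)]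

lemma measurable_finset_piecewise (s : Finset ι) :
    Measurable fun p : (∀ i, X i) × (∀ i, X i) => s.piecewise p.2 p.1 := by
  refine measurable_pi_lambda _ fun i => ?_
  unfold Finset.piecewise
  split_ifs <;> fun_prop

variable [Fintype ι] (μ : ∀ i, Measure (X i))

lemma measurePreserving_piecewise [∀ i, IsProbabilityMeasure (μ i)] (s : Finset ι) :
    MeasurePreserving (fun p : (∀ i, X i) × (∀ i, X i) => s.piecewise p.2 p.1)
      ((Measure.pi μ).prod (Measure.pi μ)) (Measure.pi μ) := by
  refine ⟨measurable_finset_piecewise s, (Measure.pi_eq fun t ht => ?_).symm⟩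
  have hpreimage : (fun p : (∀ i, X i) × (∀ i, X i) => s.piecewise p.2 p.1) ⁻¹' Set.univ.pi t =
      Set.univ.pi (s.piecewise (fun _ => Set.univ) t) ×ˢ
        Set.univ.pi (s.piecewise t fun _ => Set.univ) := by
    ext p
    simp only [Set.mem_preimage, Set.mem_univ_pi, Set.mem_prod, ← forall_and]
    refine forall_congr' fun i => ?_
    by_cases hi : i ∈ s <;> simp [hi]
  rw [Measure.map_apply (measurable_finset_piecewise s) (.univ_pi ht), hpreimage,
    Measure.prod_prod, Measure.pi_pi, Measure.pi_pi, ← Finset.prod_mul_distrib]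
  refine Finset.prod_congr rfl fun i _ => ?_
  by_cases hi : i ∈ s <;> simp [hi]

variable {E F : Type*} [NormedAddCommGroup E] [NormedAddCommGroup F] {f g : (∀ i, X i) → E}

variable {μ} in
lemma ae_integrable_piecewise [∀ i, IsProbabilityMeasure (μ i)] (s : Finset ι)
    (hf : Integrable f (Measure.pi μ)) :
    ∀ᵐ x ∂Measure.pi μ, Integrable (fun y => f (s.piecewise y x)) (Measure.pi μ) :=
  ((measurePreserving_piecewise μ s).integrable_comp_of_integrable hf).prod_right_ae

variable [NormedSpace ℝ E] [NormedSpace ℝ F]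

/-- The average of `f` over the coordinates in `s`, the other ones being held fixed, as a function
of the whole point. The integral runs over all coordinates; for probability measures those outside
`s` contribute the factor `1`. -/
def partialAverage (s : Finset ι) (f : (∀ i, X i) → E) (x : ∀ i, X i) : E :=
  ∫ y, f (s.piecewise y x) ∂Measure.pi μ

variable {μ} [∀ i, IsProbabilityMeasure (μ i)]

lemma partialAverage_congr_ae (s : Finset ι) (hfg : f =ᵐ[Measure.pi μ] g) :
    partialAverage μ s f =ᵐ[Measure.pi μ] partialAverage μ s g := by
  have hresample := Measure.ae_ae_of_ae_prod
    ((measurePreserving_piecewise μ s).quasiMeasurePreserving.ae hfg)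
  filter_upwards [hresample] with x hx using integral_congr_ae hx

lemma integral_partialAverage (s : Finset ι) (hf : Integrable f (Measure.pi μ)) :
    ∫ x, partialAverage μ s f x ∂Measure.pi μ = ∫ x, f x ∂Measure.pi μ := by
  have hmp := measurePreserving_piecewise μ s
  calc ∫ x, partialAverage μ s f x ∂Measure.pi μ
      = ∫ p, f (s.piecewise p.2 p.1) ∂(Measure.pi μ).prod (Measure.pi μ) :=
        (integral_prod _ (hmp.integrable_comp_of_integrable hf)).symm
    _ = ∫ x, f x ∂Measure.pi μ := by
        rw [← integral_map hmp.aemeasurable (by rw [hmp.map_eq]; exact hf.aestronglyMeasurable),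
          hmp.map_eq]

lemma integrable_partialAverage (s : Finset ι) (hf : Integrable f (Measure.pi μ)) :
    Integrable (partialAverage μ s f) (Measure.pi μ) :=
  ((measurePreserving_piecewise μ s).integrable_comp_of_integrable hf).integral_prod_left

lemma partialAverage_partialAverage (s t : Finset ι) (hf : Integrable f (Measure.pi μ)) :
    partialAverage μ s (partialAverage μ t f) =ᵐ[Measure.pi μ] partialAverage μ (s ∪ t) f := by
  filter_upwards [ae_integrable_piecewise (s ∪ t) hf] with x hx
  calc partialAverage μ s (partialAverage μ t f) x
      = ∫ y, partialAverage μ t (fun w => f ((s ∪ t).piecewise w x)) y ∂Measure.pi μ := by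
        simp only [partialAverage, piecewise_piecewise_union]
    _ = partialAverage μ (s ∪ t) f x := integral_partialAverage t hx

lemma partialAverage_comp_clm [CompleteSpace E] [CompleteSpace F] (s : Finset ι) (L : E →L[ℝ] F)
    (hf : Integrable f (Measure.pi μ)) :
    partialAverage μ s (fun x => L (f x)) =ᵐ[Measure.pi μ]
      fun x => L (partialAverage μ s f x) := by
  filter_upwards [ae_integrable_piecewise s hf] with x hx using L.integral_comp_comm hx

end PartialAverage

section Cond

open scoped ProbabilityTheory

lemma pi_cond {ι : Type*} [Fintype ι] {X : ι → Type*} [∀ i, MeasurableSpace (X i)]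
    (μ : ∀ i, Measure (X i)) [∀ i, SigmaFinite (μ i)] {s : ∀ i, Set (X i)}
    (hs₀ : ∀ i, μ i (s i) ≠ 0) (hs : ∀ i, μ i (s i) ≠ ⊤) :
    Measure.pi (fun i => (μ i)[|s i]) = (Measure.pi μ)[|Set.univ.pi s] := by
  have (i : ι) : IsProbabilityMeasure (μ i)[|s i] :=
    ProbabilityTheory.cond_isProbabilityMeasure_of_finite (hs₀ i) (hs i)
  refine Measure.pi_eq fun t _ => ?_
  simp only [ProbabilityTheory.cond, Measure.restrict_pi_pi, Measure.smul_apply, Measure.pi_pi,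
    smul_eq_mul, Finset.prod_mul_distrib]
  rw [ENNReal.prod_inv_distrib fun i _ j _ _ => .inl (hs₀ i)]

lemma ae_cond_iff {X : Type*} [MeasurableSpace X] {μ : Measure X} {s : Set X} (hs : μ s ≠ ⊤)
    {p : X → Prop} : (∀ᵐ x ∂μ[|s], p x) ↔ ∀ᵐ x ∂μ.restrict s, p x :=
  Measure.ae_ennreal_smul_measure_iff (ENNReal.inv_ne_zero.2 hs)

lemma measurePreserving_cond {X Y : Type*} [MeasurableSpace X] [MeasurableSpace Y]
    {μ : Measure X} {ν : Measure Y} {f : X → Y} (hf : MeasurePreserving f μ ν) {s : Set Y}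
    (hs : MeasurableSet s) : MeasurePreserving f μ[|f ⁻¹' s] ν[|s] := by
  rw [ProbabilityTheory.cond, ProbabilityTheory.cond, hf.measure_preimage hs.nullMeasurableSet]
  exact (hf.restrict_preimage hs).smul_measure _

end Cond

section Cube

open scoped ProbabilityTheory

/-- The uniform law on each edge `[0,h)` of the cube. It is indexed by the coordinates, so that
`Measure.pi (edgeUniform N h)` is the uniform law on `[0,h)^N`. -/
def edgeUniform (N : ℕ) (h : ℝ) : Fin N → Measure ℝ := fun _ => volume[|Set.Ico 0 h]

variable {N S : ℕ} {h : ℝ}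

lemma isProbabilityMeasure_edgeUniform (hh : 0 < h) (n : Fin N) :
    IsProbabilityMeasure (edgeUniform N h n) :=
  ProbabilityTheory.cond_isProbabilityMeasure_of_finite (by simpa using hh) (by simp)

lemma pi_edgeUniform (hh : 0 < h) : Measure.pi (edgeUniform N h) = volume[|cube N h] :=
  pi_cond (fun _ => volume) (fun _ => by simpa using hh) fun _ => by simp

lemma measurableSet_cube : MeasurableSet (cube N h) :=
  .univ_pi fun _ => measurableSet_Ico

lemma volume_cube : volume (cube N h) = ENNReal.ofReal h ^ N := by
  simp [cube, volume_pi, Measure.pi_pi]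

lemma integral_edgeUniform {E : Type*} [NormedAddCommGroup E] [NormedSpace ℝ E] (hh : 0 < h)
    (f : (Fin N → ℝ) → E) :
    ∫ y, f y ∂Measure.pi (edgeUniform N h) = (h ^ N)⁻¹ • ∫ y in cube N h, f y := by
  rw [pi_edgeUniform hh, ProbabilityTheory.cond, integral_smul_measure, volume_cube]
  simp [hh.le]

lemma ae_mem_cube (hh : 0 < h) : ∀ᵐ y ∂Measure.pi (edgeUniform N h), y ∈ cube N h := by
  rw [pi_edgeUniform hh]
  exact ProbabilityTheory.ae_cond_mem measurableSet_cube

variable (a : Fin S → Fin N → ℝ)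

lemma measurableSet_OmegaI (i : Fin S) : MeasurableSet (OmegaI a h i) :=
  measurableSet_cube.preimage (measurable_id.sub_const (a i))

lemma volume_OmegaI (i : Fin S) : volume (OmegaI a h i) = ENNReal.ofReal h ^ N := by
  rw [← volume_cube]
  exact (measurePreserving_sub_right volume (a i)).measure_preimage
    measurableSet_cube.nullMeasurableSet

variable {a}

lemma add_mem_OmegaI_iff {i : Fin S} {y : Fin N → ℝ} :
    a i + y ∈ OmegaI a h i ↔ y ∈ cube N h := by
  simp [OmegaI]

lemma measurePreserving_add_OmegaI (hh : 0 < h) (i : Fin S) :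
    MeasurePreserving (a i + ·) (Measure.pi (edgeUniform N h)) volume[|OmegaI a h i] := by
  have hpreimage : (a i + ·) ⁻¹' OmegaI a h i = cube N h := Set.ext fun _ => add_mem_OmegaI_iff
  rw [pi_edgeUniform hh, ← hpreimage]
  exact measurePreserving_cond (measurePreserving_add_left volume (a i)) (measurableSet_OmegaI a i)

end Cube

section Block

variable {N S : ℕ} {h : ℝ} {a : Fin S → Fin N → ℝ} {E : Type*}

/-- The restriction of a function on `Ω` to `Ω_i`, as a function on the cube `[0,h)^N`. -/
def block (a : Fin S → Fin N → ℝ) (i : Fin S) (u : (Fin N → ℝ) → E) : (Fin N → ℝ) → E :=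
  fun y => u (a i + y)

lemma ae_restrict_OmegaI_iff (hh : 0 < h) {i : Fin S} {p : (Fin N → ℝ) → Prop} :
    (∀ᵐ x ∂volume.restrict (OmegaI a h i), p x) ↔
      ∀ᵐ y ∂Measure.pi (edgeUniform N h), p (a i + y) := by
  have hne_top : volume (OmegaI a h i) ≠ ⊤ := by simp [volume_OmegaI]
  rw [← ae_cond_iff hne_top, ← (measurePreserving_add_OmegaI hh i).map_eq]
  exact (measurableEmbedding_addLeft (a i)).ae_map_iff

lemma block_ae_eq_of_ae_eq (hh : 0 < h) {u v : (Fin N → ℝ) → E}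
    (huv : u =ᵐ[volume.restrict (Omega a h)] v) (i : Fin S) :
    block a i u =ᵐ[Measure.pi (edgeUniform N h)] block a i v :=
  (ae_restrict_OmegaI_iff hh).1
    (ae_restrict_of_ae_restrict_of_subset (Set.subset_iUnion _ i) huv)

lemma ae_eq_of_block_ae_eq (hh : 0 < h) {i : Fin S} {u v : (Fin N → ℝ) → E}
    (hblock : block a i u =ᵐ[Measure.pi (edgeUniform N h)] block a i v)
    (hcompl : ∀ x ∉ OmegaI a h i, u x = v x) : u =ᵐ[volume] v :=
  ae_of_ae_restrict_of_ae_restrict_compl (OmegaI a h i) ((ae_restrict_OmegaI_iff hh).2 hblock)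
    (ae_restrict_of_forall_mem (measurableSet_OmegaI a i).compl hcompl)

lemma memLp_block [NormedAddCommGroup E] (hh : 0 < h) {p : ENNReal} {u : (Fin N → ℝ) → E}
    (hu : MemLp u p (volume.restrict (Omega a h))) (i : Fin S) :
    MemLp (block a i u) p (Measure.pi (edgeUniform N h)) := by
  have huI : MemLp u p (volume.restrict (OmegaI a h i)) :=
    hu.mono_measure (Measure.restrict_mono (Set.subset_iUnion _ i) le_rfl)
  have hne_top : (volume (OmegaI a h i))⁻¹ ≠ ⊤ := by simp [volume_OmegaI, hh]
  exact (huI.smul_measure hne_top).comp_measurePreserving (measurePreserving_add_OmegaI hh i)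

end Block

section ElementaryOperator

variable {N M S : ℕ} {h : ℝ} {a : Fin S → Fin N → ℝ} {i j k l : Fin S} {α β : Finset (Fin N)}
  {A B : Matrix (Fin M) (Fin M) ℂ} {u v : (Fin N → ℝ) → V M}

lemma Efun_of_notMem {x : Fin N → ℝ} (hx : x ∉ OmegaI a h i) : Efun a h i j α A u x = 0 :=
  Set.indicator_of_notMem hx _

lemma Efun_zero : Efun a h i j α A 0 = 0 := by
  ext1 x
  simp [Efun]

lemma Efun_add_of_mem_cube (hh : 0 < h) {y : Fin N → ℝ} (hy : y ∈ cube N h) :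
    Efun a h i j α A u (a i + y) =
      Matrix.toEuclideanCLM (𝕜 := ℂ) A (partialAverage (edgeUniform N h) α (block a j u) y) := by
  have hscale : (h ^ α.card)⁻¹ * (h ^ (N - α.card))⁻¹ = (h ^ N)⁻¹ := by
    rw [← mul_inv, ← pow_add, Nat.add_sub_cancel' (card_finset_fin_le α)]
  have hofLp (f : (Fin N → ℝ) → V M) :
      ∫ z in cube N h, (f z).ofLp = (∫ z in cube N h, f z).ofLp :=
    (PiLp.continuousLinearEquiv 2 ℂ fun _ : Fin M => ℂ).integral_comp_comm f
  rw [Efun, Set.indicator_of_mem (add_mem_OmegaI_iff.2 hy), hscale, add_sub_cancel_left, hofLp,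
    partialAverage, integral_edgeUniform hh, ContinuousLinearMap.map_smul_of_tower]
  rfl

lemma block_Efun (hh : 0 < h) :
    block a i (Efun a h i j α A u) =ᵐ[Measure.pi (edgeUniform N h)] fun y =>
      Matrix.toEuclideanCLM (𝕜 := ℂ) A (partialAverage (edgeUniform N h) α (block a j u) y) :=
  (ae_mem_cube hh).mono fun _ => Efun_add_of_mem_cube hh

lemma block_Efun_of_disjoint (hh : 0 < h) (hjk : Disjoint (OmegaI a h j) (OmegaI a h k)) :
    block a j (Efun a h k l β B u) =ᵐ[Measure.pi (edgeUniform N h)] 0 :=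
  (ae_mem_cube hh).mono fun _ hy =>
    Efun_of_notMem (hjk.notMem_of_mem_left (add_mem_OmegaI_iff.2 hy))

lemma Efun_congr_ae (hh : 0 < h)
    (huv : block a j u =ᵐ[Measure.pi (edgeUniform N h)] block a j v) :
    Efun a h i j α A u =ᵐ[volume] Efun a h i j α A v := by
  have := isProbabilityMeasure_edgeUniform (N := N) hh
  refine ae_eq_of_block_ae_eq hh ?_ fun x hx => by rw [Efun_of_notMem hx, Efun_of_notMem hx]
  exact (block_Efun hh).trans <|
    ((partialAverage_congr_ae α huv).fun_comp _).trans (block_Efun hh).symm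

lemma Efun_Efun_of_disjoint (hh : 0 < h) (hjk : Disjoint (OmegaI a h j) (OmegaI a h k)) :
    Efun a h i j α A (Efun a h k l β B u) =ᵐ[volume] 0 := by
  rw [← Efun_zero (a := a) (h := h) (i := i) (j := j) (α := α) (A := A)]
  exact Efun_congr_ae hh (block_Efun_of_disjoint hh hjk)

lemma Efun_Efun (hh : 0 < h) (hu : Integrable (block a l u) (Measure.pi (edgeUniform N h))) :
    Efun a h i j α A (Efun a h j l β B u) =ᵐ[volume] Efun a h i l (α ∪ β) (A * B) u := by
  have := isProbabilityMeasure_edgeUniform (N := N) hh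
  let P := Measure.pi (edgeUniform N h)
  let avg := partialAverage (E := V M) (edgeUniform N h)
  let LA := Matrix.toEuclideanCLM (𝕜 := ℂ) A
  let LB := Matrix.toEuclideanCLM (𝕜 := ℂ) B
  refine ae_eq_of_block_ae_eq hh ?_ fun x hx => by rw [Efun_of_notMem hx, Efun_of_notMem hx]
  calc block a i (Efun a h i j α A (Efun a h j l β B u))
      =ᵐ[P] fun y => LA (avg α (block a j (Efun a h j l β B u)) y) :=
        block_Efun hh
    _ =ᵐ[P] fun y => LA (avg α (fun z => LB (avg β (block a l u) z)) y) :=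
        (partialAverage_congr_ae α (block_Efun hh)).fun_comp LA
    _ =ᵐ[P] fun y => LA (LB (avg α (avg β (block a l u)) y)) :=
        (partialAverage_comp_clm α (LB.restrictScalars ℝ)
          (integrable_partialAverage β hu)).fun_comp LA
    _ =ᵐ[P] fun y => LA (LB (avg (α ∪ β) (block a l u) y)) :=
        (partialAverage_partialAverage α β hu).fun_comp (LA ∘ LB)
    _ = fun y => Matrix.toEuclideanCLM (𝕜 := ℂ) (A * B) (avg (α ∪ β) (block a l u) y) := by
        rw [map_mul]; rfl
    _ =ᵐ[P] block a i (Efun a h i l (α ∪ β) (A * B) u) :=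
        (block_Efun hh).symm

end ElementaryOperator

theorem comp_elementary_operators_general {N M S : ℕ} {p : ENNReal} [Fact (1 ≤ p)] {h : ℝ}
    (hh : 0 < h) {a : Fin S → Fin N → ℝ}
    (hdisj : ∀ i j : Fin S, i ≠ j → Disjoint (OmegaI a h i) (OmegaI a h j))
    {EE : Fin S → Fin S → Finset (Fin N) → Matrix (Fin M) (Fin M) ℂ →
      (Lp (V M) p (volume.restrict (Omega a h)) →L[ℂ]
        Lp (V M) p (volume.restrict (Omega a h)))}
    (hEE : ∀ i j α A (u : Lp (V M) p (volume.restrict (Omega a h))),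
      (EE i j α A u : (Fin N → ℝ) → V M) =ᵐ[volume.restrict (Omega a h)]
        Efun a h i j α A u)
    (i j k l : Fin S) (α β : Finset (Fin N)) (A B : Matrix (Fin M) (Fin M) ℂ) :
    (EE i j α A).comp (EE k l β B) = if j = k then EE i l (α ∪ β) (A * B) else 0 := by
  have := isProbabilityMeasure_edgeUniform (N := N) hh
  ext1 u
  have hcomp : EE i j α A (EE k l β B u) =ᵐ[volume.restrict (Omega a h)]
      Efun a h i j α A (Efun a h k l β B u) :=
    (hEE i j α A _).trans <| ae_restrict_of_ae <|
      Efun_congr_ae hh (block_ae_eq_of_ae_eq hh (hEE k l β B u) j)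
  refine Lp.ext (hcomp.trans ?_)
  split_ifs with hjk
  · subst hjk
    have hu : Integrable (block a l u) (Measure.pi (edgeUniform N h)) :=
      (memLp_block hh (Lp.memLp u) l).integrable Fact.out
    exact Filter.EventuallyEq.trans (ae_restrict_of_ae (Efun_Efun hh hu))
      (hEE i l (α ∪ β) (A * B) u).symm
  · exact Filter.EventuallyEq.trans
      (ae_restrict_of_ae (Efun_Efun_of_disjoint hh (hdisj j k hjk))) (Lp.coeFn_zero _ _ _).symm

/-- Let `Ω ⊂ ℝ^N` be a disjoint union of `S` shifted cubes
`Ω_i = a_i + [0,h)^N` and let `𝓔_{ij}^α[𝐀]` be bounded operators on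
`L²(Ω → ℂ^M)` acting by the defining formula `Efun`.  Then
`𝓔_{ij}^α[𝐀] ∘ 𝓔_{kl}^β[𝐁] = δ_{jk} 𝓔_{il}^{α∪β}[𝐀𝐁]`. -/
theorem comp_elementary_operators (N M S : ℕ) (hN : 1 ≤ N) (hM : 1 ≤ M)
    (hS : 1 ≤ S) (h : ℝ) (hh : 0 < h) (a : Fin S → Fin N → ℝ)
    (hdisj : ∀ i j : Fin S, i ≠ j → Disjoint (OmegaI a h i) (OmegaI a h j))
    (EE : Fin S → Fin S → Finset (Fin N) → Matrix (Fin M) (Fin M) ℂ →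
      (Lp (V M) 2 (volume.restrict (Omega a h)) →L[ℂ]
        Lp (V M) 2 (volume.restrict (Omega a h))))
    (hEE : ∀ i j α A (u : Lp (V M) 2 (volume.restrict (Omega a h))),
      (EE i j α A u : (Fin N → ℝ) → V M) =ᵐ[volume.restrict (Omega a h)]
        Efun a h i j α A u)
    (i j k l : Fin S) (α β : Finset (Fin N)) (A B : Matrix (Fin M) (Fin M) ℂ) :
    (EE i j α A).comp (EE k l β B) = if j = k then EE i l (α ∪ β) (A * B) else 0 :=
  comp_elementary_operators_general hh hdisj hEE i j k l α β A B

end Stmt6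
end
end

section
/- With Ω ⊂ ℝ^N a disjoint union of S shifted cubes Ω_i = a_i + [0,h)^N, let 𝔄 be the C*-subalgebra of bounded operators on L²(Ω → ℂ^M) generated by all elementary operators 𝓔_{ij}^α[𝐀] (𝐀 ∈ ℂ^{M×M}, α ⊆ {1,...,N}, i,j ∈ {1,...,S}). Then every element 𝒜 ∈ 𝔄 has the form 𝒜 = ∑_{α⊆{1,...,N}} ∑_{i,j=1}^S 𝓔_{ij}^α[𝐀_{ij}^α] with uniquely determined matrices 𝐀_{ij}^α ∈ ℂ^{M×M}, and the map π : 𝔄 → (ℂ^{MS×MS})^{2^N} defined by π(𝒜) = (𝐁_α)_{α⊆{1,...,N}}, where 𝐀_α = (𝐀_{ij}^α)_{i,j=1}^S ∈ ℂ^{MS×MS} is the block matrix of coefficients and 𝐁_α = ∑_{β⊆α} 𝐀_β, is a *-algebra isomorphism of C*-algebras from 𝔄 onto the product C*-algebra (ℂ^{MS×MS})^{2^N}. -/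
/-!
STATEMENT 8: The C*-algebra 𝔄 generated by the elementary operators
𝓔_{ij}^α[𝐀] on L²(Ω → ℂ^M): every 𝒜 ∈ 𝔄 has a unique expansion
𝒜 = ∑_α ∑_{i,j} 𝓔_{ij}^α[𝐀_{ij}^α], and π(𝒜) = (𝐁_α)_α with
𝐁_α = ∑_{β⊆α} 𝐀_β (block matrices 𝐀_α = (𝐀_{ij}^α)) is a *-algebra
isomorphism of 𝔄 onto the product C*-algebra (ℂ^{MS×MS})^{2^N}.
-/

open MeasureTheory Finset

noncomputable section

namespace Stmt8

/-- `ℂ^M` with its Euclidean (Hilbert) structure. -/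
abbrev V (M : ℕ) := EuclideanSpace ℂ (Fin M)

/-- The half-open cube `H = [0,h)^N`. -/
def cube (N : ℕ) (h : ℝ) : Set (Fin N → ℝ) := Set.univ.pi fun _ => Set.Ico 0 h

/-- `combine α y x` agrees with `y` in the coordinates `n ∈ α` and with `x`
in the coordinates `n ∉ α`. -/
def combine {N : ℕ} (α : Finset (Fin N)) (y x : Fin N → ℝ) : Fin N → ℝ :=
  fun n => if n ∈ α then y n else x n

/-- The shifted cube `Ω_i = a_i + [0,h)^N`. -/
def OmegaI {N S : ℕ} (a : Fin S → Fin N → ℝ) (h : ℝ) (i : Fin S) :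
    Set (Fin N → ℝ) := {x | x - a i ∈ cube N h}

/-- `Ω = ⋃_{i=1}^S Ω_i`. -/
def Omega {N S : ℕ} (a : Fin S → Fin N → ℝ) (h : ℝ) : Set (Fin N → ℝ) :=
  ⋃ i, OmegaI a h i

/-- The pointwise formula for the elementary operator `𝓔_{ij}^α[𝐀]`:
`(𝓔_{ij}^α[𝐀]u)(x + a_i) = h^{−|α|} 𝐀 ∫_{[0,h)^{|α|}} u(x' + a_j) dx'_α` for
`x ∈ H`, and `0` outside `Ω_i`.  Here the partial integral over the coordinates
in `α` is realized as an integral over the whole cube `[0,h)^N` (the integrand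
does not depend on the coordinates of `y` outside `α`), compensated by the
additional normalization `h^{−(N−|α|)}`. -/
def Efun {N M S : ℕ} (a : Fin S → Fin N → ℝ) (h : ℝ) (i j : Fin S)
    (α : Finset (Fin N)) (A : Matrix (Fin M) (Fin M) ℂ)
    (u : (Fin N → ℝ) → V M) : (Fin N → ℝ) → V M :=
  (OmegaI a h i).indicator fun x =>
    ((h ^ α.card)⁻¹ * (h ^ (N - α.card))⁻¹ : ℝ) •
      (show V M from WithLp.toLp 2 (A.mulVec
        (show Fin M → ℂ from ∫ y in cube N h, u (a j + combine α y (x - a i)))))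

/-- The operator `∑_{α ⊆ {1,...,N}} ∑_{i,j=1}^S 𝓔_{ij}^α[coef α i j]`. -/
def bigSum {N M S : ℕ} {a : Fin S → Fin N → ℝ} {h : ℝ}
    (EE : Fin S → Fin S → Finset (Fin N) → Matrix (Fin M) (Fin M) ℂ →
      (Lp (V M) 2 (volume.restrict (Omega a h)) →L[ℂ]
        Lp (V M) 2 (volume.restrict (Omega a h))))
    (coef : Finset (Fin N) → Fin S → Fin S → Matrix (Fin M) (Fin M) ℂ) :
    Lp (V M) 2 (volume.restrict (Omega a h)) →L[ℂ]
      Lp (V M) 2 (volume.restrict (Omega a h)) :=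
  ∑ α : Finset (Fin N), ∑ i : Fin S, ∑ j : Fin S, EE i j α (coef α i j)

/-- The block matrix `(𝐀_{ij})_{i,j=1}^S ∈ ℂ^{MS×MS}` built from an `S×S` array
of `M×M` matrices. -/
def blockM {M S : ℕ} (c : Fin S → Fin S → Matrix (Fin M) (Fin M) ℂ) :
    Matrix (Fin S × Fin M) (Fin S × Fin M) ℂ :=
  Matrix.of fun p q => c p.1 q.1 p.2 q.2

/-!
The operators `𝓔^α[𝐀]`, `𝐀` a block matrix, multiply by `𝓔^α[𝐀] 𝓔^β[𝐁] = 𝓔^{α ∪ β}[𝐀 𝐁]`, since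
averaging over `α` after averaging over `β` is averaging over `α ∪ β`; and `𝓔^α[𝐀]* = 𝓔^α[𝐀*]`,
since exchanging the coordinates in `α` of two independent uniform points preserves their law. Hence
the finite sums of elementary operators form a `*`-algebra, closed because it is finite-dimensional,
and the zeta transform `𝐁_α = ∑_{β ⊆ α} 𝐀_β` turns its product into the componentwise one.

The coefficients are unique because a product of mean-zero modes over the coordinates in `γ` is
annihilated by averaging over any `α` that meets `γ` and fixed by averaging over all other `α`. An
expansion of the zero operator therefore satisfies `∑_{α ⊆ δ} 𝐀_α = 0` for `δ` the complement of
`γ`, and the zeta transform is injective.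
-/

section Zeta

variable {ι 𝕜 𝕄 : Type*} [CommSemiring 𝕜]

variable (ι 𝕜 𝕄) in
/-- The zeta transform of the subset lattice, `(ζ c)_α = ∑_{β ⊆ α} c_β`: it turns the coefficients
`𝐀_α` of an operator into the matrices `𝐁_α`. -/
def zeta [AddCommGroup 𝕄] [Module 𝕜 𝕄] : (Finset ι → 𝕄) →ₗ[𝕜] (Finset ι → 𝕄) where
  toFun c α := ∑ β ∈ α.powerset, c β
  map_add' c d := by
    funext α
    exact sum_add_distrib
  map_smul' r c := by
    funext α
    simp only [Pi.smul_apply, smul_sum, RingHom.id_apply]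

section Module

variable [AddCommGroup 𝕄] [Module 𝕜 𝕄]

lemma zeta_apply (c : Finset ι → 𝕄) (α : Finset ι) :
    zeta ι 𝕜 𝕄 c α = ∑ β ∈ α.powerset, c β := rfl

lemma zeta_injective : Function.Injective (zeta ι 𝕜 𝕄) := by
  rw [injective_iff_map_eq_zero]
  intro c hc
  funext α
  induction α using Finset.strongInduction with
  | H α ih =>
    calc c α = ∑ β ∈ α.powerset, c β :=
          (sum_eq_single_of_mem α (mem_powerset_self α) fun β hβ hne =>
            ih β ((mem_powerset.1 hβ).ssubset_of_ne hne)).symm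
      _ = 0 := congrFun hc α

lemma zeta_surjective : Function.Surjective (zeta ι 𝕜 𝕄) := by
  classical
  intro B
  let c : Finset ι → 𝕄 := Finset.strongInduction fun α ih =>
    B α - ∑ β ∈ α.ssubsets.attach, ih β (mem_ssubsets.1 β.2)
  have hc : ∀ α, c α = B α - ∑ β ∈ α.ssubsets, c β := fun α =>
    (Finset.strongInduction_eq _ α).trans (congrArg (B α - ·) (sum_attach α.ssubsets c))
  refine ⟨c, funext fun α => ?_⟩
  rw [zeta_apply, ← add_sum_erase _ c (mem_powerset_self α), hc]
  exact sub_add_cancel _ _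

variable (ι 𝕜 𝕄) in
/-- The zeta transform as a linear equivalence; its inverse is Möbius inversion. -/
def zetaEquiv : (Finset ι → 𝕄) ≃ₗ[𝕜] (Finset ι → 𝕄) :=
  LinearEquiv.ofBijective (zeta ι 𝕜 𝕄) ⟨zeta_injective, zeta_surjective⟩

lemma zetaEquiv_symm_zeta (c : Finset ι → 𝕄) : (zetaEquiv ι 𝕜 𝕄).symm (zeta ι 𝕜 𝕄 c) = c :=
  (zetaEquiv ι 𝕜 𝕄).symm_apply_apply c

end Module

section Ring

variable [Ring 𝕄] [Algebra 𝕜 𝕄]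

lemma zeta_single_empty_one [DecidableEq ι] : zeta ι 𝕜 𝕄 (Pi.single ∅ 1) = 1 := by
  funext α
  simp [zeta_apply, Pi.single_apply]

lemma zeta_star [StarRing 𝕄] (c : Finset ι → 𝕄) : zeta ι 𝕜 𝕄 (star c) = star (zeta ι 𝕜 𝕄 c) := by
  funext α
  simp [zeta_apply]

variable [DecidableEq ι] [Fintype ι]

/-- The product of coefficient families dictated by `𝓔^α[A] 𝓔^β[B] = 𝓔^{α ∪ β}[A B]`. -/
def unionConv (c d : Finset ι → 𝕄) : Finset ι → 𝕄 :=
  fun γ => ∑ p : Finset ι × Finset ι with p.1 ∪ p.2 = γ, c p.1 * d p.2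

lemma zeta_unionConv (c d : Finset ι → 𝕄) :
    zeta ι 𝕜 𝕄 (unionConv c d) = zeta ι 𝕜 𝕄 c * zeta ι 𝕜 𝕄 d := by
  funext γ
  have hfiber : ∀ δ ∈ γ.powerset, unionConv c d δ =
      ∑ p ∈ γ.powerset ×ˢ γ.powerset with p.1 ∪ p.2 = δ, c p.1 * d p.2 := by
    intro δ hδ
    refine sum_congr (ext fun p => ?_) fun _ _ => rfl
    simp only [mem_filter, mem_univ, true_and, mem_product, mem_powerset, iff_and_self]
    rintro rfl
    exact union_subset_iff.1 (mem_powerset.1 hδ)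
  rw [Pi.mul_apply, zeta_apply, zeta_apply, zeta_apply, sum_mul_sum, ← sum_product',
    sum_congr rfl hfiber]
  refine sum_fiberwise_of_maps_to (fun p hp => ?_) _
  simpa only [mem_product, mem_powerset, union_subset_iff] using hp

end Ring

end Zeta

/-- A `*`-representation of the semilattice `(Finset ι, ∪)` with coefficients in `𝕄`: a family of
linear maps `𝓔^α : 𝕄 → R` with `𝓔^α[A] 𝓔^β[B] = 𝓔^{α ∪ β}[A B]`, `𝓔^∅[1] = 1` and
`𝓔^α[A]* = 𝓔^α[A*]`. -/
structure UnionRep (ι 𝕜 𝕄 R : Type*) [DecidableEq ι] [CommSemiring 𝕜] [Ring 𝕄] [StarRing 𝕄]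
    [Algebra 𝕜 𝕄] [Ring R] [StarRing R] [Algebra 𝕜 R] where
  toLinearMap : Finset ι → 𝕄 →ₗ[𝕜] R
  map_mul_map : ∀ α β A B, toLinearMap α A * toLinearMap β B = toLinearMap (α ∪ β) (A * B)
  map_empty_one : toLinearMap ∅ 1 = 1
  star_map : ∀ α A, star (toLinearMap α A) = toLinearMap α (star A)

namespace UnionRep

variable {ι 𝕜 𝕄 R : Type*} [Fintype ι] [DecidableEq ι] [CommSemiring 𝕜] [Ring 𝕄] [StarRing 𝕄]
  [Algebra 𝕜 𝕄] [Ring R] [StarRing R] [Algebra 𝕜 R] (F : UnionRep ι 𝕜 𝕄 R)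

/-- The element `∑_α 𝓔^α[c_α]` with coefficient family `c`. -/
def sum : (Finset ι → 𝕄) →ₗ[𝕜] R := ∑ α, F.toLinearMap α ∘ₗ LinearMap.proj α

lemma sum_apply (c : Finset ι → 𝕄) : F.sum c = ∑ α, F.toLinearMap α (c α) := by
  simp [sum]

lemma sum_single (α : Finset ι) (A : 𝕄) : F.sum (Pi.single α A) = F.toLinearMap α A := by
  rw [sum_apply, Fintype.sum_eq_single α fun β hβ => by rw [Pi.single_eq_of_ne hβ, map_zero],
    Pi.single_eq_same]

lemma sum_mul_sum (c d : Finset ι → 𝕄) : F.sum c * F.sum d = F.sum (unionConv c d) := by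
  calc F.sum c * F.sum d
      = ∑ p : Finset ι × Finset ι, F.toLinearMap (p.1 ∪ p.2) (c p.1 * d p.2) := by
        simp only [sum_apply, Finset.sum_mul_sum, F.map_mul_map, Fintype.sum_prod_type]
    _ = ∑ γ, ∑ p : Finset ι × Finset ι with p.1 ∪ p.2 = γ,
          F.toLinearMap (p.1 ∪ p.2) (c p.1 * d p.2) := (sum_fiberwise _ _ _).symm
    _ = F.sum (unionConv c d) := by
        rw [sum_apply]
        refine sum_congr rfl fun γ _ => ?_
        rw [unionConv, map_sum]
        refine sum_congr rfl fun p hp => ?_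
        rw [(mem_filter.1 hp).2]

lemma star_sum (c : Finset ι → 𝕄) : star (F.sum c) = F.sum (star c) := by
  simp only [sum_apply, _root_.star_sum, F.star_map, Pi.star_apply]

lemma sum_single_empty_one : F.sum (Pi.single ∅ 1) = 1 := by
  rw [sum_single, F.map_empty_one]

/-- The `*`-homomorphism `(𝐁_α)_α ↦ ∑_α 𝓔^α[𝐀_α]` on the product algebra, where `𝐀` is the Möbius
inverse of `𝐁`. It is the inverse of the paper's `π`. -/
def starAlgHom : (Finset ι → 𝕄) →⋆ₐ[𝕜] R where
  toAlgHom := AlgHom.ofLinearMap (F.sum ∘ₗ (zetaEquiv ι 𝕜 𝕄).symm)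
    (by
      rw [← zeta_single_empty_one (𝕜 := 𝕜)]
      exact (congrArg F.sum (zetaEquiv_symm_zeta _)).trans F.sum_single_empty_one)
    (fun B C => by
      obtain ⟨c, rfl⟩ := zeta_surjective (𝕜 := 𝕜) B
      obtain ⟨d, rfl⟩ := zeta_surjective (𝕜 := 𝕜) C
      simp only [← zeta_unionConv, LinearMap.comp_apply, LinearEquiv.coe_coe, zetaEquiv_symm_zeta,
        sum_mul_sum])
  map_star' B := by
    obtain ⟨c, rfl⟩ := zeta_surjective (𝕜 := 𝕜) B
    change F.sum ((zetaEquiv ι 𝕜 𝕄).symm (star (zeta ι 𝕜 𝕄 c))) =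
      star (F.sum ((zetaEquiv ι 𝕜 𝕄).symm (zeta ι 𝕜 𝕄 c)))
    rw [← zeta_star, zetaEquiv_symm_zeta, zetaEquiv_symm_zeta, star_sum]

lemma starAlgHom_zeta (c : Finset ι → 𝕄) : F.starAlgHom (zeta ι 𝕜 𝕄 c) = F.sum c :=
  congrArg F.sum (zetaEquiv_symm_zeta c)

lemma starAlgHom_injective (hF : Function.Injective F.sum) : Function.Injective F.starAlgHom :=
  hF.comp (zetaEquiv ι 𝕜 𝕄).symm.injective

/-- The paper's `π`: the inverse of `F.starAlgHom` on its range, with junk values elsewhere. -/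
def symbol : R → Finset ι → 𝕄 := Function.invFun F.starAlgHom

section Symbol

variable {F}

lemma symbol_starAlgHom (hF : Function.Injective F.sum) (B : Finset ι → 𝕄) :
    F.symbol (F.starAlgHom B) = B :=
  Function.leftInverse_invFun (F.starAlgHom_injective hF) B

lemma symbol_sum (hF : Function.Injective F.sum) (c : Finset ι → 𝕄) :
    F.symbol (F.sum c) = zeta ι 𝕜 𝕄 c := by
  rw [← starAlgHom_zeta, symbol_starAlgHom hF]

lemma symbol_one (hF : Function.Injective F.sum) : F.symbol 1 = 1 := by
  rw [← map_one F.starAlgHom, symbol_starAlgHom hF]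

end Symbol

section Range

variable [StarRing 𝕜] [StarModule 𝕜 R]

lemma adjoin_eq_range_starAlgHom {s : Set R}
    (hs : s ⊆ Set.range F.sum) (hF : ∀ α A, F.toLinearMap α A ∈ StarAlgebra.adjoin 𝕜 s) :
    StarAlgebra.adjoin 𝕜 s = F.starAlgHom.range := by
  refine le_antisymm (StarAlgebra.adjoin_le fun T hT => ?_) ?_
  · obtain ⟨c, rfl⟩ := hs hT
    exact ⟨_, F.starAlgHom_zeta c⟩
  · rintro _ ⟨B, rfl⟩
    obtain ⟨c, rfl⟩ := zeta_surjective (𝕜 := 𝕜) B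
    change F.starAlgHom (zeta ι 𝕜 𝕄 c) ∈ _
    rw [starAlgHom_zeta, sum_apply]
    exact sum_mem fun α _ => hF α (c α)

variable {F} {T U : R}

lemma existsUnique_eq_sum (hF : Function.Injective F.sum) (hT : T ∈ F.starAlgHom.range) :
    ∃! c, T = F.sum c := by
  obtain ⟨B, rfl⟩ := hT
  exact ⟨(zetaEquiv ι 𝕜 𝕄).symm B, rfl, fun c hc => (hF hc).symm⟩

lemma starAlgHom_symbol (hT : T ∈ F.starAlgHom.range) : F.starAlgHom (F.symbol T) = T :=
  Function.invFun_eq hT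

lemma bijOn_symbol (hF : Function.Injective F.sum) :
    Set.BijOn F.symbol F.starAlgHom.range Set.univ := by
  refine ⟨fun _ _ => trivial, fun T hT U hU hTU => ?_,
    fun B _ => ⟨F.starAlgHom B, ⟨B, rfl⟩, symbol_starAlgHom hF B⟩⟩
  rw [← starAlgHom_symbol hT, hTU, starAlgHom_symbol hU]

lemma symbol_add (hF : Function.Injective F.sum) (hT : T ∈ F.starAlgHom.range)
    (hU : U ∈ F.starAlgHom.range) : F.symbol (T + U) = F.symbol T + F.symbol U := by
  rw [← symbol_starAlgHom hF (F.symbol T + F.symbol U), map_add, starAlgHom_symbol hT,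
    starAlgHom_symbol hU]

lemma symbol_mul (hF : Function.Injective F.sum) (hT : T ∈ F.starAlgHom.range)
    (hU : U ∈ F.starAlgHom.range) : F.symbol (T * U) = F.symbol T * F.symbol U := by
  rw [← symbol_starAlgHom hF (F.symbol T * F.symbol U), map_mul, starAlgHom_symbol hT,
    starAlgHom_symbol hU]

lemma symbol_smul (hF : Function.Injective F.sum) (r : 𝕜) (hT : T ∈ F.starAlgHom.range) :
    F.symbol (r • T) = r • F.symbol T := by
  rw [← symbol_starAlgHom hF (r • F.symbol T), map_smul, starAlgHom_symbol hT]

lemma symbol_star (hF : Function.Injective F.sum) (hT : T ∈ F.starAlgHom.range) :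
    F.symbol (star T) = star (F.symbol T) := by
  rw [← symbol_starAlgHom hF (star (F.symbol T)), map_star, starAlgHom_symbol hT]

end Range

end UnionRep

section TopologicalClosure

variable {𝕜 B R : Type*} [NontriviallyNormedField 𝕜] [CompleteSpace 𝕜] [StarRing 𝕜]
  [Ring B] [StarRing B] [Algebra 𝕜 B] [FiniteDimensional 𝕜 B]
  [Ring R] [StarRing R] [Algebra 𝕜 R] [StarModule 𝕜 R] [TopologicalSpace R] [IsTopologicalRing R]
  [ContinuousStar R] [ContinuousSMul 𝕜 R] [T2Space R]

lemma topologicalClosure_range_starAlgHom (Φ : B →⋆ₐ[𝕜] R) :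
    Φ.range.topologicalClosure = Φ.range := by
  have hclosed : IsClosed (Φ.range : Set R) :=
    Submodule.closed_of_finiteDimensional (LinearMap.range Φ.toAlgHom.toLinearMap)
  exact le_antisymm (StarSubalgebra.topologicalClosure_minimal le_rfl hclosed)
    Φ.range.le_topologicalClosure

end TopologicalClosure

lemma integral_comp_of_measurePreserving {Y Z E : Type*} [MeasurableSpace Y] [MeasurableSpace Z]
    [NormedAddCommGroup E] [NormedSpace ℝ E] {P : Measure Z} {ν : Measure Y} {g : Z → Y}
    (hg : MeasurePreserving g P ν) {f : Y → E} (hf : AEStronglyMeasurable f ν) :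
    ∫ z, f (g z) ∂P = ∫ y, f y ∂ν := by
  rw [← hg.map_eq] at hf ⊢
  exact (integral_map hg.aemeasurable hf).symm

section CoordAverage

variable {ι X E F : Type*} [DecidableEq ι]

lemma piecewise_piecewise_union (α β : Finset ι) (x y z : ι → X) :
    β.piecewise z (α.piecewise y x) = (α ∪ β).piecewise (β.piecewise z y) x := by
  funext n
  simp only [Finset.piecewise, mem_union]
  grind

lemma piecewise_piecewise_exchange (α : Finset ι) (x y : ι → X) :
    α.piecewise (α.piecewise x y) (α.piecewise y x) = x := by
  funext n
  simp only [Finset.piecewise]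
  grind

/-- The exchange of the coordinates in `α` between two points. -/
def exchangeCoords (α : Finset ι) (p : (ι → X) × (ι → X)) : (ι → X) × (ι → X) :=
  (α.piecewise p.2 p.1, α.piecewise p.1 p.2)

variable [Fintype ι] [MeasurableSpace X] {μ : ι → Measure X} [∀ n, IsProbabilityMeasure (μ n)]

variable (μ) in
lemma measurePreserving_exchangeCoords (α : Finset ι) :
    MeasurePreserving (exchangeCoords α) ((Measure.pi μ).prod (Measure.pi μ))
      ((Measure.pi μ).prod (Measure.pi μ)) := by
  have harrow := measurePreserving_arrowProdEquivProdArrow X X ι μ μ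
  have hswap : MeasurePreserving
      (fun (q : ι → X × X) n => (if n ∈ α then Prod.swap else id) (q n))
      (Measure.pi fun n => (μ n).prod (μ n)) (Measure.pi fun n => (μ n).prod (μ n)) := by
    refine measurePreserving_pi (f := fun n => if n ∈ α then Prod.swap else id) _ _ fun n => ?_
    split_ifs
    · exact Measure.measurePreserving_swap
    · exact .id _
  convert harrow.comp (hswap.comp (harrow.symm _)) using 1
  funext p
  ext n <;> by_cases hn : n ∈ α <;>
    simp [exchangeCoords, hn, MeasurableEquiv.arrowProdEquivProdArrow,
      Equiv.arrowProdEquivProdArrow]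

variable (μ) in
lemma measurePreserving_piecewise (α : Finset ι) :
    MeasurePreserving (fun p : (ι → X) × (ι → X) => α.piecewise p.2 p.1)
      ((Measure.pi μ).prod (Measure.pi μ)) (Measure.pi μ) :=
  measurePreserving_fst.comp (measurePreserving_exchangeCoords μ α)

lemma ae_ae_piecewise (α : Finset ι) {p : (ι → X) → Prop} (hp : ∀ᵐ x ∂Measure.pi μ, p x) :
    ∀ᵐ x ∂Measure.pi μ, ∀ᵐ y ∂Measure.pi μ, p (α.piecewise y x) :=
  Measure.ae_ae_of_ae_prod ((measurePreserving_piecewise μ α).quasiMeasurePreserving.ae hp)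

variable [NormedAddCommGroup E]

lemma ae_integrable_piecewise (α : Finset ι) {f : (ι → X) → E} (hf : Integrable f (Measure.pi μ)) :
    ∀ᵐ x ∂Measure.pi μ, Integrable (fun y => f (α.piecewise y x)) (Measure.pi μ) :=
  ((measurePreserving_piecewise μ α).integrable_comp_of_integrable hf).prod_right_ae

variable [NormedSpace ℝ E]

variable (μ) in
/-- The average of `f` over its coordinates in `α`. -/
def coordAverage (α : Finset ι) (f : (ι → X) → E) (x : ι → X) : E :=
  ∫ y, f (α.piecewise y x) ∂Measure.pi μ

lemma coordAverage_congr_ae (α : Finset ι) {f g : (ι → X) → E} (hfg : f =ᵐ[Measure.pi μ] g) :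
    coordAverage μ α f =ᵐ[Measure.pi μ] coordAverage μ α g := by
  filter_upwards [ae_ae_piecewise α hfg] with x hx
  exact integral_congr_ae hx

lemma integrable_coordAverage (α : Finset ι) {f : (ι → X) → E} (hf : Integrable f (Measure.pi μ)) :
    Integrable (coordAverage μ α f) (Measure.pi μ) :=
  ((measurePreserving_piecewise μ α).integrable_comp_of_integrable hf).integral_prod_left

lemma integral_coordAverage (α : Finset ι) {f : (ι → X) → E} (hf : Integrable f (Measure.pi μ)) :
    ∫ x, coordAverage μ α f x ∂Measure.pi μ = ∫ x, f x ∂Measure.pi μ := by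
  have hmp := measurePreserving_piecewise μ α
  rw [← integral_comp_of_measurePreserving hmp hf.aestronglyMeasurable]
  exact (integral_prod _ (hmp.integrable_comp_of_integrable hf)).symm

lemma coordAverage_coordAverage (α β : Finset ι) {f : (ι → X) → E}
    (hf : Integrable f (Measure.pi μ)) :
    coordAverage μ α (coordAverage μ β f) =ᵐ[Measure.pi μ] coordAverage μ (α ∪ β) f := by
  filter_upwards [ae_integrable_piecewise (α ∪ β) hf] with x hx
  simp only [coordAverage, piecewise_piecewise_union α β]
  exact integral_coordAverage β hx

lemma coordAverage_empty [CompleteSpace E] (f : (ι → X) → E) : coordAverage μ ∅ f = f := by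
  funext x
  simp [coordAverage]

lemma coordAverage_sum_clm {𝕜 κ : Type*} [RCLike 𝕜] [NormedSpace 𝕜 E] [CompleteSpace E]
    [NormedAddCommGroup F] [NormedSpace ℝ F] [NormedSpace 𝕜 F] [CompleteSpace F]
    (α : Finset ι) (s : Finset κ) (L : κ → E →L[𝕜] F) {f : κ → (ι → X) → E}
    (hf : ∀ j, Integrable (f j) (Measure.pi μ)) :
    coordAverage μ α (fun x => ∑ j ∈ s, L j (f j x)) =ᵐ[Measure.pi μ]
      fun x => ∑ j ∈ s, L j (coordAverage μ α (f j) x) := by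
  have hint : ∀ᵐ x ∂Measure.pi μ, ∀ j ∈ s,
      Integrable (fun y => f j (α.piecewise y x)) (Measure.pi μ) :=
    (ae_ball_iff s.countable_toSet).2 fun j _ => ae_integrable_piecewise α (hf j)
  filter_upwards [hint] with x hx
  rw [coordAverage, integral_finsetSum _ fun j hj => (L j).integrable_comp (hx j hj)]
  exact sum_congr rfl fun j hj => (L j).integral_comp_comm (hx j hj)

lemma coordAverage_prod {𝕜 : Type*} [RCLike 𝕜] (α γ : Finset ι) (φ : ι → X → 𝕜)
    (hφ : ∀ n, ∫ t, φ n t ∂μ n = 0) (x : ι → X) :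
    coordAverage μ α (fun x => ∏ n ∈ γ, φ n (x n)) x =
      if Disjoint α γ then ∏ n ∈ γ, φ n (x n) else 0 := by
  have hprod : ∀ y : ι → X, ∏ n ∈ γ, φ n (α.piecewise y x n) =
      ∏ n, if n ∈ γ then φ n (if n ∈ α then y n else x n) else 1 := fun y => by
    rw [prod_ite_mem, univ_inter]
    rfl
  have hfactor : ∀ n, ∫ t, (if n ∈ γ then φ n (if n ∈ α then t else x n) else 1) ∂μ n =
      if n ∈ γ then (if n ∈ α then 0 else φ n (x n)) else 1 := fun n => by
    split_ifs <;> simp [hφ]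
  simp only [coordAverage, hprod]
  rw [integral_fintype_prod_eq_prod fun n t =>
    if n ∈ γ then φ n (if n ∈ α then t else x n) else 1]
  simp only [hfactor, prod_ite_mem, univ_inter]
  split_ifs with hdisj
  · exact prod_congr rfl fun n hn => if_neg (disjoint_right.1 hdisj hn)
  · obtain ⟨n, hα, hγ⟩ := not_disjoint_iff.1 hdisj
    exact prod_eq_zero hγ (if_pos hα)

lemma coordAverage_prod_smul {𝕜 : Type*} [RCLike 𝕜] [NormedSpace 𝕜 E] [CompleteSpace E]
    (α γ : Finset ι) (φ : ι → X → 𝕜) (hφ : ∀ n, ∫ t, φ n t ∂μ n = 0) (v : E) (x : ι → X) :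
    coordAverage μ α (fun x => (∏ n ∈ γ, φ n (x n)) • v) x =
      if Disjoint α γ then (∏ n ∈ γ, φ n (x n)) • v else 0 := by
  rw [← zero_smul 𝕜 v, ← ite_smul, ← coordAverage_prod α γ φ hφ]
  exact integral_smul_const _ v

end CoordAverage

section Inner

variable {ι X 𝕜 E : Type*} [Fintype ι] [DecidableEq ι] [MeasurableSpace X]
  {μ : ι → Measure X} [∀ n, IsProbabilityMeasure (μ n)] [RCLike 𝕜]
  [NormedAddCommGroup E] [InnerProductSpace 𝕜 E]

variable (𝕜) in
lemma integrable_inner_of_memLp {Y : Type*} [MeasurableSpace Y] {ν : Measure Y} {f g : Y → E}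
    (hf : MemLp f 2 ν) (hg : MemLp g 2 ν) : Integrable (fun y => inner 𝕜 (f y) (g y)) ν :=
  (L2.integrable_inner (𝕜 := 𝕜) (hf.toLp f) (hg.toLp g)).congr <| by
    filter_upwards [hf.coeFn_toLp, hg.coeFn_toLp] with y hfy hgy
    rw [hfy, hgy]

variable (𝕜) in
lemma integrable_inner_piecewise (α : Finset ι) {f g : (ι → X) → E}
    (hf : MemLp f 2 (Measure.pi μ)) (hg : MemLp g 2 (Measure.pi μ)) :
    Integrable (fun p : (ι → X) × (ι → X) => inner 𝕜 (g p.1) (f (α.piecewise p.2 p.1)))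
      ((Measure.pi μ).prod (Measure.pi μ)) :=
  integrable_inner_of_memLp 𝕜 (hg.comp_measurePreserving measurePreserving_fst)
    (hf.comp_measurePreserving (measurePreserving_piecewise μ α))

variable [NormedSpace ℝ E] [CompleteSpace E]

variable (𝕜) in
lemma ae_inner_coordAverage (α : Finset ι) {f : (ι → X) → E} (hf : MemLp f 2 (Measure.pi μ))
    (g : (ι → X) → E) : ∀ᵐ x ∂Measure.pi μ,
      inner 𝕜 (g x) (coordAverage μ α f x) =
        ∫ y, inner 𝕜 (g x) (f (α.piecewise y x)) ∂Measure.pi μ := by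
  filter_upwards [ae_integrable_piecewise α (hf.integrable one_le_two)] with x hx
  exact (integral_inner hx (g x)).symm

variable (𝕜) in
lemma integrable_inner_coordAverage (α : Finset ι) {f g : (ι → X) → E}
    (hf : MemLp f 2 (Measure.pi μ)) (hg : MemLp g 2 (Measure.pi μ)) :
    Integrable (fun x => inner 𝕜 (g x) (coordAverage μ α f x)) (Measure.pi μ) :=
  (integrable_inner_piecewise 𝕜 α hf hg).integral_prod_left.congr
    ((ae_inner_coordAverage 𝕜 α hf g).mono fun _ hx => hx.symm)

lemma integral_inner_coordAverage (α : Finset ι) {f g : (ι → X) → E}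
    (hf : MemLp f 2 (Measure.pi μ)) (hg : MemLp g 2 (Measure.pi μ)) :
    ∫ x, inner 𝕜 (g x) (coordAverage μ α f x) ∂Measure.pi μ =
      ∫ p : (ι → X) × (ι → X), inner 𝕜 (g p.1) (f (α.piecewise p.2 p.1))
        ∂(Measure.pi μ).prod (Measure.pi μ) := by
  rw [integral_congr_ae (ae_inner_coordAverage 𝕜 α hf g)]
  exact (integral_prod _ (integrable_inner_piecewise 𝕜 α hf hg)).symm

lemma integral_inner_coordAverage_comm (α : Finset ι) {f g : (ι → X) → E}
    (hf : MemLp f 2 (Measure.pi μ)) (hg : MemLp g 2 (Measure.pi μ)) :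
    ∫ x, inner 𝕜 (g x) (coordAverage μ α f x) ∂Measure.pi μ =
      ∫ x, inner 𝕜 (coordAverage μ α g x) (f x) ∂Measure.pi μ := by
  have hexch := integral_comp_of_measurePreserving (measurePreserving_exchangeCoords μ α)
    (integrable_inner_piecewise 𝕜 α hf hg).aestronglyMeasurable
  simp only [exchangeCoords, piecewise_piecewise_exchange] at hexch
  calc ∫ x, inner 𝕜 (g x) (coordAverage μ α f x) ∂Measure.pi μ
      = ∫ p : (ι → X) × (ι → X), inner 𝕜 (g (α.piecewise p.2 p.1)) (f p.1)
          ∂(Measure.pi μ).prod (Measure.pi μ) := by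
        rw [integral_inner_coordAverage α hf hg, hexch]
    _ = starRingEnd 𝕜 (∫ p : (ι → X) × (ι → X), inner 𝕜 (f p.1) (g (α.piecewise p.2 p.1))
          ∂(Measure.pi μ).prod (Measure.pi μ)) := by
        simp only [← integral_conj, inner_conj_symm]
    _ = ∫ x, inner 𝕜 (coordAverage μ α g x) (f x) ∂Measure.pi μ := by
        rw [← integral_inner_coordAverage α hg hf, ← integral_conj]
        simp only [inner_conj_symm]

lemma integral_inner_clm_coordAverage (α : Finset ι) (L : E →L[𝕜] E) {f g : (ι → X) → E}
    (hf : MemLp f 2 (Measure.pi μ)) (hg : MemLp g 2 (Measure.pi μ)) :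
    ∫ x, inner 𝕜 (L (g x)) (coordAverage μ α f x) ∂Measure.pi μ =
      starRingEnd 𝕜 (∫ x, inner 𝕜 (star L (f x)) (coordAverage μ α g x) ∂Measure.pi μ) := by
  have hclm := coordAverage_sum_clm α {()} (fun _ => L) fun _ => hg.integrable one_le_two
  simp only [sum_singleton] at hclm
  have hLg : MemLp (fun x => L (g x)) 2 (Measure.pi μ) := L.comp_memLp' hg
  rw [integral_inner_coordAverage_comm α hf hLg, ← integral_conj]
  refine integral_congr_ae ?_
  filter_upwards [hclm] with x hx
  rw [hx, inner_conj_symm, ContinuousLinearMap.star_eq_adjoint,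
    ContinuousLinearMap.adjoint_inner_right]

end Inner

/-- The measure `ν` on `Y` is, up to the scale `c`, the sum of the images of a measure `P` on a
reference tile `H` under the charts `σ k`, which embed `H` onto pairwise disjoint tiles. -/
structure IsTiling {Y Z κ : Type*} [MeasurableSpace Y] [MeasurableSpace Z] [Fintype κ]
    (P : Measure Z) (ν : Measure Y) (H : Set Z) (σ : κ → Z → Y) (c : NNReal) : Prop where
  measurableEmbedding : ∀ k, MeasurableEmbedding (σ k)
  ae_mem : ∀ᵐ z ∂P, z ∈ H
  disjoint_image : Pairwise (Function.onFun Disjoint fun k => σ k '' H)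
  ne_zero : c ≠ 0
  eq_smul_sum : ν = c • ∑ k, P.map (σ k)

namespace IsTiling

variable {Y Z κ 𝕜 E : Type*} [MeasurableSpace Y] [MeasurableSpace Z] [Fintype κ]
  {P : Measure Z} {ν : Measure Y} {H : Set Z} {σ : κ → Z → Y} {c : NNReal}

lemma ae_iff (hσ : IsTiling P ν H σ c) {p : Y → Prop} :
    (∀ᵐ y ∂ν, p y) ↔ ∀ k, ∀ᵐ z ∂P, p (σ k z) := by
  rw [hσ.eq_smul_sum, Measure.ae_smul_measure_iff hσ.ne_zero, ae_finsetSum_measure_iff]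
  simp only [mem_univ, true_imp_iff, (hσ.measurableEmbedding _).ae_map_iff]

variable [NormedAddCommGroup E]

lemma integrable_iff (hσ : IsTiling P ν H σ c) {f : Y → E} :
    Integrable f ν ↔ ∀ k, Integrable (fun z => f (σ k z)) P := by
  rw [hσ.eq_smul_sum, ENNReal.smul_def, integrable_smul_measure
    (ENNReal.coe_ne_zero.2 hσ.ne_zero) ENNReal.coe_ne_top, integrable_finsetSum_measure]
  simp only [mem_univ, true_imp_iff, (hσ.measurableEmbedding _).integrable_map_iff,
    Function.comp_def]

lemma integral_eq [NormedSpace ℝ E] (hσ : IsTiling P ν H σ c) {f : Y → E} (hf : Integrable f ν) :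
    ∫ y, f y ∂ν = c • ∑ k, ∫ z, f (σ k z) ∂P := by
  have hmap : ∀ k, Integrable f (P.map (σ k)) := fun k =>
    (hσ.measurableEmbedding k).integrable_map_iff.2 (hσ.integrable_iff.1 hf k)
  rw [hσ.eq_smul_sum, integral_smul_nnreal_measure, integral_finsetSum_measure fun k _ => hmap k]
  simp only [(hσ.measurableEmbedding _).integral_map]

lemma aestronglyMeasurable_iff (hσ : IsTiling P ν H σ c) {f : Y → E} :
    AEStronglyMeasurable f ν ↔ ∀ k, AEStronglyMeasurable (fun z => f (σ k z)) P := by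
  have hsmul : AEStronglyMeasurable f ν ↔ AEStronglyMeasurable f (∑ k, P.map (σ k)) := by
    rw [hσ.eq_smul_sum]
    exact ⟨fun hf => hf.mono_ac
        (Measure.absolutelyContinuous_smul (ENNReal.coe_ne_zero.2 hσ.ne_zero)),
      fun hf => hf.mono_ac Measure.smul_absolutelyContinuous⟩
  rw [hsmul, ← Measure.sum_fintype, aestronglyMeasurable_sum_measure_iff]
  simp only [(hσ.measurableEmbedding _).aestronglyMeasurable_map_iff, Function.comp_def]

lemma memLp_two_iff (hσ : IsTiling P ν H σ c) {f : Y → E} :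
    MemLp f 2 ν ↔ ∀ k, MemLp (fun z => f (σ k z)) 2 P := by
  constructor
  · intro hf k
    have hm := hσ.aestronglyMeasurable_iff.1 hf.1
    rw [memLp_two_iff_integrable_sq_norm (hm k)]
    exact hσ.integrable_iff.1 ((memLp_two_iff_integrable_sq_norm hf.1).1 hf) k
  · intro hf
    rw [memLp_two_iff_integrable_sq_norm (hσ.aestronglyMeasurable_iff.2 fun k => (hf k).1),
      hσ.integrable_iff]
    exact fun k => (memLp_two_iff_integrable_sq_norm (hf k).1).1 (hf k)

lemma memLp_comp (hσ : IsTiling P ν H σ c) (u : Lp E 2 ν) (k : κ) :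
    MemLp (fun z => u (σ k z)) 2 P :=
  hσ.memLp_two_iff.1 (Lp.memLp u) k

lemma exists_lp_comp_eq (hσ : IsTiling P ν H σ c) {g : κ → Z → E} (hg : ∀ k, MemLp (g k) 2 P) :
    ∃ u : Lp E 2 ν, ∀ k, ∀ᵐ z ∂P, u (σ k z) = g k z := by
  classical
  let f : Y → E := fun y => ∑ j, (σ j '' H).indicator (Function.extend (σ j) (g j) 0) y
  have hf : ∀ k, ∀ᵐ z ∂P, f (σ k z) = g k z := fun k => by
    filter_upwards [hσ.ae_mem] with z hz
    have hmem := Set.mem_image_of_mem (σ k) hz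
    rw [← (hσ.measurableEmbedding k).injective.extend_apply (g k) 0 z,
      ← Set.indicator_of_mem hmem (Function.extend (σ k) (g k) 0)]
    exact Fintype.sum_eq_single k fun j hj => Set.indicator_of_notMem
      (Set.disjoint_right.1 (hσ.disjoint_image hj) hmem) _
  have hfL2 : MemLp f 2 ν :=
    hσ.memLp_two_iff.2 fun k => (hg k).ae_eq ((hf k).mono fun _ hz => hz.symm)
  refine ⟨hfL2.toLp f, fun k => ?_⟩
  filter_upwards [hσ.ae_iff.1 hfL2.coeFn_toLp k, hf k] with z hz hz'
  rw [hz, hz']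

variable [RCLike 𝕜] [InnerProductSpace 𝕜 E]

lemma inner_eq (hσ : IsTiling P ν H σ c) (u v : Lp E 2 ν) :
    inner 𝕜 u v = c • ∑ k, ∫ z, inner 𝕜 (u (σ k z)) (v (σ k z)) ∂P := by
  rw [L2.inner_def, hσ.integral_eq (L2.integrable_inner u v)]

end IsTiling

/-- `T` acts on `L²(ν)`, read in the charts `σ k`, by averaging over the coordinates in `α` and then
applying the operator matrix `A`. Such `T` are the sums `∑_{i,j} 𝓔_{ij}^α[𝐀_{ij}]`. -/
def IsBlockAverage {ι X Y κ 𝕜 E : Type*} [Fintype ι] [DecidableEq ι] [MeasurableSpace X]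
    [MeasurableSpace Y] [Fintype κ] [RCLike 𝕜] [NormedAddCommGroup E] [NormedSpace ℝ E]
    [NormedSpace 𝕜 E] (μ : ι → Measure X) {ν : Measure Y} (σ : κ → (ι → X) → Y) (α : Finset ι)
    (A : Matrix κ κ (E →L[𝕜] E)) (T : Lp E 2 ν →L[𝕜] Lp E 2 ν) : Prop :=
  ∀ u k, ∀ᵐ x ∂Measure.pi μ,
    T u (σ k x) = ∑ j, A k j (coordAverage μ α (fun x => u (σ j x)) x)

namespace IsBlockAverage

variable {ι X Y κ 𝕜 E : Type*} [Fintype ι] [DecidableEq ι] [MeasurableSpace X]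
  [MeasurableSpace Y] [Fintype κ] [RCLike 𝕜] [NormedAddCommGroup E] [NormedSpace ℝ E]
  {μ : ι → Measure X} {ν : Measure Y} {H : Set (ι → X)} {σ : κ → (ι → X) → Y} {c : NNReal}
  {α β : Finset ι}

section NormedSpace

variable [NormedSpace 𝕜 E] {A B : Matrix κ κ (E →L[𝕜] E)} {T U W : Lp E 2 ν →L[𝕜] Lp E 2 ν}

lemma unique (hσ : IsTiling (Measure.pi μ) ν H σ c) (hT : IsBlockAverage μ σ α A T)
    (hU : IsBlockAverage μ σ α A U) : T = U := by
  ext1 u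
  refine Lp.ext (hσ.ae_iff.2 fun k => ?_)
  filter_upwards [hT u k, hU u k] with x hTx hUx
  rw [hTx, hUx]

lemma zero (hσ : IsTiling (Measure.pi μ) ν H σ c) :
    IsBlockAverage μ σ α 0 (0 : Lp E 2 ν →L[𝕜] Lp E 2 ν) := fun u k => by
  filter_upwards [hσ.ae_iff.1 (Lp.coeFn_zero E 2 ν) k] with x hx
  simpa using hx

lemma add (hσ : IsTiling (Measure.pi μ) ν H σ c) (hT : IsBlockAverage μ σ α A T)
    (hU : IsBlockAverage μ σ α B U) : IsBlockAverage μ σ α (A + B) (T + U) := fun u k => by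
  filter_upwards [hT u k, hU u k, hσ.ae_iff.1 (Lp.coeFn_add (T u) (U u)) k] with x hTx hUx hadd
  simp only [add_apply, Matrix.add_apply, hadd, Pi.add_apply, hTx, hUx, sum_add_distrib]

lemma smul (hσ : IsTiling (Measure.pi μ) ν H σ c) (r : 𝕜) (hT : IsBlockAverage μ σ α A T) :
    IsBlockAverage μ σ α (r • A) (r • T) := fun u k => by
  filter_upwards [hT u k, hσ.ae_iff.1 (Lp.coeFn_smul r (T u)) k] with x hTx hsmul
  simp only [smul_apply, Matrix.smul_apply, hsmul, Pi.smul_apply, hTx, smul_sum]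

lemma sum (hσ : IsTiling (Measure.pi μ) ν H σ c) {τ : Type*} (s : Finset τ)
    {A : τ → Matrix κ κ (E →L[𝕜] E)} {T : τ → Lp E 2 ν →L[𝕜] Lp E 2 ν}
    (hT : ∀ b, IsBlockAverage μ σ α (A b) (T b)) :
    IsBlockAverage μ σ α (∑ b ∈ s, A b) (∑ b ∈ s, T b) := by
  classical
  induction s using Finset.induction_on with
  | empty => simpa using zero hσ
  | insert b s hb ih =>
    rw [sum_insert hb, sum_insert hb]
    exact (hT b).add hσ ih

variable [CompleteSpace E] [∀ n, IsProbabilityMeasure (μ n)]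

lemma one [DecidableEq κ] :
    IsBlockAverage μ σ ∅ 1 (1 : Lp E 2 ν →L[𝕜] Lp E 2 ν) := fun u k => by
  refine .of_forall fun x => ?_
  rw [Fintype.sum_eq_single k fun j hj => by rw [Matrix.one_apply_ne' hj, zero_apply]]
  simp [coordAverage_empty]

lemma mul (hσ : IsTiling (Measure.pi μ) ν H σ c) (hT : IsBlockAverage μ σ α A T)
    (hU : IsBlockAverage μ σ β B U) : IsBlockAverage μ σ (α ∪ β) (A * B) (T * U) := fun u k => by
  have hint : ∀ l, Integrable (fun x => u (σ l x)) (Measure.pi μ) := fun l =>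
    (hσ.memLp_comp u l).integrable one_le_two
  have hinner : ∀ j, coordAverage μ α (fun x => U u (σ j x)) =ᵐ[Measure.pi μ]
      fun x => ∑ l, B j l (coordAverage μ α (coordAverage μ β fun x => u (σ l x)) x) := fun j =>
    (coordAverage_congr_ae α (hU u j)).trans <| coordAverage_sum_clm α univ (B j) fun l =>
      integrable_coordAverage β (hint l)
  filter_upwards [hT (U u) k, ae_all_iff.2 hinner,
    ae_all_iff.2 fun l => coordAverage_coordAverage α β (hint l)] with x hTx hUx havg
  simp only [mul_apply_eq_comp, hTx, hUx, havg, map_sum, Matrix.mul_apply, _root_.sum_apply]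
  exact sum_comm

end NormedSpace

section InnerProductSpace

variable [InnerProductSpace 𝕜 E] [CompleteSpace E] [∀ n, IsProbabilityMeasure (μ n)]
  {A : Matrix κ κ (E →L[𝕜] E)} {T U : Lp E 2 ν →L[𝕜] Lp E 2 ν}

lemma inner_apply (hσ : IsTiling (Measure.pi μ) ν H σ c) (hT : IsBlockAverage μ σ α A T)
    (u v : Lp E 2 ν) :
    inner 𝕜 v (T u) = c • ∑ k, ∑ j, ∫ x, inner 𝕜 (star (A k j) (v (σ k x)))
      (coordAverage μ α (fun x => u (σ j x)) x) ∂Measure.pi μ := by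
  rw [hσ.inner_eq]
  refine congrArg (c • ·) (sum_congr rfl fun k _ => ?_)
  have hv : ∀ j, MemLp (fun x => star (A k j) (v (σ k x))) 2 (Measure.pi μ) := fun j =>
    (star (A k j)).comp_memLp' (hσ.memLp_comp v k)
  rw [← integral_finsetSum _ fun j _ =>
    integrable_inner_coordAverage 𝕜 α (hσ.memLp_comp u j) (hv j)]
  refine integral_congr_ae ?_
  filter_upwards [hT u k] with x hx
  simp only [hx, inner_sum, ContinuousLinearMap.star_eq_adjoint,
    ContinuousLinearMap.adjoint_inner_left]

lemma star_eq (hσ : IsTiling (Measure.pi μ) ν H σ c) (hT : IsBlockAverage μ σ α A T)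
    (hU : IsBlockAverage μ σ α (star A) U) : star T = U := by
  have hadj : ∀ u v, inner 𝕜 u (U v) = starRingEnd 𝕜 (inner 𝕜 v (T u)) := fun u v => by
    rw [hU.inner_apply hσ, hT.inner_apply hσ, starRingEnd_apply, star_smul, star_trivial c,
      star_sum, sum_comm]
    refine congrArg (c • ·) (sum_congr rfl fun k _ => ?_)
    rw [star_sum]
    refine sum_congr rfl fun j _ => ?_
    simp only [Matrix.star_apply, star_star]
    exact integral_inner_clm_coordAverage α (A k j) (hσ.memLp_comp v k) (hσ.memLp_comp u j)
  symm
  rw [ContinuousLinearMap.star_eq_adjoint, ContinuousLinearMap.eq_adjoint_iff]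
  intro v u
  rw [← inner_conj_symm, hadj, RCLike.conj_conj]

end InnerProductSpace

section Independence

variable [NormedSpace 𝕜 E] [CompleteSpace E] [∀ n, IsProbabilityMeasure (μ n)] {φ : ι → X → 𝕜}

lemma apply_prod_smul {γ : Finset ι} {A : Matrix κ κ (E →L[𝕜] E)}
    {T : Lp E 2 ν →L[𝕜] Lp E 2 ν} (hT : IsBlockAverage μ σ α A T)
    (hφ : ∀ n, ∫ t, φ n t ∂μ n = 0) {u : Lp E 2 ν} {v : κ → E}
    (hu : ∀ j, ∀ᵐ x ∂Measure.pi μ, u (σ j x) = (∏ n ∈ γ, φ n (x n)) • v j) (k : κ) :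
    ∀ᵐ x ∂Measure.pi μ, T u (σ k x) =
      (∏ n ∈ γ, φ n (x n)) • if Disjoint α γ then ∑ j, A k j (v j) else 0 := by
  have havg : ∀ j, ∀ᵐ x ∂Measure.pi μ, coordAverage μ α (fun x => u (σ j x)) x =
      if Disjoint α γ then (∏ n ∈ γ, φ n (x n)) • v j else 0 := fun j =>
    (coordAverage_congr_ae α (hu j)).trans
      (.of_forall fun x => coordAverage_prod_smul α γ φ hφ (v j) x)
  filter_upwards [hT u k, ae_all_iff.2 havg] with x hx hxavg
  rw [hx]
  simp only [hxavg]
  split_ifs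
  · simp only [map_smul, smul_sum]
  · simp only [map_zero, sum_const_zero, smul_zero]

variable {A : Finset ι → Matrix κ κ (E →L[𝕜] E)} {T : Finset ι → Lp E 2 ν →L[𝕜] Lp E 2 ν}

lemma sum_disjoint_eq_zero (hσ : IsTiling (Measure.pi μ) ν H σ c)
    (hT : ∀ α, IsBlockAverage μ σ α (A α) (T α)) (hsum : ∑ α, T α = 0)
    (hmeas : ∀ n, Measurable (φ n)) (hnorm : ∀ n t, ‖φ n t‖ = 1)
    (hφ : ∀ n, ∫ t, φ n t ∂μ n = 0) (γ : Finset ι) : ∑ α with Disjoint α γ, A α = 0 := by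
  classical
  have hprod : ∀ x : ι → X, ‖∏ n ∈ γ, φ n (x n)‖ = 1 := fun x => by
    simp only [norm_prod, hnorm, prod_const_one]
  have hprod_meas : Measurable fun x : ι → X => ∏ n ∈ γ, φ n (x n) :=
    Finset.measurable_fun_prod _ fun n _ => (hmeas n).comp (measurable_pi_apply n)
  have hmode : ∀ v : E, MemLp (fun x : ι → X => (∏ n ∈ γ, φ n (x n)) • v) 2 (Measure.pi μ) :=
    fun v => .of_bound (hprod_meas.aestronglyMeasurable.smul_const v) ‖v‖
      (.of_forall fun x => by rw [norm_smul, hprod, one_mul])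
  ext k l e
  obtain ⟨u, hu⟩ := hσ.exists_lp_comp_eq fun j => hmode (Pi.single (M := fun _ => E) l e j)
  have hTu : ∑ α, T α u = 0 := by
    rw [← _root_.sum_apply, hsum, zero_apply]
  have hcoe := Lp.coeFn_fun_finsetSum univ fun α => T α u
  rw [hTu] at hcoe
  obtain ⟨x, hxT, hxsum, hxzero⟩ := ((ae_all_iff.2 fun α => (hT α).apply_prod_smul hφ hu k).and
    ((hσ.ae_iff.1 hcoe k).and (hσ.ae_iff.1 (Lp.coeFn_zero E 2 ν) k))).exists
  have hsingle : ∀ α, ∑ j, A α k j (Pi.single (M := fun _ => E) l e j) = A α k l e := fun α => by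
    rw [Fintype.sum_eq_single l fun j hj => by rw [Pi.single_eq_of_ne hj, map_zero],
      Pi.single_eq_same]
  have hzero : (∏ n ∈ γ, φ n (x n)) • ∑ α with Disjoint α γ, A α k l e = 0 := by
    rw [sum_filter, smul_sum]
    calc ∑ α, (∏ n ∈ γ, φ n (x n)) • (if Disjoint α γ then A α k l e else 0)
        = ∑ α, T α u (σ k x) := by simp only [hxT, hsingle]
      _ = 0 := hxsum.symm.trans hxzero
  rw [Matrix.sum_apply, _root_.sum_apply, Matrix.zero_apply, zero_apply]
  exact (smul_eq_zero.1 hzero).resolve_left (norm_ne_zero_iff.1 (by rw [hprod]; exact one_ne_zero))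

lemma eq_zero_of_sum_eq_zero (hσ : IsTiling (Measure.pi μ) ν H σ c)
    (hT : ∀ α, IsBlockAverage μ σ α (A α) (T α)) (hsum : ∑ α, T α = 0)
    (hmeas : ∀ n, Measurable (φ n)) (hnorm : ∀ n t, ‖φ n t‖ = 1)
    (hφ : ∀ n, ∫ t, φ n t ∂μ n = 0) : A = 0 := by
  refine (zeta_injective (𝕜 := 𝕜)) ?_
  rw [map_zero]
  funext δ
  have hpowerset : δ.powerset = ({α | Disjoint α δᶜ} : Finset (Finset ι)) := by
    ext α
    rw [mem_powerset, mem_filter_univ]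
    exact disjoint_compl_right_iff.symm
  rw [zeta_apply, hpowerset]
  exact sum_disjoint_eq_zero hσ hT hsum hmeas hnorm hφ δᶜ

end Independence

section UnionRep

variable {𝕄 : Type*} [DecidableEq κ] [InnerProductSpace 𝕜 E] [CompleteSpace E]
  [∀ n, IsProbabilityMeasure (μ n)] [Ring 𝕄] [StarRing 𝕄] [Algebra 𝕜 𝕄]
  {ψ : 𝕄 →⋆ₐ[𝕜] Matrix κ κ (E →L[𝕜] E)} {𝓔 : Finset ι → 𝕄 → Lp E 2 ν →L[𝕜] Lp E 2 ν}

/-- The representation on `L²(ν)` given by block averages with coefficients in `𝕄`, which acts on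
`κ`-tuples in `E` through `ψ`. -/
def unionRep (hσ : IsTiling (Measure.pi μ) ν H σ c)
    (h𝓔 : ∀ α A, IsBlockAverage μ σ α (ψ A) (𝓔 α A)) :
    UnionRep ι 𝕜 𝕄 (Lp E 2 ν →L[𝕜] Lp E 2 ν) where
  toLinearMap α :=
    { toFun := 𝓔 α
      map_add' := fun A B => (h𝓔 α (A + B)).unique hσ <| by
        rw [map_add]
        exact (h𝓔 α A).add hσ (h𝓔 α B)
      map_smul' := fun r A => (h𝓔 α (r • A)).unique hσ <| by
        rw [map_smul]
        exact (h𝓔 α A).smul hσ r }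
  map_mul_map α β A B := by
    refine ((h𝓔 α A).mul hσ (h𝓔 β B)).unique hσ ?_
    rw [← map_mul]
    exact h𝓔 (α ∪ β) (A * B)
  map_empty_one := (h𝓔 ∅ 1).unique hσ (by rw [map_one]; exact one)
  star_map α A := (h𝓔 α A).star_eq hσ (by rw [← map_star]; exact h𝓔 α (star A))

lemma sum_unionRep (hσ : IsTiling (Measure.pi μ) ν H σ c)
    (h𝓔 : ∀ α A, IsBlockAverage μ σ α (ψ A) (𝓔 α A)) (A : Finset ι → 𝕄) :
    (unionRep hσ h𝓔).sum A = ∑ α, 𝓔 α (A α) := UnionRep.sum_apply _ _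

lemma sum_unionRep_injective (hσ : IsTiling (Measure.pi μ) ν H σ c)
    (h𝓔 : ∀ α A, IsBlockAverage μ σ α (ψ A) (𝓔 α A)) (hψ : Function.Injective ψ) {φ : ι → X → 𝕜}
    (hmeas : ∀ n, Measurable (φ n)) (hnorm : ∀ n t, ‖φ n t‖ = 1)
    (hφ : ∀ n, ∫ t, φ n t ∂μ n = 0) : Function.Injective (unionRep hσ h𝓔).sum := by
  rw [injective_iff_map_eq_zero]
  intro A hA
  have hzero := eq_zero_of_sum_eq_zero hσ (fun α => h𝓔 α (A α))
    ((sum_unionRep hσ h𝓔 A).symm.trans hA) hmeas hnorm hφ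
  exact funext fun α => (map_eq_zero_iff ψ hψ).1 (congrFun hzero α)

end UnionRep

end IsBlockAverage

section Elementary

variable {ι X Y κ n 𝕜 : Type*} [Fintype ι] [DecidableEq ι] [MeasurableSpace X]
  [MeasurableSpace Y] [Fintype κ] [DecidableEq κ] [Fintype n] [DecidableEq n] [RCLike 𝕜]

variable (κ n 𝕜) in
/-- A block matrix over `𝕜` as a matrix of operators on the Euclidean space `𝕜^n`. -/
def blockCLM : Matrix (κ × n) (κ × n) 𝕜 →⋆ₐ[𝕜]
    Matrix κ κ (EuclideanSpace 𝕜 n →L[𝕜] EuclideanSpace 𝕜 n) where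
  toAlgHom := ((Matrix.toEuclideanCLM (n := n) (𝕜 := 𝕜)).toAlgEquiv.mapMatrix.toAlgHom).comp
    (Matrix.compAlgEquiv κ n 𝕜 𝕜).symm.toAlgHom
  map_star' B := by
    ext1 i j
    exact map_star (Matrix.toEuclideanCLM (n := n) (𝕜 := 𝕜)) ((Matrix.comp κ κ n n 𝕜).symm B j i)

lemma blockCLM_comp (B : Matrix κ κ (Matrix n n 𝕜)) :
    blockCLM κ n 𝕜 (Matrix.comp κ κ n n 𝕜 B) =
      B.map (Matrix.toEuclideanCLM (n := n) (𝕜 := 𝕜)) := rfl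

lemma blockCLM_injective : Function.Injective (blockCLM κ n 𝕜) :=
  (Matrix.toEuclideanCLM (n := n) (𝕜 := 𝕜)).toAlgEquiv.mapMatrix.injective.comp
    (Matrix.compAlgEquiv κ n 𝕜 𝕜).symm.injective

variable {μ : ι → Measure X} {ν : Measure Y} {H : Set (ι → X)} {σ : κ → (ι → X) → Y}
  {c : NNReal} {EE : κ → κ → Finset ι → Matrix n n 𝕜 →
    Lp (EuclideanSpace 𝕜 n) 2 ν →L[𝕜] Lp (EuclideanSpace 𝕜 n) 2 ν}

variable (μ σ EE) in
/-- `EE i j α A` is the elementary operator `𝓔_{ij}^α[A]` with respect to the charts `σ k`: it sends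
the average over the coordinates in `α` of the `j`-th piece, multiplied by `A`, to the `i`-th
piece. -/
def IsElementaryFamily : Prop :=
  ∀ i j α A,
    IsBlockAverage μ σ α (Matrix.single i j (Matrix.toEuclideanCLM (𝕜 := 𝕜) A)) (EE i j α A)

variable (EE) in
/-- The operator `∑_{i,j} 𝓔_{ij}^α[𝐁_{ij}]`, where `𝐁_{ij}` are the blocks of `B`. -/
def blockOperator (α : Finset ι) (B : Matrix (κ × n) (κ × n) 𝕜) :
    Lp (EuclideanSpace 𝕜 n) 2 ν →L[𝕜] Lp (EuclideanSpace 𝕜 n) 2 ν :=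
  ∑ i, ∑ j, EE i j α ((Matrix.comp κ κ n n 𝕜).symm B i j)

lemma isBlockAverage_blockOperator (hσ : IsTiling (Measure.pi μ) ν H σ c)
    (hEE : IsElementaryFamily μ σ EE) (α : Finset ι) (B : Matrix (κ × n) (κ × n) 𝕜) :
    IsBlockAverage μ σ α (blockCLM κ n 𝕜 B) (blockOperator EE α B) := by
  rw [Matrix.matrix_eq_sum_single (blockCLM κ n 𝕜 B)]
  exact .sum hσ univ fun i => .sum hσ univ fun j => hEE i j α _

lemma blockOperator_comp_single (hσ : IsTiling (Measure.pi μ) ν H σ c)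
    (hEE : IsElementaryFamily μ σ EE) (i j : κ) (α : Finset ι) (A : Matrix n n 𝕜) :
    blockOperator EE α (Matrix.comp κ κ n n 𝕜 (Matrix.single i j A)) = EE i j α A := by
  refine (isBlockAverage_blockOperator hσ hEE α _).unique hσ ?_
  rw [blockCLM_comp, Matrix.map_single]
  exact hEE i j α A

variable [∀ n, IsProbabilityMeasure (μ n)]

/-- The representation on `L²(ν)` whose value at a block matrix `(𝐀_{ij})_{i,j}` is
`∑_{i,j} 𝓔_{ij}^α[𝐀_{ij}]`. -/
def elementaryRep (hσ : IsTiling (Measure.pi μ) ν H σ c)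
    (hEE : IsElementaryFamily μ σ EE) :
    UnionRep ι 𝕜 (Matrix (κ × n) (κ × n) 𝕜)
      (Lp (EuclideanSpace 𝕜 n) 2 ν →L[𝕜] Lp (EuclideanSpace 𝕜 n) 2 ν) :=
  IsBlockAverage.unionRep hσ (isBlockAverage_blockOperator hσ hEE)

lemma sum_elementaryRep (hσ : IsTiling (Measure.pi μ) ν H σ c)
    (hEE : IsElementaryFamily μ σ EE) (B : Finset ι → Matrix (κ × n) (κ × n) 𝕜) :
    (elementaryRep hσ hEE).sum B = ∑ α, blockOperator EE α (B α) := UnionRep.sum_apply _ _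

lemma sum_elementaryRep_injective (hσ : IsTiling (Measure.pi μ) ν H σ c)
    (hEE : IsElementaryFamily μ σ EE) {φ : ι → X → 𝕜} (hmeas : ∀ n, Measurable (φ n))
    (hnorm : ∀ n t, ‖φ n t‖ = 1) (hφ : ∀ n, ∫ t, φ n t ∂μ n = 0) :
    Function.Injective (elementaryRep hσ hEE).sum :=
  IsBlockAverage.sum_unionRep_injective hσ _ blockCLM_injective hmeas hnorm hφ

lemma adjoin_eq_range_elementaryRep (hσ : IsTiling (Measure.pi μ) ν H σ c)
    (hEE : IsElementaryFamily μ σ EE) :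
    StarAlgebra.adjoin 𝕜 {T | ∃ i j α A, T = EE i j α A} =
      (elementaryRep hσ hEE).starAlgHom.range := by
  refine UnionRep.adjoin_eq_range_starAlgHom _ ?_ fun α B => ?_
  · rintro _ ⟨i, j, α, A, rfl⟩
    exact ⟨_, (UnionRep.sum_single _ α _).trans (blockOperator_comp_single hσ hEE i j α A)⟩
  · exact sum_mem fun i _ => sum_mem fun j _ => StarAlgebra.subset_adjoin 𝕜 _ ⟨i, j, α, _, rfl⟩

end Elementary

/-- The uniform probability measure on `[0,h)`. -/
def uniformIco (h : ℝ) : Measure ℝ := ProbabilityTheory.cond volume (Set.Ico 0 h)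

section Uniform

variable {h : ℝ}

lemma isProbabilityMeasure_uniformIco (hh : 0 < h) : IsProbabilityMeasure (uniformIco h) :=
  ProbabilityTheory.cond_isProbabilityMeasure_of_finite (by simpa using hh) (by simp)

/-- The first Fourier mode `t ↦ e^{2πit/h}` of `[0,h)`. -/
def fourierMode (h t : ℝ) : ℂ := Complex.exp (2 * Real.pi * Complex.I / h * t)

lemma measurable_fourierMode (h : ℝ) : Measurable (fourierMode h) := by
  unfold fourierMode
  fun_prop

lemma norm_fourierMode (h t : ℝ) : ‖fourierMode h t‖ = 1 := by
  have harg : 2 * Real.pi * Complex.I / h * t = ((2 * Real.pi / h * t : ℝ) : ℂ) * Complex.I := by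
    push_cast
    ring
  rw [fourierMode, harg]
  exact Complex.norm_exp_ofReal_mul_I _

lemma integral_fourierMode (hh : 0 < h) : ∫ t, fourierMode h t ∂uniformIco h = 0 := by
  have hfreq : 2 * Real.pi * Complex.I / h ≠ 0 :=
    div_ne_zero Complex.two_pi_I_ne_zero (Complex.ofReal_ne_zero.2 hh.ne')
  have hperiod : 2 * Real.pi * Complex.I / h * h = 2 * Real.pi * Complex.I :=
    div_mul_cancel₀ _ (Complex.ofReal_ne_zero.2 hh.ne')
  have hint : ∫ t in Set.Ico 0 h, fourierMode h t = 0 := by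
    rw [integral_Ico_eq_integral_Ioc, ← intervalIntegral.integral_of_le hh.le]
    simp only [fourierMode]
    rw [integral_exp_mul_complex hfreq, hperiod]
    simp [Complex.exp_two_pi_mul_I]
  rw [uniformIco, ProbabilityTheory.cond, integral_smul_measure, hint, smul_zero]

end Uniform

section Cube

variable {N M S : ℕ} {a : Fin S → Fin N → ℝ} {h : ℝ}

lemma restrict_cube (N : ℕ) (hh : 0 < h) :
    (volume : Measure (Fin N → ℝ)).restrict (cube N h) =
      h.toNNReal ^ N • Measure.pi fun _ => uniformIco h := by
  have := isProbabilityMeasure_uniformIco hh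
  rw [cube, volume_pi, Measure.restrict_pi_pi]
  refine Measure.pi_eq fun s _ => ?_
  have hh0 : ENNReal.ofReal h ≠ 0 := by simpa using hh
  have hscale : ∀ n,
      ENNReal.ofReal h * uniformIco h (s n) = volume.restrict (Set.Ico 0 h) (s n) := fun n => by
    rw [uniformIco, ProbabilityTheory.cond, Measure.smul_apply, Real.volume_Ico, sub_zero,
      smul_eq_mul, ← mul_assoc, ENNReal.mul_inv_cancel hh0 ENNReal.ofReal_ne_top, one_mul]
  simp only [Measure.smul_apply, Measure.pi_pi, ← hscale, prod_mul_distrib, prod_const, card_univ,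
    Fintype.card_fin]
  rfl

lemma measurableSet_cube (N : ℕ) (h : ℝ) : MeasurableSet (cube N h) :=
  .univ_pi fun _ => measurableSet_Ico

lemma image_cube_eq_OmegaI (a : Fin S → Fin N → ℝ) (h : ℝ) (k : Fin S) :
    (fun x => a k + x) '' cube N h = OmegaI a h k := by
  simp [OmegaI, Set.image_add_left, neg_add_eq_sub, Set.preimage]

lemma isTiling_Omega (hh : 0 < h)
    (hdisj : ∀ i j : Fin S, i ≠ j → Disjoint (OmegaI a h i) (OmegaI a h j)) :
    IsTiling (Measure.pi fun _ => uniformIco h) (volume.restrict (Omega a h)) (cube N h)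
      (fun k x => a k + x) (h.toNNReal ^ N) where
  measurableEmbedding k := measurableEmbedding_addLeft (a k)
  ae_mem := by
    have hmem := ae_restrict_mem (μ := volume) (measurableSet_cube N h)
    rwa [restrict_cube N hh, Measure.ae_smul_measure_iff
      (pow_ne_zero N (Real.toNNReal_pos.2 hh).ne')] at hmem
  disjoint_image i j hij := by
    simpa only [Function.onFun, image_cube_eq_OmegaI] using hdisj i j hij
  ne_zero := pow_ne_zero N (Real.toNNReal_pos.2 hh).ne'
  eq_smul_sum := by
    have hmap : ∀ k, volume.restrict (OmegaI a h k) =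
        h.toNNReal ^ N • (Measure.pi fun _ => uniformIco h).map (a k + ·) := fun k => by
      rw [← Measure.map_smul, ← restrict_cube N hh, ← image_cube_eq_OmegaI]
      exact ((measurePreserving_add_left volume (a k)).restrict_image_emb
        (measurableEmbedding_addLeft (a k)) (cube N h)).map_eq.symm
    have hmeas : ∀ k, MeasurableSet (OmegaI a h k) := fun k => by
      rw [← image_cube_eq_OmegaI]
      exact (measurableEmbedding_addLeft (a k)).measurableSet_image.2 (measurableSet_cube N h)
    rw [Omega, Measure.restrict_iUnion (fun i j hij => hdisj i j hij) hmeas, Measure.sum_fintype,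
      smul_sum]
    exact sum_congr rfl fun k _ => hmap k

lemma Efun_add_of_ne (hdisj : ∀ i j : Fin S, i ≠ j → Disjoint (OmegaI a h i) (OmegaI a h j))
    {i k : Fin S} (hki : k ≠ i) (j : Fin S) (α : Finset (Fin N)) (A : Matrix (Fin M) (Fin M) ℂ)
    (u : (Fin N → ℝ) → V M) {x : Fin N → ℝ} (hx : x ∈ cube N h) :
    Efun a h i j α A u (a k + x) = 0 := by
  have hmem : a k + x ∈ OmegaI a h k := by simpa [OmegaI] using hx
  exact Set.indicator_of_notMem (Set.disjoint_left.1 (hdisj k i hki) hmem) _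

lemma Efun_add_self (hh : 0 < h) (i j : Fin S) (α : Finset (Fin N))
    (A : Matrix (Fin M) (Fin M) ℂ) (u : (Fin N → ℝ) → V M) {x : Fin N → ℝ} (hx : x ∈ cube N h) :
    Efun a h i j α A u (a i + x) = Matrix.toEuclideanCLM (𝕜 := ℂ) A
      (coordAverage (fun _ => uniformIco h) α (fun x => u (a j + x)) x) := by
  have hmem : a i + x ∈ OmegaI a h i := by simpa [OmegaI] using hx
  have hcard : (h ^ α.card)⁻¹ * (h ^ (N - α.card))⁻¹ * h ^ N = 1 := by
    rw [← mul_inv, ← pow_add, Nat.add_sub_cancel' (card_finset_fin_le α)]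
    exact inv_mul_cancel₀ (pow_ne_zero _ hh.ne')
  have hcube : ∫ y in cube N h, (u (a j + combine α y x)).ofLp =
      (h ^ N • coordAverage (fun _ => uniformIco h) α (fun x => u (a j + x)) x).ofLp := by
    refine ((PiLp.continuousLinearEquiv 2 ℂ (fun _ : Fin M => ℂ)).integral_comp_comm _).trans ?_
    rw [restrict_cube N hh, integral_smul_nnreal_measure, NNReal.smul_def, NNReal.coe_pow,
      Real.coe_toNNReal h hh.le]
    rfl
  rw [Efun, Set.indicator_of_mem hmem]
  simp only [add_sub_cancel_left]
  rw [hcube, ← Matrix.toEuclideanCLM_toLp, WithLp.toLp_ofLp, ContinuousLinearMap.map_smul_of_tower,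
    smul_smul, hcard, one_smul]

lemma isElementaryFamily_of_ae_eq_Efun (hh : 0 < h)
    (hdisj : ∀ i j : Fin S, i ≠ j → Disjoint (OmegaI a h i) (OmegaI a h j))
    {EE : Fin S → Fin S → Finset (Fin N) → Matrix (Fin M) (Fin M) ℂ →
      Lp (V M) 2 (volume.restrict (Omega a h)) →L[ℂ] Lp (V M) 2 (volume.restrict (Omega a h))}
    (hEE : ∀ i j α A u, EE i j α A u =ᵐ[volume.restrict (Omega a h)] Efun a h i j α A u) :
    IsElementaryFamily (fun _ => uniformIco h) (fun k x => a k + x) EE := fun i j α A u k => by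
  have hσ := isTiling_Omega hh hdisj
  filter_upwards [hσ.ae_iff.1 (hEE i j α A u) k, hσ.ae_mem] with x hx hmem
  rw [hx]
  by_cases hki : k = i
  · subst hki
    rw [Efun_add_self hh k j α A u hmem, Fintype.sum_eq_single j fun l hl => by
      rw [Matrix.single_apply_of_col_ne _ _ hl.symm, zero_apply], Matrix.single_apply_same]
  · rw [Efun_add_of_ne hdisj hki j α A u hmem]
    simp [Matrix.single_apply_of_row_ne (Ne.symm hki)]

lemma blockM_bijective : Function.Bijective (blockM (M := M) (S := S)) :=
  (Matrix.comp (Fin S) (Fin S) (Fin M) (Fin M) ℂ).bijective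

end Cube

/-- Let `𝔄` be the C*-subalgebra of bounded operators on
`L²(Ω → ℂ^M)` generated by the elementary operators `𝓔_{ij}^α[𝐀]` (the
topological closure of the *-subalgebra they generate).  Every `𝒜 ∈ 𝔄` has a
unique coefficient expansion `𝒜 = ∑_α ∑_{i,j} 𝓔_{ij}^α[𝐀_{ij}^α]`, and there
is a map `π` sending such an `𝒜` to `(𝐁_α)_α`, `𝐁_α = ∑_{β⊆α} 𝐀_β`, which is
a bijection of `𝔄` onto `(ℂ^{MS×MS})^{2^N}` preserving addition,
multiplication, scalar multiplication, unit, and star. -/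
theorem generated_CStar_algebra_isomorphism (N M S : ℕ) (hN : 1 ≤ N)
    (hM : 1 ≤ M) (hS : 1 ≤ S) (h : ℝ) (hh : 0 < h) (a : Fin S → Fin N → ℝ)
    (hdisj : ∀ i j : Fin S, i ≠ j → Disjoint (OmegaI a h i) (OmegaI a h j))
    (EE : Fin S → Fin S → Finset (Fin N) → Matrix (Fin M) (Fin M) ℂ →
      (Lp (V M) 2 (volume.restrict (Omega a h)) →L[ℂ]
        Lp (V M) 2 (volume.restrict (Omega a h))))
    (hEE : ∀ i j α A (u : Lp (V M) 2 (volume.restrict (Omega a h))),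
      (EE i j α A u : (Fin N → ℝ) → V M) =ᵐ[volume.restrict (Omega a h)]
        Efun a h i j α A u) :
    -- `𝔄` is the C*-algebra generated by the elementary operators:
    ∀ AlgA : StarSubalgebra ℂ
        (Lp (V M) 2 (volume.restrict (Omega a h)) →L[ℂ]
          Lp (V M) 2 (volume.restrict (Omega a h))),
      AlgA = (StarAlgebra.adjoin ℂ
          {T | ∃ i j α A, T = EE i j α A}).topologicalClosure →
      -- unique expansion of every element of 𝔄:
      (∀ T ∈ AlgA, ∃! coef : Finset (Fin N) → Fin S → Fin S → Matrix (Fin M) (Fin M) ℂ,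
          T = bigSum EE coef) ∧
      -- the *-algebra isomorphism π onto (ℂ^{MS×MS})^{2^N}:
      ∃ π : (Lp (V M) 2 (volume.restrict (Omega a h)) →L[ℂ]
              Lp (V M) 2 (volume.restrict (Omega a h))) →
            (Finset (Fin N) → Matrix (Fin S × Fin M) (Fin S × Fin M) ℂ),
        (∀ coef, π (bigSum EE coef) =
            fun α => ∑ β ∈ α.powerset, blockM (coef β)) ∧
        Set.BijOn π AlgA Set.univ ∧
        (∀ T ∈ AlgA, ∀ U ∈ AlgA,
            π (T + U) = π T + π U ∧ π (T * U) = π T * π U) ∧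
        (∀ (c : ℂ), ∀ T ∈ AlgA, π (c • T) = c • π T) ∧
        π 1 = 1 ∧
        (∀ T ∈ AlgA, π (star T) = star (π T)) := by
  rintro _ rfl
  have := isProbabilityMeasure_uniformIco hh
  have hσ := isTiling_Omega hh hdisj
  have hfam := isElementaryFamily_of_ae_eq_Efun hh hdisj hEE
  have hF : Function.Injective (elementaryRep hσ hfam).sum :=
    sum_elementaryRep_injective hσ hfam (fun _ => measurable_fourierMode h)
      (fun _ => norm_fourierMode h) fun _ => integral_fourierMode hh
  have hbig : ∀ coef, bigSum EE coef = (elementaryRep hσ hfam).sum (blockM ∘ coef) := fun coef =>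
    (sum_elementaryRep hσ hfam (blockM ∘ coef)).symm
  rw [adjoin_eq_range_elementaryRep hσ hfam, topologicalClosure_range_starAlgHom]
  generalize elementaryRep hσ hfam = F at hF hbig ⊢
  refine ⟨fun T hT => ?_, F.symbol, fun coef => ?_, UnionRep.bijOn_symbol hF,
    fun T hT U hU => ⟨UnionRep.symbol_add hF hT hU, UnionRep.symbol_mul hF hT hU⟩,
    fun r T hT => UnionRep.symbol_smul hF r hT, UnionRep.symbol_one hF,
    fun T hT => UnionRep.symbol_star hF hT⟩
  · obtain ⟨c, rfl, hunique⟩ := UnionRep.existsUnique_eq_sum hF hT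
    obtain ⟨coef, rfl⟩ := blockM_bijective.comp_left.surjective c
    exact ⟨coef, (hbig coef).symm, fun coef' hcoef' =>
      blockM_bijective.comp_left.injective (hunique _ (hcoef'.trans (hbig coef')))⟩
  · rw [hbig, UnionRep.symbol_sum hF]
    rfl

end Stmt8
end
end

section
/- Let 𝒜 = ∑_{α⊆{1,...,N}} ∑_{i,j=1}^S 𝓔_{ij}^α[𝐀_{ij}^α] be an element of the C*-algebra 𝔄 of operators on L²(Ω → ℂ^M) generated by the elementary operators, and let 𝐁_α = ∑_{β⊆α} 𝐀_β with 𝐀_α = (𝐀_{ij}^α)_{i,j=1}^S. Then 𝒜 is invertible as a bounded operator on L² if and only if every matrix 𝐁_α (α ⊆ {1,...,N}) is invertible, and in that case 𝒜⁻¹ = π⁻¹((𝐁_α⁻¹)_{α⊆{1,...,N}}), i.e. 𝒜⁻¹ = ∑_α ∑_{i,j} 𝓔_{ij}^α[𝐂_{ij}^α] where the block matrices 𝐂_α = (𝐂_{ij}^α) are given by 𝐂_α = ∑_{β⊆α} (−1)^{|α∖β|} 𝐁_β⁻¹. -/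
/-!
STATEMENT 10: 𝒜 = ∑_{α,i,j} 𝓔_{ij}^α[𝐀_{ij}^α] ∈ 𝔄 is invertible iff every
matrix 𝐁_α = ∑_{β⊆α} 𝐀_β is invertible, and then
𝒜⁻¹ = π⁻¹((𝐁_α⁻¹)_α) = ∑_{α,i,j} 𝓔_{ij}^α[𝐂_{ij}^α] with
𝐂_α = ∑_{β⊆α} (−1)^{|α∖β|} 𝐁_β⁻¹.
-/

open MeasureTheory Finset

noncomputable section

namespace Stmt10

/-- `ℂ^M` with its Euclidean (Hilbert) structure. -/
abbrev V (M : ℕ) := EuclideanSpace ℂ (Fin M)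

/-- The half-open cube `H = [0,h)^N`. -/
def cube (N : ℕ) (h : ℝ) : Set (Fin N → ℝ) := Set.univ.pi fun _ => Set.Ico 0 h

/-- `combine α y x` agrees with `y` in the coordinates `n ∈ α` and with `x`
in the coordinates `n ∉ α`. -/
def combine {N : ℕ} (α : Finset (Fin N)) (y x : Fin N → ℝ) : Fin N → ℝ :=
  fun n => if n ∈ α then y n else x n

/-- The shifted cube `Ω_i = a_i + [0,h)^N`. -/
def OmegaI {N S : ℕ} (a : Fin S → Fin N → ℝ) (h : ℝ) (i : Fin S) :
    Set (Fin N → ℝ) := {x | x - a i ∈ cube N h}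

/-- `Ω = ⋃_{i=1}^S Ω_i`. -/
def Omega {N S : ℕ} (a : Fin S → Fin N → ℝ) (h : ℝ) : Set (Fin N → ℝ) :=
  ⋃ i, OmegaI a h i

/-- The pointwise formula for the elementary operator `𝓔_{ij}^α[𝐀]`:
`(𝓔_{ij}^α[𝐀]u)(x + a_i) = h^{−|α|} 𝐀 ∫_{[0,h)^{|α|}} u(x' + a_j) dx'_α` for
`x ∈ H`, and `0` outside `Ω_i`.  Here the partial integral over the coordinates
in `α` is realized as an integral over the whole cube `[0,h)^N` (the integrand
does not depend on the coordinates of `y` outside `α`), compensated by the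
additional normalization `h^{−(N−|α|)}`. -/
def Efun {N M S : ℕ} (a : Fin S → Fin N → ℝ) (h : ℝ) (i j : Fin S)
    (α : Finset (Fin N)) (A : Matrix (Fin M) (Fin M) ℂ)
    (u : (Fin N → ℝ) → V M) : (Fin N → ℝ) → V M :=
  (OmegaI a h i).indicator fun x =>
    ((h ^ α.card)⁻¹ * (h ^ (N - α.card))⁻¹ : ℝ) •
      (show V M from WithLp.toLp 2 (A.mulVec
        (show Fin M → ℂ from ∫ y in cube N h, u (a j + combine α y (x - a i)))))

/-- The operator `∑_{α ⊆ {1,...,N}} ∑_{i,j=1}^S 𝓔_{ij}^α[coef α i j]`. -/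
def bigSum {N M S : ℕ} {a : Fin S → Fin N → ℝ} {h : ℝ}
    (EE : Fin S → Fin S → Finset (Fin N) → Matrix (Fin M) (Fin M) ℂ →
      (Lp (V M) 2 (volume.restrict (Omega a h)) →L[ℂ]
        Lp (V M) 2 (volume.restrict (Omega a h))))
    (coef : Finset (Fin N) → Fin S → Fin S → Matrix (Fin M) (Fin M) ℂ) :
    Lp (V M) 2 (volume.restrict (Omega a h)) →L[ℂ]
      Lp (V M) 2 (volume.restrict (Omega a h)) :=
  ∑ α : Finset (Fin N), ∑ i : Fin S, ∑ j : Fin S, EE i j α (coef α i j)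

/-- The block matrix `(𝐀_{ij})_{i,j=1}^S ∈ ℂ^{MS×MS}` built from an `S×S` array
of `M×M` matrices. -/
def blockM {M S : ℕ} (c : Fin S → Fin S → Matrix (Fin M) (Fin M) ℂ) :
    Matrix (Fin S × Fin M) (Fin S × Fin M) ℂ :=
  Matrix.of fun p q => c p.1 q.1 p.2 q.2

/-- `∑_{α,i,j} 𝓔_{ij}^α[𝐂_{ij}^α]` where the blocks `𝐂_α = (𝐂_{ij}^α)` come
from a family of `MS×MS` matrices by the Möbius formula
`𝐂_α = ∑_{β⊆α} (−1)^{|α∖β|} B β`. -/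
def psiOp {N M S : ℕ} {a : Fin S → Fin N → ℝ} {h : ℝ}
    (EE : Fin S → Fin S → Finset (Fin N) → Matrix (Fin M) (Fin M) ℂ →
      (Lp (V M) 2 (volume.restrict (Omega a h)) →L[ℂ]
        Lp (V M) 2 (volume.restrict (Omega a h))))
    (B : Finset (Fin N) → Matrix (Fin S × Fin M) (Fin S × Fin M) ℂ) :
    Lp (V M) 2 (volume.restrict (Omega a h)) →L[ℂ]
      Lp (V M) 2 (volume.restrict (Omega a h)) :=
  bigSum EE fun α i j => Matrix.of fun m m' =>
    (∑ β ∈ α.powerset, ((-1 : ℂ) ^ ((α \ β).card)) • B β) (i, m) (j, m')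

/-!
In terms of the vector of the `S` restrictions of `u`, moved to the cube, `∑_{i,j} 𝓔_{ij}^α[X_{ij}]`
acts as `X P_α`, where `P_α` averages over the coordinates in `α`. Since `P_α P_β = P_{α ∪ β}`,
composition of operators is convolution over unions of the coefficients `(𝐀_α)_α`, and the zeta
transform `𝐁_α = ∑_{β ⊆ α} 𝐀_β` turns it into the pointwise product. So `π⁻¹` is a ring
homomorphism from `(ℂ^{MS×MS})^{2^N}`. It is injective: on a plane wave oscillating exactly in the
coordinates outside `α`, `P_β` is the identity if `β ⊆ α` and zero otherwise, so the operator acts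
as `𝐁_α`. As the domain is Artinian, an injective homomorphism from it reflects units.
-/

section Mobius

variable {ι G : Type*}

/-- The zeta transform `α ↦ ∑_{β ⊆ α} f β` of a function on the subsets of `ι`; it sends the
coefficients `(𝐀_α)_α` to the matrices `(𝐁_α)_α`. -/
def zeta [AddCommMonoid G] (f : Finset ι → G) (α : Finset ι) : G :=
  ∑ β ∈ α.powerset, f β

theorem zeta_injective [AddCommGroup G] :
    Function.Injective (zeta : (Finset ι → G) → Finset ι → G) := by
  classical
  intro f g hfg
  funext α
  induction α using Finset.strongInduction with
  | H α ih =>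
    have hα : zeta f α = zeta g α := congrFun hfg α
    have hproper : ∑ β ∈ α.powerset.erase α, f β = ∑ β ∈ α.powerset.erase α, g β :=
      sum_congr rfl fun β hβ => ih β <|
        (mem_powerset.1 (mem_of_mem_erase hβ)).ssubset_of_ne (ne_of_mem_erase hβ)
    rw [zeta, zeta, ← add_sum_erase _ f (mem_powerset_self α),
      ← add_sum_erase _ g (mem_powerset_self α), hproper] at hα
    exact add_right_cancel hα

variable [DecidableEq ι]

theorem zeta_single_empty [AddCommMonoid G] (x : G) :
    zeta (Pi.single (∅ : Finset ι) x) = fun _ => x := by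
  funext α
  simp [zeta, Pi.single_apply]

theorem sum_Icc_neg_one_pow_card_sdiff {γ α : Finset ι} (hγ : γ ⊆ α) :
    ∑ β ∈ Icc γ α, (-1 : ℤ) ^ (β \ γ).card = if γ = α then 1 else 0 := by
  have hcancel : ∀ δ ∈ (α \ γ).powerset, (γ ∪ δ) \ γ = δ := fun δ hδ =>
    union_sdiff_cancel_left (disjoint_sdiff.mono_right (mem_powerset.1 hδ))
  have hinj : Set.InjOn (γ ∪ ·) ((α \ γ).powerset : Set (Finset ι)) := fun δ hδ ε hε hδε => by
    rw [← hcancel δ hδ, ← hcancel ε hε]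
    exact congrArg (· \ γ) hδε
  have hempty : α \ γ = ∅ ↔ γ = α := by
    rw [sdiff_eq_empty_iff_subset]
    exact ⟨hγ.antisymm, fun h => h.ge⟩
  calc ∑ β ∈ Icc γ α, (-1 : ℤ) ^ (β \ γ).card
      = ∑ δ ∈ (α \ γ).powerset, (-1) ^ ((γ ∪ δ) \ γ).card := by
        rw [Icc_eq_image_powerset hγ, sum_image hinj]
    _ = ∑ δ ∈ (α \ γ).powerset, (-1) ^ δ.card :=
        sum_congr rfl fun δ hδ => by rw [hcancel δ hδ]
    _ = if γ = α then 1 else 0 := by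
        rw [sum_powerset_neg_one_pow_card]
        exact if_congr hempty rfl rfl

/-- The Möbius transform `α ↦ ∑_{β ⊆ α} (-1)^{|α∖β|} f β`, inverse to `zeta`. -/
def mobius [AddCommGroup G] (f : Finset ι → G) (α : Finset ι) : G :=
  ∑ β ∈ α.powerset, (-1 : ℤ) ^ (α \ β).card • f β

theorem mobius_add [AddCommGroup G] (f g : Finset ι → G) :
    mobius (f + g) = mobius f + mobius g := by
  funext α
  simp only [mobius, Pi.add_apply, smul_add, sum_add_distrib]

theorem zeta_mobius [AddCommGroup G] (f : Finset ι → G) : zeta (mobius f) = f := by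
  funext α
  calc ∑ β ∈ α.powerset, ∑ γ ∈ β.powerset, (-1 : ℤ) ^ (β \ γ).card • f γ
      = ∑ γ ∈ α.powerset, ∑ β ∈ Icc γ α, (-1 : ℤ) ^ (β \ γ).card • f γ :=
        sum_comm' fun β γ => by
          simp only [mem_powerset, mem_Icc]
          exact ⟨fun h => ⟨⟨h.2, h.1⟩, h.2.trans h.1⟩, fun h => ⟨h.1.2, h.1.1⟩⟩
    _ = ∑ γ ∈ α.powerset, if γ = α then f γ else 0 :=
        sum_congr rfl fun γ hγ => by
          rw [← sum_smul, sum_Icc_neg_one_pow_card_sdiff (mem_powerset.1 hγ), ite_smul, one_smul,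
            zero_smul]
    _ = f α := by simp

theorem mobius_zeta [AddCommGroup G] (f : Finset ι → G) : mobius (zeta f) = f :=
  zeta_injective (zeta_mobius _)

theorem mobius_one {R : Type*} [AddCommGroupWithOne R] :
    mobius (1 : Finset ι → R) = Pi.single ∅ 1 :=
  zeta_injective <| by
    rw [zeta_mobius, zeta_single_empty]
    rfl

variable [Fintype ι]

/-- The product of `∑ f β δ_β` and `∑ g γ δ_γ` in the algebra of the monoid of subsets of `ι` under
union. -/
def unionConv {R : Type*} [NonUnitalNonAssocSemiring R] (f g : Finset ι → R) (α : Finset ι) : R :=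
  ∑ β, ∑ γ, if β ∪ γ = α then f β * g γ else 0

theorem zeta_unionConv {R : Type*} [NonUnitalNonAssocSemiring R] (f g : Finset ι → R) :
    zeta (unionConv f g) = zeta f * zeta g := by
  funext α
  have hinner (β γ : Finset ι) :
      ∑ δ ∈ α.powerset, (if β ∪ γ = δ then f β * g γ else 0) =
        if β ⊆ α ∧ γ ⊆ α then f β * g γ else 0 := by
    simp only [sum_ite_eq, mem_powerset, union_subset_iff]
  have hfilter : α.powerset = univ.filter (· ⊆ α) := by ext; simp
  calc zeta (unionConv f g) α
      = ∑ β, ∑ γ, ∑ δ ∈ α.powerset, if β ∪ γ = δ then f β * g γ else 0 := by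
        simp only [zeta, unionConv]
        rw [sum_comm]
        exact sum_congr rfl fun β _ => sum_comm
    _ = ∑ β with β ⊆ α, ∑ γ with γ ⊆ α, f β * g γ := by
        simp only [hinner, sum_filter, ite_and, sum_ite_irrel, sum_const_zero]
    _ = zeta f α * zeta g α := by
        rw [zeta, zeta, hfilter, sum_mul_sum]

theorem mobius_mul {R : Type*} [NonUnitalNonAssocRing R] (B C : Finset ι → R) :
    mobius (B * C) = unionConv (mobius B) (mobius C) :=
  zeta_injective <| by rw [zeta_mobius, zeta_unionConv, zeta_mobius, zeta_mobius]

theorem sum_mul_sum_eq_sum_unionConv {R T : Type*} [NonUnitalNonAssocSemiring R]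
    [NonUnitalNonAssocSemiring T] (E : Finset ι → R →+ T)
    (hE : ∀ α β X Y, E α X * E β Y = E (α ∪ β) (X * Y)) (f g : Finset ι → R) :
    (∑ α, E α (f α)) * ∑ α, E α (g α) = ∑ α, E α (unionConv f g α) := by
  have hterm (β γ : Finset ι) :
      E β (f β) * E γ (g γ) = ∑ α, E α (if β ∪ γ = α then f β * g γ else 0) := by
    rw [hE, sum_eq_single (β ∪ γ)] <;> simp +contextual [eq_comm]
  simp only [sum_mul_sum, hterm, unionConv, map_sum]
  symm
  rw [sum_comm]
  exact sum_congr rfl fun β _ => sum_comm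

/-- The ring homomorphism `(𝐁_α)_α ↦ ∑_α E α (𝐀_α)` with `𝐀 = mobius 𝐁`, for additive maps `E α`
that turn products into unions of the index sets. For `E α = blockOp EE α` it is `π⁻¹`. -/
def mobiusHom {R T : Type*} [NonAssocRing R] [NonAssocSemiring T] (E : Finset ι → R →+ T)
    (hone : E ∅ 1 = 1) (hE : ∀ α β X Y, E α X * E β Y = E (α ∪ β) (X * Y)) :
    (Finset ι → R) →+* T where
  toFun B := ∑ α, E α (mobius B α)
  map_zero' := by simp [mobius]
  map_add' B C := by simp only [mobius_add, Pi.add_apply, map_add, sum_add_distrib]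
  map_one' := by
    rw [mobius_one, sum_eq_single ∅] <;> simp +contextual [hone]
  map_mul' B C := by rw [mobius_mul, sum_mul_sum_eq_sum_unionConv E hE]

end Mobius

theorem isUnit_map_iff_of_injective {R T : Type*} [Ring R] [IsArtinianRing R] [Semiring T]
    {φ : R →+* T} (hφ : Function.Injective φ) {x : R} : IsUnit (φ x) ↔ IsUnit x :=
  ⟨fun h => IsArtinianRing.isUnit_of_mem_nonZeroDivisors
    (comap_nonZeroDivisors_le_of_injective hφ h.mem_nonZeroDivisors), fun h => h.map φ⟩

section Cond

open ProbabilityTheory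

theorem ae_cond_iff {Ω : Type*} [MeasurableSpace Ω] {μ : Measure Ω} {s : Set Ω} (hs : μ s ≠ ⊤)
    {p : Ω → Prop} : (∀ᵐ x ∂μ[|s], p x) ↔ ∀ᵐ x ∂μ.restrict s, p x :=
  Measure.ae_ennreal_smul_measure_iff (ENNReal.inv_ne_zero.2 hs)

theorem memLp_cond_iff {Ω E : Type*} [MeasurableSpace Ω] [NormedAddCommGroup E] {μ : Measure Ω}
    {s : Set Ω} (hs₀ : μ s ≠ 0) (hs : μ s ≠ ⊤) {f : Ω → E} {p : ENNReal} :
    MemLp f p μ[|s] ↔ MemLp f p (μ.restrict s) := by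
  refine ⟨fun hf => ?_, fun hf => hf.smul_measure (ENNReal.inv_ne_top.2 hs₀)⟩
  have hsmul : μ s • μ[|s] = μ.restrict s := by
    rw [ProbabilityTheory.cond, smul_smul, ENNReal.mul_inv_cancel hs₀ hs, one_smul]
  exact hsmul ▸ hf.smul_measure hs

theorem integral_cond {Ω E : Type*} [MeasurableSpace Ω] [NormedAddCommGroup E] [NormedSpace ℝ E]
    (μ : Measure Ω) (s : Set Ω) (f : Ω → E) :
    ∫ x, f x ∂μ[|s] = (μ.real s)⁻¹ • ∫ x in s, f x ∂μ := by
  rw [ProbabilityTheory.cond, integral_smul_measure, ENNReal.toReal_inv, Measure.real]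

theorem pi_cond {ι : Type*} [Fintype ι] {X : ι → Type*} [∀ i, MeasurableSpace (X i)]
    (μ : ∀ i, Measure (X i)) [∀ i, SigmaFinite (μ i)] {s : ∀ i, Set (X i)}
    (hs : ∀ i, μ i (s i) ≠ ⊤) :
    Measure.pi (fun i => (μ i)[|s i]) = (Measure.pi μ)[|Set.univ.pi s] := by
  refine Measure.pi_eq fun t _ => ?_
  have hinv : (∏ i, μ i (s i))⁻¹ = ∏ i, (μ i (s i))⁻¹ :=
    ENNReal.prod_inv_distrib fun i _ j _ _ => Or.inr (hs j)
  simp only [ProbabilityTheory.cond, Measure.restrict_pi_pi, Measure.smul_apply, Measure.pi_pi,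
    smul_eq_mul, hinv, prod_mul_distrib]

end Cond

section PartialAvg

variable {ι : Type*} [DecidableEq ι] {X : ι → Type*}

theorem piecewise_piecewise_eq_piecewise_union (s t : Finset ι)
    (z y x : ∀ i, X i) :
    t.piecewise z (s.piecewise y x) = (s ∪ t).piecewise (t.piecewise z y) x := by
  funext i
  by_cases hs : i ∈ s <;> by_cases ht : i ∈ t <;> simp [hs, ht]

variable [Fintype ι] [∀ i, MeasurableSpace (X i)] (μ : ∀ i, Measure (X i))

/-- The average of `f` over the coordinates in `s`, as a function of all coordinates; the values of
the integration variable `y` outside `s` are discarded. -/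
def partialAvg {E : Type*} [NormedAddCommGroup E] [NormedSpace ℝ E] (s : Finset ι)
    (f : (∀ i, X i) → E) (x : ∀ i, X i) : E :=
  ∫ y, f (s.piecewise y x) ∂Measure.pi μ

variable [∀ i, IsProbabilityMeasure (μ i)]

theorem measurePreserving_piecewise (s : Finset ι) :
    MeasurePreserving (fun p : (∀ i, X i) × (∀ i, X i) => s.piecewise p.2 p.1)
      ((Measure.pi μ).prod (Measure.pi μ)) (Measure.pi μ) := by
  have hmeas : Measurable fun p : (∀ i, X i) × (∀ i, X i) => s.piecewise p.2 p.1 := by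
    refine measurable_pi_lambda _ fun i => ?_
    by_cases hi : i ∈ s <;> simp only [Finset.piecewise, hi, if_true, if_false] <;> fun_prop
  refine ⟨hmeas, (Measure.pi_eq fun t ht => ?_).symm⟩
  have hpre : (fun p : (∀ i, X i) × (∀ i, X i) => s.piecewise p.2 p.1) ⁻¹' Set.univ.pi t =
      (Set.univ.pi fun i => if i ∈ s then Set.univ else t i) ×ˢ
        (Set.univ.pi fun i => if i ∈ s then t i else Set.univ) := by
    ext p
    simp only [Set.mem_preimage, Set.mem_prod, Set.mem_univ_pi, ← forall_and]
    refine forall_congr' fun i => ?_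
    by_cases hi : i ∈ s <;> simp [hi]
  rw [Measure.map_apply hmeas (MeasurableSet.univ_pi ht), hpre, Measure.prod_prod,
    Measure.pi_pi, Measure.pi_pi, ← prod_mul_distrib]
  refine prod_congr rfl fun i _ => ?_
  by_cases hi : i ∈ s <;> simp [hi]

theorem partialAvg_prod {𝕜 : Type*} [RCLike 𝕜] (s : Finset ι) (g : ∀ i, X i → 𝕜) (x : ∀ i, X i) :
    partialAvg μ s (fun x => ∏ i, g i (x i)) x =
      ∏ i, if i ∈ s then ∫ t, g i t ∂μ i else g i (x i) := by
  have hfactor (y : ∀ i, X i) (i : ι) :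
      g i (s.piecewise y x i) = (if i ∈ s then g i else fun _ => g i (x i)) (y i) := by
    by_cases hi : i ∈ s <;> simp [hi]
  simp only [partialAvg, hfactor]
  rw [integral_fintype_prod_eq_prod]
  refine prod_congr rfl fun i _ => ?_
  by_cases hi : i ∈ s <;> simp [hi]

theorem partialAvg_prod_compl {𝕜 : Type*} [RCLike 𝕜] {g : ∀ i, X i → 𝕜}
    (hg : ∀ i, ∫ t, g i t ∂μ i = 0) (s t : Finset ι) (x : ∀ i, X i) :
    partialAvg μ t (fun x => ∏ i ∈ sᶜ, g i (x i)) x =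
      if t ⊆ s then ∏ i ∈ sᶜ, g i (x i) else 0 := by
  have hext (x : ∀ i, X i) :
      ∏ i ∈ sᶜ, g i (x i) = ∏ i, (if i ∈ s then fun _ => 1 else g i) (x i) := by
    rw [← prod_compl_mul_prod s, ← mul_one (∏ i ∈ sᶜ, g i (x i))]
    refine congrArg₂ _ (prod_congr rfl fun i hi => ?_) (prod_eq_one fun i hi => ?_).symm
    · rw [if_neg (mem_compl.1 hi)]
    · rw [if_pos hi]
  simp only [hext]
  rw [partialAvg_prod]
  split_ifs with hts
  · refine prod_congr rfl fun i _ => ?_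
    by_cases hi : i ∈ s
    · simp [hi]
    · have hit : i ∉ t := fun hit => hi (hts hit)
      simp [hi, hit]
  · obtain ⟨i, hit, his⟩ := not_subset.1 hts
    exact prod_eq_zero (mem_univ i) (by simp [hit, his, hg i])

variable {E : Type*} [NormedAddCommGroup E]

theorem ae_integrable_comp_piecewise (s : Finset ι) {f : (∀ i, X i) → E}
    (hf : Integrable f (Measure.pi μ)) :
    ∀ᵐ x ∂Measure.pi μ, Integrable (fun y => f (s.piecewise y x)) (Measure.pi μ) :=
  ((measurePreserving_piecewise μ s).integrable_comp_of_integrable hf).prod_right_ae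

variable [NormedSpace ℝ E]

theorem integrable_partialAvg (s : Finset ι) {f : (∀ i, X i) → E}
    (hf : Integrable f (Measure.pi μ)) : Integrable (partialAvg μ s f) (Measure.pi μ) :=
  ((measurePreserving_piecewise μ s).integrable_comp_of_integrable hf).integral_prod_left

theorem partialAvg_empty [CompleteSpace E] (f : (∀ i, X i) → E) : partialAvg μ ∅ f = f := by
  funext x
  simp [partialAvg]

theorem partialAvg_congr_ae (s : Finset ι) {f g : (∀ i, X i) → E} (hfg : f =ᵐ[Measure.pi μ] g) :
    partialAvg μ s f =ᵐ[Measure.pi μ] partialAvg μ s g := by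
  filter_upwards [Measure.ae_ae_of_ae_prod
    ((measurePreserving_piecewise μ s).quasiMeasurePreserving.ae hfg)] with x hx
  exact integral_congr_ae hx

theorem partialAvg_partialAvg (s t : Finset ι) {f : (∀ i, X i) → E}
    (hf : Integrable f (Measure.pi μ)) :
    partialAvg μ s (partialAvg μ t f) =ᵐ[Measure.pi μ] partialAvg μ (s ∪ t) f := by
  filter_upwards [ae_integrable_comp_piecewise μ (s ∪ t) hf] with x hx
  have hmp := measurePreserving_piecewise μ t
  calc partialAvg μ s (partialAvg μ t f) x
      = ∫ y, ∫ z, f ((s ∪ t).piecewise (t.piecewise z y) x) ∂Measure.pi μ ∂Measure.pi μ := by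
        simp only [partialAvg, piecewise_piecewise_eq_piecewise_union]
    _ = ∫ p, f ((s ∪ t).piecewise (t.piecewise p.2 p.1) x)
          ∂(Measure.pi μ).prod (Measure.pi μ) :=
        (integral_prod _ (hmp.integrable_comp_of_integrable hx)).symm
    _ = ∫ w, f ((s ∪ t).piecewise w x)
          ∂((Measure.pi μ).prod (Measure.pi μ)).map fun p => t.piecewise p.2 p.1 :=
        (integral_map hmp.aemeasurable (by rw [hmp.map_eq]; exact hx.1)).symm
    _ = partialAvg μ (s ∪ t) f x := by rw [hmp.map_eq, partialAvg]

theorem partialAvg_clm_comp {𝕜 F : Type*} [RCLike 𝕜] [NormedSpace 𝕜 E] [CompleteSpace E]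
    [NormedAddCommGroup F] [NormedSpace ℝ F] [NormedSpace 𝕜 F] [CompleteSpace F]
    (L : E →L[𝕜] F) (s : Finset ι) {f : (∀ i, X i) → E} (hf : Integrable f (Measure.pi μ)) :
    partialAvg μ s (fun x => L (f x)) =ᵐ[Measure.pi μ] fun x => L (partialAvg μ s f x) := by
  filter_upwards [ae_integrable_comp_piecewise μ s hf] with x hx
  exact L.integral_comp_comm hx

end PartialAvg

section Cube

/-- The uniform probability measure on `[0,h)`. -/
def sideMeasure (h : ℝ) : Measure ℝ :=
  ProbabilityTheory.cond volume (Set.Ico 0 h)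

/-- The uniform probability measure on the cube `[0,h)^N`, in the form of a product measure, so
that `partialAvg` averages over its coordinates. -/
abbrev cubeMeasure (N : ℕ) (h : ℝ) : Measure (Fin N → ℝ) :=
  Measure.pi fun _ => sideMeasure h

variable {N : ℕ} {h : ℝ}

theorem cubeMeasure_eq_cond : cubeMeasure N h = ProbabilityTheory.cond volume (cube N h) :=
  pi_cond (fun _ => volume) fun _ => measure_Ico_lt_top.ne

theorem measurableSet_cube : MeasurableSet (cube N h) :=
  MeasurableSet.univ_pi fun _ => measurableSet_Ico

theorem volume_cube : volume (cube N h) = ENNReal.ofReal h ^ N := by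
  simp [cube, volume_pi_pi]

theorem volume_cube_ne_top : volume (cube N h) ≠ ⊤ := by
  simp [volume_cube]

theorem ae_cubeMeasure_iff {p : (Fin N → ℝ) → Prop} :
    (∀ᵐ z ∂cubeMeasure N h, p z) ↔ ∀ᵐ z ∂volume.restrict (cube N h), p z := by
  rw [cubeMeasure_eq_cond, ae_cond_iff volume_cube_ne_top]

theorem ae_mem_cube : ∀ᵐ z ∂cubeMeasure N h, z ∈ cube N h :=
  ae_cubeMeasure_iff.2 (ae_restrict_mem measurableSet_cube)

variable [hh : Fact (0 < h)]

instance : IsProbabilityMeasure (sideMeasure h) :=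
  ProbabilityTheory.cond_isProbabilityMeasure_of_finite (by simp [hh.out])
    measure_Ico_lt_top.ne

theorem memLp_cubeMeasure_iff {E : Type*} [NormedAddCommGroup E] {f : (Fin N → ℝ) → E}
    {p : ENNReal} : MemLp f p (cubeMeasure N h) ↔ MemLp f p (volume.restrict (cube N h)) := by
  rw [cubeMeasure_eq_cond, memLp_cond_iff _ volume_cube_ne_top]
  simp [volume_cube, hh.out]

theorem integral_cubeMeasure {E : Type*} [NormedAddCommGroup E] [NormedSpace ℝ E]
    (f : (Fin N → ℝ) → E) :
    ∫ z, f z ∂cubeMeasure N h = (h ^ N)⁻¹ • ∫ z in cube N h, f z := by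
  rw [cubeMeasure_eq_cond, integral_cond, Measure.real, volume_cube, ENNReal.toReal_pow,
    ENNReal.toReal_ofReal hh.out.le]

end Cube

section PlaneWave

variable {N : ℕ} {h : ℝ}

/-- The plane wave `z ↦ exp (2πi/h ∑_{n ∉ α} z_n)`, which oscillates exactly in the coordinates
outside `α`. -/
def planeWave (h : ℝ) (α : Finset (Fin N)) (z : Fin N → ℝ) : ℂ :=
  ∏ n ∈ αᶜ, Complex.exp (2 * Real.pi * Complex.I / h * z n)

theorem norm_planeWave (α : Finset (Fin N)) (z : Fin N → ℝ) : ‖planeWave h α z‖ = 1 := by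
  rw [planeWave, norm_prod]
  refine prod_eq_one fun n _ => ?_
  rw [Complex.norm_exp]
  simp [Complex.div_re, Complex.div_im]

theorem continuous_planeWave (α : Finset (Fin N)) : Continuous (planeWave h α) := by
  unfold planeWave
  fun_prop

variable [hh : Fact (0 < h)]

theorem integral_exp_sideMeasure :
    ∫ t : ℝ, Complex.exp (2 * Real.pi * Complex.I / h * t) ∂sideMeasure h = 0 := by
  have hh₀ : (h : ℂ) ≠ 0 := Complex.ofReal_ne_zero.2 hh.out.ne'
  have hfreq : 2 * Real.pi * Complex.I / h ≠ 0 := div_ne_zero Complex.two_pi_I_ne_zero hh₀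
  rw [sideMeasure, integral_cond, integral_Ico_eq_integral_Ioc,
    ← intervalIntegral.integral_of_le hh.out.le, integral_exp_mul_complex hfreq,
    div_mul_cancel₀ _ hh₀, Complex.exp_two_pi_mul_I]
  simp

theorem partialAvg_planeWave (α β : Finset (Fin N)) (z : Fin N → ℝ) :
    partialAvg (fun _ => sideMeasure h) β (planeWave h α) z =
      if β ⊆ α then planeWave h α z else 0 :=
  partialAvg_prod_compl _ (fun _ => integral_exp_sideMeasure) α β z

theorem memLp_planeWave_smul {E : Type*} [NormedAddCommGroup E] [NormedSpace ℂ E]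
    (α : Finset (Fin N)) (v : E) (p : ENNReal) :
    MemLp (fun z => planeWave h α z • v) p (cubeMeasure N h) :=
  MemLp.of_bound ((continuous_planeWave α).smul continuous_const).aestronglyMeasurable ‖v‖
    (Filter.Eventually.of_forall fun z => by rw [norm_smul, norm_planeWave, one_mul])

end PlaneWave

section Stack

variable {N M S : ℕ} {a : Fin S → Fin N → ℝ} {h : ℝ}

theorem add_mem_OmegaI_iff {i : Fin S} {z : Fin N → ℝ} :
    a i + z ∈ OmegaI a h i ↔ z ∈ cube N h := by
  simp [OmegaI]

theorem OmegaI_subset_Omega (i : Fin S) : OmegaI a h i ⊆ Omega a h :=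
  Set.subset_iUnion (OmegaI a h) i

theorem measurableSet_OmegaI (i : Fin S) : MeasurableSet (OmegaI a h i) :=
  measurableSet_preimage (measurable_id.sub_const (a i)) measurableSet_cube

theorem measurePreserving_sub_OmegaI (i : Fin S) :
    MeasurePreserving (· - a i) (volume.restrict (OmegaI a h i)) (volume.restrict (cube N h)) :=
  (measurePreserving_sub_right volume (a i)).restrict_preimage measurableSet_cube

theorem measurePreserving_add_OmegaI (i : Fin S) :
    MeasurePreserving (a i + ·) (volume.restrict (cube N h)) (volume.restrict (OmegaI a h i)) := by
  have hpre : (a i + ·) ⁻¹' OmegaI a h i = cube N h := Set.ext fun _ => add_mem_OmegaI_iff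
  exact hpre ▸ (measurePreserving_add_left volume (a i)).restrict_preimage (measurableSet_OmegaI i)

theorem ae_restrict_Omega_iff {p : (Fin N → ℝ) → Prop} :
    (∀ᵐ x ∂volume.restrict (Omega a h), p x) ↔
      ∀ i, ∀ᵐ z ∂cubeMeasure N h, p (a i + z) := by
  rw [Omega, ae_restrict_iUnion_iff]
  refine forall_congr' fun i => ?_
  rw [ae_cubeMeasure_iff, ← (measurePreserving_add_OmegaI i).map_eq,
    (measurableEmbedding_addLeft (a i)).ae_map_iff]

/-- The restrictions of `u` to the cubes `Ω_i`, moved to `[0,h)^N` and collected in one vector. In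
this picture `∑_{i,j} 𝓔_{ij}^α[X_{ij}]` is `partialAvg` over `α` followed by the matrix `X`. -/
def stack (a : Fin S → Fin N → ℝ) (u : (Fin N → ℝ) → V M) (z : Fin N → ℝ) :
    Fin S × Fin M → ℂ :=
  fun p => u (a p.1 + z) p.2

theorem stack_ae_eq_iff {u v : (Fin N → ℝ) → V M} :
    stack a u =ᵐ[cubeMeasure N h] stack a v ↔ u =ᵐ[volume.restrict (Omega a h)] v := by
  rw [Filter.EventuallyEq, Filter.EventuallyEq, ae_restrict_Omega_iff, ← ae_all_iff]
  refine Filter.eventually_congr (Filter.Eventually.of_forall fun z => ?_)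
  refine ⟨fun H i => ?_, fun H => funext fun p => by simp only [stack, H p.1]⟩
  ext m
  exact congrFun H (i, m)

/-- The space `L²(Ω → ℂ^M)`. -/
abbrev L2 (M : ℕ) (a : Fin S → Fin N → ℝ) (h : ℝ) :=
  Lp (V M) 2 (volume.restrict (Omega a h))

theorem L2_ext_stack {u v : L2 M a h} (huv : stack a u =ᵐ[cubeMeasure N h] stack a v) : u = v :=
  Lp.ext (stack_ae_eq_iff.1 huv)

theorem stack_zero : stack a (0 : L2 M a h) =ᵐ[cubeMeasure N h] 0 :=
  stack_ae_eq_iff.2 (Lp.coeFn_zero _ _ _)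

theorem stack_add (u v : L2 M a h) :
    stack a (u + v : L2 M a h) =ᵐ[cubeMeasure N h] stack a u + stack a v :=
  stack_ae_eq_iff.2 (Lp.coeFn_add u v)

theorem stack_sum {κ : Type*} (s : Finset κ) (u : κ → L2 M a h) :
    stack a (∑ k ∈ s, u k : L2 M a h) =ᵐ[cubeMeasure N h] fun z => ∑ k ∈ s, stack a (u k) z :=
  (stack_ae_eq_iff.2 (Lp.coeFn_fun_finsetSum s u)).trans <| Filter.Eventually.of_forall fun z =>
    funext fun p => by simp only [stack, WithLp.ofLp_sum, Finset.sum_apply]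

theorem exists_stack_ae_eq [Fact (0 < h)]
    (hdisj : ∀ i j : Fin S, i ≠ j → Disjoint (OmegaI a h i) (OmegaI a h j))
    {f : (Fin N → ℝ) → Fin S × Fin M → ℂ} (hf : MemLp f 2 (cubeMeasure N h)) :
    ∃ u : L2 M a h, stack a u =ᵐ[cubeMeasure N h] f := by
  let g (i : Fin S) : (Fin N → ℝ) → V M :=
    (OmegaI a h i).indicator fun x => WithLp.toLp 2 fun m => f (x - a i) (i, m)
  have hg (i : Fin S) : MemLp (g i) 2 (volume.restrict (Omega a h)) := by
    rw [memLp_indicator_iff_restrict (measurableSet_OmegaI i),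
      Measure.restrict_restrict_of_subset (OmegaI_subset_Omega i)]
    exact MemLp.of_eval_piLp fun m =>
      ((memLp_cubeMeasure_iff.1 hf).comp_measurePreserving
        (measurePreserving_sub_OmegaI i)).eval (i, m)
  have hsum : MemLp (fun x => ∑ i, g i x) 2 (volume.restrict (Omega a h)) :=
    memLp_finsetSum _ fun i _ => hg i
  refine ⟨hsum.toLp, ?_⟩
  filter_upwards [stack_ae_eq_iff.2 hsum.coeFn_toLp, ae_mem_cube] with z hz hmem
  rw [hz]
  funext p
  have hp : ∑ i, g i (a p.1 + z) = g p.1 (a p.1 + z) :=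
    sum_eq_single p.1 (fun i _ hi => Set.indicator_of_notMem
      (Set.disjoint_left.1 (hdisj p.1 i hi.symm) (add_mem_OmegaI_iff.2 hmem)) _) (by simp)
  simp only [stack, hp, g, Set.indicator_of_mem (add_mem_OmegaI_iff.2 hmem), add_sub_cancel_left]

theorem integrable_stack [Fact (0 < h)] (u : L2 M a h) :
    Integrable (stack a u) (cubeMeasure N h) := by
  refine Integrable.of_eval fun p => ?_
  have hres : MemLp u 2 (volume.restrict (OmegaI a h p.1)) :=
    (Lp.memLp u).mono_measure (Measure.restrict_mono (OmegaI_subset_Omega p.1) le_rfl)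
  have hcube : MemLp (fun z => u (a p.1 + z)) 2 (cubeMeasure N h) :=
    memLp_cubeMeasure_iff.2 (hres.comp_measurePreserving (measurePreserving_add_OmegaI p.1))
  exact (hcube.integrable (by norm_num)).eval_piLp p.2

theorem stack_Efun [hh : Fact (0 < h)]
    (hdisj : ∀ i j : Fin S, i ≠ j → Disjoint (OmegaI a h i) (OmegaI a h j))
    (i j : Fin S) (α : Finset (Fin N)) (A : Matrix (Fin M) (Fin M) ℂ) (u : L2 M a h) :
    stack a (Efun a h i j α A u) =ᵐ[cubeMeasure N h] fun z p =>
      if p.1 = i then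
        (A.mulVec fun m => partialAvg (fun _ => sideMeasure h) α (stack a u) z (j, m)) p.2
      else 0 := by
  filter_upwards [ae_mem_cube, ae_integrable_comp_piecewise _ α (integrable_stack u)]
    with z hz hint
  funext ⟨k, m⟩
  by_cases hk : k = i
  · subst hk
    have hpow : (h ^ α.card)⁻¹ * (h ^ (N - α.card))⁻¹ = (h ^ N)⁻¹ := by
      rw [← mul_inv, ← pow_add, Nat.add_sub_cancel' (by simpa using α.card_le_univ)]
    have hblock : Integrable (fun y => (u (a j + combine α y z)).ofLp) (cubeMeasure N h) :=
      Integrable.of_eval fun m => hint.eval (j, m)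
    have havg : (fun m => partialAvg (fun _ => sideMeasure h) α (stack a u) z (j, m)) =
        (h ^ N)⁻¹ • ∫ y in cube N h, (u (a j + combine α y z)).ofLp := by
      rw [← integral_cubeMeasure]
      funext m
      rw [partialAvg, eval_integral fun p => hint.eval p, eval_integral fun p => hblock.eval p]
      rfl
    simp only [if_true]
    rw [havg, Matrix.mulVec_smul]
    simp only [stack, Efun, Set.indicator_of_mem (add_mem_OmegaI_iff.2 hz), hpow,
      add_sub_cancel_left]
    rfl
  · have hmem : a k + z ∉ OmegaI a h i :=
      Set.disjoint_left.1 (hdisj k i hk) (add_mem_OmegaI_iff.2 hz)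
    simp [stack, Efun, hmem, hk]

end Stack

section BlockOp

variable {N M S : ℕ} {a : Fin S → Fin N → ℝ} {h : ℝ}

/-- The operator `∑_{i,j} 𝓔_{ij}^α[X_{ij}]` for a block matrix `X = (X_{ij})`. -/
def blockOp (EE : Fin S → Fin S → Finset (Fin N) → Matrix (Fin M) (Fin M) ℂ →
      (L2 M a h →L[ℂ] L2 M a h))
    (α : Finset (Fin N)) (X : Matrix (Fin S × Fin M) (Fin S × Fin M) ℂ) :
    L2 M a h →L[ℂ] L2 M a h :=
  ∑ i, ∑ j, EE i j α (Matrix.of fun m m' => X (i, m) (j, m'))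

/-- `EE i j α A` is the elementary operator `𝓔_{ij}^α[A]` on `L²(Ω → ℂ^M)`. -/
def IsElementaryFamily (EE : Fin S → Fin S → Finset (Fin N) → Matrix (Fin M) (Fin M) ℂ →
    (L2 M a h →L[ℂ] L2 M a h)) : Prop :=
  ∀ i j α A (u : L2 M a h), EE i j α A u =ᵐ[volume.restrict (Omega a h)] Efun a h i j α A u

variable [Fact (0 < h)]
  {EE : Fin S → Fin S → Finset (Fin N) → Matrix (Fin M) (Fin M) ℂ → (L2 M a h →L[ℂ] L2 M a h)}
  (hdisj : ∀ i j : Fin S, i ≠ j → Disjoint (OmegaI a h i) (OmegaI a h j))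
  (hEE : IsElementaryFamily EE)

include hdisj hEE

theorem stack_blockOp (α : Finset (Fin N)) (X : Matrix (Fin S × Fin M) (Fin S × Fin M) ℂ)
    (u : L2 M a h) :
    stack a (blockOp EE α X u) =ᵐ[cubeMeasure N h]
      fun z => X.mulVec (partialAvg (fun _ => sideMeasure h) α (stack a u) z) := by
  let A (q : Fin S × Fin S) : Matrix (Fin M) (Fin M) ℂ :=
    Matrix.of fun m m' => X (q.1, m) (q.2, m')
  have hsum : blockOp EE α X u = ∑ q : Fin S × Fin S, EE q.1 q.2 α (A q) u := by
    simp only [blockOp, A, _root_.sum_apply, Fintype.sum_prod_type]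
  have hterm (q : Fin S × Fin S) :=
    (stack_ae_eq_iff.2 (hEE q.1 q.2 α (A q) u)).trans (stack_Efun hdisj q.1 q.2 α (A q) u)
  rw [hsum]
  filter_upwards [stack_sum univ fun q : Fin S × Fin S => EE q.1 q.2 α (A q) u,
    ae_all_iff.2 hterm] with z hz ht
  rw [hz]
  funext p
  simp only [ht, A, Finset.sum_apply, Fintype.sum_prod_type, Matrix.mulVec, dotProduct,
    Matrix.of_apply]
  rw [sum_eq_single p.1]
  · simp
  · intro i _ hi
    simp [hi.symm]
  · simp

theorem blockOp_add (α : Finset (Fin N)) (X Y : Matrix (Fin S × Fin M) (Fin S × Fin M) ℂ) :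
    blockOp EE α (X + Y) = blockOp EE α X + blockOp EE α Y := by
  ext1 u
  refine L2_ext_stack ?_
  filter_upwards [stack_blockOp hdisj hEE α (X + Y) u, stack_blockOp hdisj hEE α X u,
    stack_blockOp hdisj hEE α Y u, stack_add (blockOp EE α X u) (blockOp EE α Y u)]
    with z hXY hX hY hadd
  rw [_root_.add_apply, hXY, hadd, Pi.add_apply, hX, hY, Matrix.add_mulVec]

theorem blockOp_mul (α β : Finset (Fin N)) (X Y : Matrix (Fin S × Fin M) (Fin S × Fin M) ℂ) :
    blockOp EE α X * blockOp EE β Y = blockOp EE (α ∪ β) (X * Y) := by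
  ext1 u
  refine L2_ext_stack ?_
  have hu := integrable_stack u
  filter_upwards [stack_blockOp hdisj hEE α X (blockOp EE β Y u),
    partialAvg_congr_ae _ α (stack_blockOp hdisj hEE β Y u),
    partialAvg_clm_comp _ (Matrix.mulVecLin Y).toContinuousLinearMap α
      (integrable_partialAvg _ β hu),
    partialAvg_partialAvg _ α β hu, stack_blockOp hdisj hEE (α ∪ β) (X * Y) u]
    with z hX hY hcomm havg hXY
  calc stack a ((blockOp EE α X * blockOp EE β Y) u) z
      = X.mulVec (Y.mulVec (partialAvg (fun _ => sideMeasure h) α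
          (partialAvg (fun _ => sideMeasure h) β (stack a u)) z)) :=
        hX.trans (congrArg X.mulVec (hY.trans hcomm))
    _ = stack a (blockOp EE (α ∪ β) (X * Y) u) z := by
        rw [havg, Matrix.mulVec_mulVec, hXY]

theorem blockOp_empty_one : blockOp EE ∅ 1 = 1 := by
  ext1 u
  refine L2_ext_stack ?_
  filter_upwards [stack_blockOp hdisj hEE ∅ 1 u] with z hz
  rw [hz, partialAvg_empty, Matrix.one_mulVec]
  rfl

/-- The inverse `π⁻¹` of the symbol map: the operator in `𝔄` with the matrices `(𝐁_α)_α`. -/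
def ofSymbol : (Finset (Fin N) → Matrix (Fin S × Fin M) (Fin S × Fin M) ℂ) →+*
    (L2 M a h →L[ℂ] L2 M a h) :=
  mobiusHom (fun α => AddMonoidHom.mk' (blockOp EE α) (blockOp_add hdisj hEE α))
    (blockOp_empty_one hdisj hEE) (blockOp_mul hdisj hEE)

theorem ofSymbol_apply (B : Finset (Fin N) → Matrix (Fin S × Fin M) (Fin S × Fin M) ℂ) :
    ofSymbol hdisj hEE B = ∑ α, blockOp EE α (mobius B α) :=
  rfl

theorem bigSum_eq_ofSymbol (coef : Finset (Fin N) → Fin S → Fin S → Matrix (Fin M) (Fin M) ℂ) :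
    bigSum EE coef = ofSymbol hdisj hEE (zeta fun α => blockM (coef α)) := by
  rw [ofSymbol_apply, mobius_zeta]
  rfl

theorem psiOp_eq_ofSymbol (B : Finset (Fin N) → Matrix (Fin S × Fin M) (Fin S × Fin M) ℂ) :
    psiOp EE B = ofSymbol hdisj hEE B := by
  have hmobius (α : Finset (Fin N)) :
      ∑ β ∈ α.powerset, (-1 : ℂ) ^ (α \ β).card • B β = mobius B α :=
    sum_congr rfl fun β _ => by rw [← Int.cast_smul_eq_zsmul ℂ]; push_cast; rfl
  simp only [psiOp, hmobius]
  rfl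

theorem stack_ofSymbol_of_planeWave {α : Finset (Fin N)} {v : Fin S × Fin M → ℂ} {u : L2 M a h}
    (hu : stack a u =ᵐ[cubeMeasure N h] fun z => planeWave h α z • v)
    (B : Finset (Fin N) → Matrix (Fin S × Fin M) (Fin S × Fin M) ℂ) :
    stack a (ofSymbol hdisj hEE B u) =ᵐ[cubeMeasure N h]
      fun z => planeWave h α z • (B α).mulVec v := by
  have hB : ofSymbol hdisj hEE B u = ∑ β, blockOp EE β (mobius B β) u := by
    rw [ofSymbol_apply, _root_.sum_apply]
  rw [hB]
  filter_upwards [stack_sum univ fun β => blockOp EE β (mobius B β) u,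
    ae_all_iff.2 fun β => stack_blockOp hdisj hEE β (mobius B β) u,
    ae_all_iff.2 fun β => partialAvg_congr_ae _ β hu] with z hsum hblock havg
  have hwave (β : Finset (Fin N)) :
      partialAvg (fun _ => sideMeasure h) β (fun z => planeWave h α z • v) z =
        if β ⊆ α then planeWave h α z • v else 0 := by
    rw [← ite_zero_smul, ← partialAvg_planeWave]
    exact integral_smul_const _ v
  calc stack a (∑ β, blockOp EE β (mobius B β) u : L2 M a h) z
      = ∑ β, (mobius B β).mulVec (if β ⊆ α then planeWave h α z • v else 0) := by
        simp only [hsum, hblock, havg, hwave]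
    _ = ∑ β ∈ α.powerset, (mobius B β).mulVec (planeWave h α z • v) := by
        simp only [apply_ite, Matrix.mulVec_zero, ← sum_filter]
        exact sum_congr (by ext; simp) fun _ _ => rfl
    _ = planeWave h α z • (zeta (mobius B) α).mulVec v := by
        rw [← Matrix.sum_mulVec, Matrix.mulVec_smul, zeta]
    _ = planeWave h α z • (B α).mulVec v := by rw [zeta_mobius]

theorem ofSymbol_injective : Function.Injective (ofSymbol hdisj hEE) := by
  refine (injective_iff_map_eq_zero _).2 fun B hB => funext fun α => ?_
  refine Matrix.ext_iff_mulVec.2 fun v => ?_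
  obtain ⟨u, hu⟩ := exists_stack_ae_eq hdisj (memLp_planeWave_smul α v 2)
  have hzero : stack a (ofSymbol hdisj hEE B u) =ᵐ[cubeMeasure N h] 0 := by
    rw [hB]
    exact stack_zero
  obtain ⟨z, hz⟩ :=
    ((stack_ofSymbol_of_planeWave hdisj hEE hu B).symm.trans hzero).exists
  have hwave : planeWave h α z ≠ 0 := norm_ne_zero_iff.1 (by rw [norm_planeWave]; exact one_ne_zero)
  rw [(smul_eq_zero.1 hz).resolve_left hwave, Pi.zero_apply, Matrix.zero_mulVec]

end BlockOp

/-- `𝒜 = ∑_{α,i,j} 𝓔_{ij}^α[𝐀_{ij}^α]` is invertible as a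
bounded operator on `L²(Ω → ℂ^M)` iff all the matrices `𝐁_α = ∑_{β⊆α} 𝐀_β`
are invertible; in that case `𝒜⁻¹ = ∑_{α,i,j} 𝓔_{ij}^α[𝐂_{ij}^α]` with
`𝐂_α = ∑_{β⊆α} (−1)^{|α∖β|} 𝐁_β⁻¹`. -/
theorem invertibility_criterion (N M S : ℕ) (hN : 1 ≤ N)
    (hM : 1 ≤ M) (hS : 1 ≤ S) (h : ℝ) (hh : 0 < h) (a : Fin S → Fin N → ℝ)
    (hdisj : ∀ i j : Fin S, i ≠ j → Disjoint (OmegaI a h i) (OmegaI a h j))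
    (EE : Fin S → Fin S → Finset (Fin N) → Matrix (Fin M) (Fin M) ℂ →
      (Lp (V M) 2 (volume.restrict (Omega a h)) →L[ℂ]
        Lp (V M) 2 (volume.restrict (Omega a h))))
    (hEE : ∀ i j α A (u : Lp (V M) 2 (volume.restrict (Omega a h))),
      (EE i j α A u : (Fin N → ℝ) → V M) =ᵐ[volume.restrict (Omega a h)]
        Efun a h i j α A u)
    (coef : Finset (Fin N) → Fin S → Fin S → Matrix (Fin M) (Fin M) ℂ) :
    (IsUnit (bigSum EE coef) ↔
      ∀ α : Finset (Fin N), IsUnit (∑ β ∈ α.powerset, blockM (coef β))) ∧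
    ((∀ α : Finset (Fin N), IsUnit (∑ β ∈ α.powerset, blockM (coef β))) →
      bigSum EE coef * psiOp EE (fun α => (∑ β ∈ α.powerset, blockM (coef β))⁻¹) = 1 ∧
      psiOp EE (fun α => (∑ β ∈ α.powerset, blockM (coef β))⁻¹) * bigSum EE coef = 1) := by
  have : Fact (0 < h) := ⟨hh⟩
  let B (α : Finset (Fin N)) := ∑ β ∈ α.powerset, blockM (coef β)
  have hbig : bigSum EE coef = ofSymbol hdisj hEE B := bigSum_eq_ofSymbol hdisj hEE coef
  have hpsi : psiOp EE (fun α => (B α)⁻¹) = ofSymbol hdisj hEE fun α => (B α)⁻¹ :=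
    psiOp_eq_ofSymbol hdisj hEE _
  rw [hbig, hpsi, isUnit_map_iff_of_injective (ofSymbol_injective hdisj hEE), Pi.isUnit_iff]
  refine ⟨Iff.rfl, fun hB => ?_⟩
  have hdet (α : Finset (Fin N)) : IsUnit (B α).det := (Matrix.isUnit_iff_isUnit_det _).1 (hB α)
  rw [← map_mul, ← map_mul, ← map_one (ofSymbol hdisj hEE)]
  exact ⟨congrArg _ (funext fun α => Matrix.mul_nonsing_inv _ (hdet α)),
    congrArg _ (funext fun α => Matrix.nonsing_inv_mul _ (hdet α))⟩

end Stmt10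
end
end

section
/- Let 𝒜 = ∑_{α⊆{1,...,N}} ∑_{i,j=1}^S 𝓔_{ij}^α[𝐀_{ij}^α] be an element of the C*-algebra 𝔄 of operators on L²(Ω → ℂ^M) generated by the elementary operators, and let 𝐁_α = ∑_{β⊆α} 𝐀_β with 𝐀_α = (𝐀_{ij}^α)_{i,j=1}^S ∈ ℂ^{MS×MS}. Then the operator norm of 𝒜 equals the maximum over all α ⊆ {1,...,N} of the largest singular value of 𝐁_α; that is, ‖𝒜‖_{L²→L²} = max_{α⊆{1,...,N}} ‖𝐁_α‖, where ‖𝐁_α‖ is the operator (spectral) norm of the matrix 𝐁_α on ℂ^{MS}. -/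
/-!
STATEMENT 11: For 𝒜 = ∑_{α,i,j} 𝓔_{ij}^α[𝐀_{ij}^α] with 𝐁_α = ∑_{β⊆α} 𝐀_β,
the operator norm satisfies ‖𝒜‖_{L²→L²} = max_α ‖𝐁_α‖, the matrix norm being
the operator (spectral) norm on ℂ^{MS} (largest singular value).
-/

open MeasureTheory Finset

noncomputable section

namespace Stmt11

/-- `ℂ^M` with its Euclidean (Hilbert) structure. -/
abbrev V (M : ℕ) := EuclideanSpace ℂ (Fin M)

/-- The half-open cube `H = [0,h)^N`. -/
def cube (N : ℕ) (h : ℝ) : Set (Fin N → ℝ) := Set.univ.pi fun _ => Set.Ico 0 h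

/-- `combine α y x` agrees with `y` in the coordinates `n ∈ α` and with `x`
in the coordinates `n ∉ α`. -/
def combine {N : ℕ} (α : Finset (Fin N)) (y x : Fin N → ℝ) : Fin N → ℝ :=
  fun n => if n ∈ α then y n else x n

/-- The shifted cube `Ω_i = a_i + [0,h)^N`. -/
def OmegaI {N S : ℕ} (a : Fin S → Fin N → ℝ) (h : ℝ) (i : Fin S) :
    Set (Fin N → ℝ) := {x | x - a i ∈ cube N h}

/-- `Ω = ⋃_{i=1}^S Ω_i`. -/
def Omega {N S : ℕ} (a : Fin S → Fin N → ℝ) (h : ℝ) : Set (Fin N → ℝ) :=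
  ⋃ i, OmegaI a h i

/-- The pointwise formula for the elementary operator `𝓔_{ij}^α[𝐀]`:
`(𝓔_{ij}^α[𝐀]u)(x + a_i) = h^{−|α|} 𝐀 ∫_{[0,h)^{|α|}} u(x' + a_j) dx'_α` for
`x ∈ H`, and `0` outside `Ω_i`.  Here the partial integral over the coordinates
in `α` is realized as an integral over the whole cube `[0,h)^N` (the integrand
does not depend on the coordinates of `y` outside `α`), compensated by the
additional normalization `h^{−(N−|α|)}`. -/
def Efun {N M S : ℕ} (a : Fin S → Fin N → ℝ) (h : ℝ) (i j : Fin S)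
    (α : Finset (Fin N)) (A : Matrix (Fin M) (Fin M) ℂ)
    (u : (Fin N → ℝ) → V M) : (Fin N → ℝ) → V M :=
  (OmegaI a h i).indicator fun x =>
    ((h ^ α.card)⁻¹ * (h ^ (N - α.card))⁻¹ : ℝ) •
      (show V M from WithLp.toLp 2 (A.mulVec
        (show Fin M → ℂ from ∫ y in cube N h, u (a j + combine α y (x - a i)))))

/-- The operator `∑_{α ⊆ {1,...,N}} ∑_{i,j=1}^S 𝓔_{ij}^α[coef α i j]`. -/
def bigSum {N M S : ℕ} {a : Fin S → Fin N → ℝ} {h : ℝ}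
    (EE : Fin S → Fin S → Finset (Fin N) → Matrix (Fin M) (Fin M) ℂ →
      (Lp (V M) 2 (volume.restrict (Omega a h)) →L[ℂ]
        Lp (V M) 2 (volume.restrict (Omega a h))))
    (coef : Finset (Fin N) → Fin S → Fin S → Matrix (Fin M) (Fin M) ℂ) :
    Lp (V M) 2 (volume.restrict (Omega a h)) →L[ℂ]
      Lp (V M) 2 (volume.restrict (Omega a h)) :=
  ∑ α : Finset (Fin N), ∑ i : Fin S, ∑ j : Fin S, EE i j α (coef α i j)

/-- The block matrix `(𝐀_{ij})_{i,j=1}^S ∈ ℂ^{MS×MS}` built from an `S×S` array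
of `M×M` matrices. -/
def blockM {M S : ℕ} (c : Fin S → Fin S → Matrix (Fin M) (Fin M) ℂ) :
    Matrix (Fin S × Fin M) (Fin S × Fin M) ℂ :=
  Matrix.of fun p q => c p.1 q.1 p.2 q.2

/-- The operator (spectral) norm of a square complex matrix, i.e. its norm as a
linear operator on the Euclidean space, i.e. its largest singular value. -/
def matOpNorm {M S : ℕ} (B : Matrix (Fin S × Fin M) (Fin S × Fin M) ℂ) : ℝ :=
  ‖(Matrix.toEuclideanCLM (𝕜 := ℂ) B :
      EuclideanSpace ℂ (Fin S × Fin M) →L[ℂ] EuclideanSpace ℂ (Fin S × Fin M))‖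

/-!
Collecting the restrictions of `u` to the cells `Ω_i` into one function on `[0,h)^N` with values in
`ℂ^{MS}` turns `𝒜` into `∑_α ρ(𝐀_α) P_α`, where `ρ` is the pointwise action of matrices and `P_α` is
the average over the coordinates in `α`. The `P_α` are self-adjoint, commute with `ρ` and satisfy
`P_α P_β = P_{α∪β}`. Hence the product of two such operators corresponds to the union convolution of
their coefficients, which the zeta transform `𝐀 ↦ 𝐁` turns into the pointwise product. By Möbius
inversion `𝐁 ↦ 𝒜` is therefore a `⋆`-homomorphism from the product of `2^N` matrix algebras, whose
norm is the maximum of the norms of the factors. It is injective: a product of mean zero functions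
of the coordinates outside `α` is fixed by `P_β` if `β ⊆ α` and killed otherwise, so `𝒜` acts on it
through `𝐁_α` alone. An injective `⋆`-homomorphism of C⋆-algebras is isometric.
-/

open IncidenceAlgebra ContinuousLinearMap

lemma pi_norm_eq_iSup {ι E : Type*} [Fintype ι] [SeminormedAddCommGroup E] (f : ι → E) :
    ‖f‖ = ⨆ i, ‖f i‖ :=
  le_antisymm
    ((pi_norm_le_iff_of_nonneg (Real.iSup_nonneg fun i => norm_nonneg (f i))).mpr
      (le_ciSup (Set.finite_range fun i => ‖f i‖).bddAbove))
    (Real.iSup_le (norm_le_pi_norm f) (norm_nonneg f))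

section Homothety

variable {𝕜 F G : Type*} [NontriviallyNormedField 𝕜] [NormedAddCommGroup F] [NormedSpace 𝕜 F]
  [NormedAddCommGroup G] [NormedSpace 𝕜 G]

lemma norm_eq_of_semiconj {U : F → G} {A : F →L[𝕜] F} {B : G →L[𝕜] G} {c : ℝ}
    (hAB : Function.Semiconj U A B) (hU : Function.Surjective U) (hc : 0 < c)
    (hnorm : ∀ u, c * ‖U u‖ = ‖u‖) : ‖A‖ = ‖B‖ := by
  refine le_antisymm (A.opNorm_le_bound (norm_nonneg B) fun u => ?_)
    (B.opNorm_le_bound (norm_nonneg A) (hU.forall.mpr fun u => ?_))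
  · calc ‖A u‖ = c * ‖B (U u)‖ := by rw [← hnorm, hAB.eq]
      _ ≤ c * (‖B‖ * ‖U u‖) := by gcongr; exact B.le_opNorm _
      _ = ‖B‖ * ‖u‖ := by rw [mul_left_comm, hnorm]
  · refine le_of_mul_le_mul_left ?_ hc
    calc c * ‖B (U u)‖ = ‖A u‖ := by rw [← hAB.eq, hnorm]
      _ ≤ ‖A‖ * ‖u‖ := A.le_opNorm u
      _ = c * (‖A‖ * ‖U u‖) := by rw [← hnorm, mul_left_comm]

end Homothety

section L2

variable {X E : Type*} [MeasurableSpace X] [NormedAddCommGroup E]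

lemma memLp_two_restrict_iUnion_iff {ι : Type*} [Finite ι] {μ : Measure X} {s : ι → Set X}
    {f : X → E} :
    MemLp f 2 (μ.restrict (⋃ i, s i)) ↔ ∀ i, MemLp f 2 (μ.restrict (s i)) := by
  refine ⟨fun hf i => hf.mono_measure (Measure.restrict_mono (Set.subset_iUnion s i) le_rfl),
    fun hf => ?_⟩
  rw [memLp_two_iff_integrable_sq_norm (aestronglyMeasurable_iUnion_iff.mpr fun i => (hf i).1)]
  exact integrableOn_finite_iUnion.mpr fun i => (hf i).integrable_norm_pow two_ne_zero

lemma sq_norm_eq_integral (𝕜 : Type*) [RCLike 𝕜] [InnerProductSpace 𝕜 E] {μ : Measure X}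
    (u : Lp E 2 μ) :
    ‖u‖ ^ 2 = ∫ x, ‖u x‖ ^ 2 ∂μ := by
  refine RCLike.ofReal_injective (K := 𝕜) ?_
  rw [RCLike.ofReal_pow, ← inner_self_eq_norm_sq_to_K, L2.inner_def, ← integral_ofReal]
  simp only [inner_self_eq_norm_sq_to_K, RCLike.ofReal_pow]

end L2

section ZetaTransform

variable {ι E : Type*} [PartialOrder ι] [LocallyFiniteOrder ι] [LocallyFiniteOrderBot ι]

lemma sum_Iic_sum_Iic [AddCommMonoid E] (f : ι → ι → E) (α : ι) :
    ∑ β ∈ Iic α, ∑ γ ∈ Iic β, f β γ = ∑ γ ∈ Iic α, ∑ β ∈ Icc γ α, f β γ := by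
  refine sum_comm' fun β γ => ?_
  simp only [mem_Iic, mem_Icc]
  exact ⟨fun h => ⟨⟨h.2, h.1⟩, h.2.trans h.1⟩, fun h => h.1.symm⟩

variable (𝕜 : Type*) [Ring 𝕜] [AddCommGroup E] [Module 𝕜 E] [DecidableEq ι]

/-- The zeta transform `(A_α)_α ↦ (∑_{β ≤ α} A_β)_α` of the families indexed by a poset, inverted by
Möbius inversion. It turns the coefficients `𝐀_α` of an operator into its symbols `𝐁_α`. -/
def zetaTransform : (ι → E) ≃ₗ[𝕜] (ι → E) where
  toFun A α := ∑ β ∈ Iic α, A β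
  invFun B α := ∑ β ∈ Iic α, mu 𝕜 β α • B β
  map_add' A A' := by ext α; simp [sum_add_distrib]
  map_smul' c A := by ext α; simp [smul_sum]
  left_inv A := by
    ext α
    simp only [smul_sum, sum_Iic_sum_Iic, ← sum_smul, sum_Icc_mu_left]
    simp
  right_inv B := by
    ext α
    simp only [sum_Iic_sum_Iic, ← sum_smul, sum_Icc_mu_right]
    simp

lemma zetaTransform_apply (A : ι → E) (α : ι) :
    zetaTransform 𝕜 A α = ∑ β ∈ Iic α, A β := rfl

lemma zetaTransform_single (β α : ι) (X : E) :
    zetaTransform 𝕜 (Pi.single β X) α = if β ∈ Iic α then X else 0 :=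
  sum_pi_single' β X _

lemma zetaTransform_star [StarAddMonoid E] (A : ι → E) :
    zetaTransform 𝕜 (star A) = star (zetaTransform 𝕜 A) := by
  ext α
  simp [zetaTransform_apply]

end ZetaTransform

section SemilatticeAlgebra

variable {ι R B : Type*} [Fintype ι]

/-- The product of the semilattice algebra of `(ι, ⊔)` with coefficients in `R`. -/
def supConvolution [SemilatticeSup ι] [DecidableEq ι] [NonUnitalNonAssocSemiring R]
    (A A' : ι → R) : ι → R :=
  ∑ β, ∑ γ, Pi.single (β ⊔ γ) (A β * A' γ)

lemma zetaTransform_supConvolution [SemilatticeSup ι] [DecidableEq ι] [LocallyFiniteOrder ι]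
    [LocallyFiniteOrderBot ι] (𝕜 : Type*) [Ring 𝕜] [Ring R] [Module 𝕜 R] (A A' : ι → R) :
    zetaTransform 𝕜 (supConvolution A A') = zetaTransform 𝕜 A * zetaTransform 𝕜 A' := by
  have hIic (A : ι → R) (α : ι) : ∑ β ∈ Iic α, A β = ∑ β, if β ∈ Iic α then A β else 0 := by
    rw [sum_ite_mem, univ_inter]
  ext α
  have hsup (β γ : ι) : β ⊔ γ ∈ Iic α ↔ β ∈ Iic α ∧ γ ∈ Iic α := by simp
  simp only [supConvolution, map_sum, Finset.sum_apply, zetaTransform_single, hsup]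
  simp only [Pi.mul_apply, zetaTransform_apply, hIic, sum_mul_sum, ite_zero_mul_ite_zero]

section Representation

variable {𝕜 : Type*} [CommRing 𝕜] [Ring R] [StarRing R] [Algebra 𝕜 R] [Ring B] [StarRing B]
  [Algebra 𝕜 B]

/-- The linear map `A ↦ ∑ α, ρ (A α) * P α`. It represents the semilattice algebra of `ι` when the
`P α` multiply along `⊔` and commute with the range of `ρ`. -/
def semilatticeRep (ρ : R →⋆ₐ[𝕜] B) (P : ι → B) : (ι → R) →ₗ[𝕜] B where
  toFun A := ∑ α, ρ (A α) * P α
  map_add' A A' := by simp [add_mul, sum_add_distrib]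
  map_smul' c A := by simp [smul_sum]

variable (ρ : R →⋆ₐ[𝕜] B) (P : ι → B)

lemma semilatticeRep_apply (A : ι → R) : semilatticeRep ρ P A = ∑ α, ρ (A α) * P α := rfl

lemma semilatticeRep_single [DecidableEq ι] (β : ι) (X : R) :
    semilatticeRep ρ P (Pi.single β X) = ρ X * P β := by
  refine (sum_eq_single β (fun γ _ hγ => ?_) (by simp)).trans (by simp)
  simp [hγ]

variable {ρ P}

lemma semilatticeRep_supConvolution [SemilatticeSup ι] [DecidableEq ι]
    (hmul : ∀ α β, P α * P β = P (α ⊔ β))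
    (hcomm : ∀ X α, Commute (ρ X) (P α)) (A A' : ι → R) :
    semilatticeRep ρ P (supConvolution A A') = semilatticeRep ρ P A * semilatticeRep ρ P A' := by
  simp only [supConvolution, map_sum, semilatticeRep_single]
  simp only [semilatticeRep_apply, sum_mul_sum, map_mul, ← hmul]
  refine sum_congr rfl fun β _ => sum_congr rfl fun γ _ => ?_
  exact (hcomm (A' γ) β).mul_mul_mul_comm _ _

lemma semilatticeRep_star (hsa : ∀ α, IsSelfAdjoint (P α))
    (hcomm : ∀ X α, Commute (ρ X) (P α)) (A : ι → R) :
    semilatticeRep ρ P (star A) = star (semilatticeRep ρ P A) := by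
  simp only [semilatticeRep_apply, star_sum, star_mul, (hsa _).star_eq, ← map_star,
    (hcomm _ _).eq, Pi.star_apply]

end Representation

lemma injective_semilatticeRep {𝕜 K : Type*} [PartialOrder ι] [DecidableEq ι]
    [LocallyFiniteOrder ι] [LocallyFiniteOrderBot ι] [Ring R] [StarRing R] [RCLike 𝕜] [Algebra 𝕜 R]
    [NormedAddCommGroup K] [InnerProductSpace 𝕜 K] [CompleteSpace K]
    {ρ : R →⋆ₐ[𝕜] (K →L[𝕜] K)} {P : ι → K →L[𝕜] K}
    (hP : ∀ α X, X ≠ 0 → ∃ w, ρ X w ≠ 0 ∧ ∀ β, P β w = if β ∈ Iic α then w else 0) :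
    Function.Injective (semilatticeRep ρ P) := by
  rw [injective_iff_map_eq_zero]
  intro A hA
  rw [← (zetaTransform 𝕜).map_eq_zero_iff]
  ext1 α
  by_contra hα
  obtain ⟨w, hw, hPw⟩ := hP α _ hα
  refine hw ?_
  calc ρ (zetaTransform 𝕜 A α) w = semilatticeRep ρ P A w := by
        rw [zetaTransform_apply, map_sum, semilatticeRep_apply]
        simp only [_root_.sum_apply, mul_apply_eq_comp, hPw, apply_ite, map_zero,
          sum_ite_mem, univ_inter]
    _ = 0 := by rw [hA, _root_.zero_apply]
lemma norm_semilatticeRep [SemilatticeSup ι] [DecidableEq ι] [LocallyFiniteOrder ι]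
    [LocallyFiniteOrderBot ι] [CStarAlgebra R] [CStarAlgebra B] {ρ : R →⋆ₐ[ℂ] B} {P : ι → B}
    (hmul : ∀ α β, P α * P β = P (α ⊔ β)) (hsa : ∀ α, IsSelfAdjoint (P α))
    (hcomm : ∀ X α, Commute (ρ X) (P α)) (hinj : Function.Injective (semilatticeRep ρ P))
    (A : ι → R) :
    ‖semilatticeRep ρ P A‖ = ‖zetaTransform ℂ A‖ := by
  have hsurj := (zetaTransform ℂ (ι := ι) (E := R)).surjective
  let Φ : (ι → R) →⋆ₙₐ[ℂ] B :=
    { semilatticeRep ρ P ∘ₗ (zetaTransform ℂ).symm.toLinearMap with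
      map_zero' := by simp
      map_mul' := hsurj.forall₂.mpr fun A A' => by
        simp [← zetaTransform_supConvolution, semilatticeRep_supConvolution hmul hcomm]
      map_star' := hsurj.forall.mpr fun A => by
        simp [← zetaTransform_star, semilatticeRep_star hsa hcomm] }
  have hΦ : Function.Injective Φ := hinj.comp (zetaTransform ℂ).symm.injective
  calc ‖semilatticeRep ρ P A‖ = ‖Φ (zetaTransform ℂ A)‖ := by simp [Φ]
    _ = ‖zetaTransform ℂ A‖ := NonUnitalStarAlgHom.norm_map Φ hΦ _

end SemilatticeAlgebra

section FibreIntegral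

variable {𝕜 X Y E : Type*} [RCLike 𝕜] [MeasurableSpace X] [MeasurableSpace Y]
  [NormedAddCommGroup E] [InnerProductSpace 𝕜 E] [CompleteSpace E] [NormedSpace ℝ E]

lemma adjoint_compMeasurePreserving_fst_ae_eq {μ : Measure X} {ν : Measure Y} [IsFiniteMeasure μ]
    [IsProbabilityMeasure ν] (w : Lp E 2 (μ.prod ν)) :
    adjoint (Lp.compMeasurePreservingₗᵢ 𝕜 (E := E) (p := 2) Prod.fst
        (measurePreserving_fst (μ := μ) (ν := ν))).toContinuousLinearMap w
      =ᵐ[μ] fun x => ∫ y, w (x, y) ∂ν := by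
  have hw : Integrable w (μ.prod ν) := (Lp.memLp w).integrable one_le_two
  refine Integrable.ae_eq_of_forall_setIntegral_eq _ _ ((Lp.memLp _).integrable one_le_two)
    hw.integral_prod_left fun s hs hμs => ext_inner_left 𝕜 fun c => ?_
  rw [← L2.inner_indicatorConstLp_eq_inner_setIntegral 𝕜 hs hμs.ne, adjoint_inner_right]
  change inner 𝕜 (Lp.compMeasurePreserving Prod.fst measurePreserving_fst _) w = _
  rw [Lp.indicatorConstLp_compMeasurePreserving,
    L2.inner_indicatorConstLp_eq_inner_setIntegral, ← Set.prod_univ,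
    setIntegral_prod _ hw.integrableOn]
  simp only [Measure.restrict_univ]

end FibreIntegral

section Exchange

variable {κ X : Type*} [DecidableEq κ]

/-- Exchange of the coordinates in `α` between two points. -/
def exchange (α : Finset κ) (p : (κ → X) × (κ → X)) : (κ → X) × (κ → X) :=
  (α.piecewise p.2 p.1, α.piecewise p.1 p.2)

lemma exchange_exchange (α : Finset κ) (p : (κ → X) × (κ → X)) :
    exchange α (exchange α p) = p := by
  ext n <;> by_cases hn : n ∈ α <;> simp [exchange, hn]

lemma piecewise_union_piecewise (α β : Finset κ) (x y z : κ → X) :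
    (α ∪ β).piecewise (β.piecewise z y) x = β.piecewise z (α.piecewise y x) := by
  ext n
  by_cases hα : n ∈ α <;> by_cases hβ : n ∈ β <;> simp [hα, hβ]

variable [Fintype κ] [MeasurableSpace X] (μ : κ → Measure X) [∀ n, SigmaFinite (μ n)]

lemma measurePreserving_exchange (α : Finset κ) :
    MeasurePreserving (exchange α) ((Measure.pi μ).prod (Measure.pi μ))
      ((Measure.pi μ).prod (Measure.pi μ)) := by
  let s : κ → X × X → X × X := fun n => if n ∈ α then Prod.swap else id
  have hs : ∀ n, MeasurePreserving (s n) ((μ n).prod (μ n)) ((μ n).prod (μ n)) := by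
    intro n
    by_cases hn : n ∈ α
    · simpa [s, hn] using Measure.measurePreserving_swap
    · simpa [s, hn] using MeasurePreserving.id _
  have e := measurePreserving_arrowProdEquivProdArrow X X κ μ μ
  convert (e.comp (measurePreserving_pi _ _ hs)).comp (e.symm _) using 1
  funext p
  ext n <;> by_cases hn : n ∈ α <;>
    simp [exchange, s, hn, MeasurableEquiv.arrowProdEquivProdArrow, Equiv.arrowProdEquivProdArrow]

end Exchange

section CoordAverage

variable {κ X E : Type*} (𝕜 : Type*) [DecidableEq κ] [Fintype κ] [MeasurableSpace X]
  (μ : κ → Measure X) [∀ n, IsProbabilityMeasure (μ n)] [NormedAddCommGroup E]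

lemma measurePreserving_piecewise (α : Finset κ) :
    MeasurePreserving (fun p : (κ → X) × (κ → X) => α.piecewise p.2 p.1)
      ((Measure.pi μ).prod (Measure.pi μ)) (Measure.pi μ) :=
  measurePreserving_fst.comp (measurePreserving_exchange μ α)

variable {μ}

lemma ae_ae_piecewise (α : Finset κ) {p : (κ → X) → Prop} (hp : ∀ᵐ x ∂Measure.pi μ, p x) :
    ∀ᵐ x ∂Measure.pi μ, ∀ᵐ y ∂Measure.pi μ, p (α.piecewise y x) :=
  Measure.ae_ae_of_ae_prod ((measurePreserving_piecewise μ α).quasiMeasurePreserving.ae hp)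

lemma integrable_prod_piecewise (α : Finset κ) {f : (κ → X) → E}
    (hf : Integrable f (Measure.pi μ)) :
    Integrable (fun p : (κ → X) × (κ → X) => f (α.piecewise p.2 p.1))
      ((Measure.pi μ).prod (Measure.pi μ)) :=
  (measurePreserving_piecewise μ α).integrable_comp_of_integrable hf

lemma ae_integrable_piecewise (α : Finset κ) {f : (κ → X) → E}
    (hf : Integrable f (Measure.pi μ)) :
    ∀ᵐ x ∂Measure.pi μ, Integrable (fun y => f (α.piecewise y x)) (Measure.pi μ) :=
  (integrable_prod_piecewise α hf).prod_right_ae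

lemma integral_integral_piecewise [NormedSpace ℝ E] (α : Finset κ) {f : (κ → X) → E}
    (hf : Integrable f (Measure.pi μ)) :
    ∫ x, ∫ y, f (α.piecewise y x) ∂Measure.pi μ ∂Measure.pi μ = ∫ x, f x ∂Measure.pi μ := by
  have hmp := measurePreserving_piecewise μ α
  rw [integral_integral (f := fun x y => f (α.piecewise y x)) (integrable_prod_piecewise α hf),
    ← integral_map hmp.aemeasurable (hmp.map_eq.symm ▸ hf.1), hmp.map_eq]

variable [RCLike 𝕜] [InnerProductSpace 𝕜 E] [CompleteSpace E]

variable (μ) in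
/-- The average over the coordinates in `α`, as the operator
`(coordAverage 𝕜 μ α u) x = ∫ y, u (α.piecewise y x)` on `L²` of the product measure. It is encoded
as the pullback along `(x, y) ↦ α.piecewise y x` followed by the adjoint of the pullback along
`(x, y) ↦ x`, which integrates out `y`. -/
def coordAverage (α : Finset κ) : Lp E 2 (Measure.pi μ) →L[𝕜] Lp E 2 (Measure.pi μ) :=
  adjoint (Lp.compMeasurePreservingₗᵢ 𝕜 Prod.fst
      (measurePreserving_fst (ν := Measure.pi μ))).toContinuousLinearMap ∘L
    (Lp.compMeasurePreservingₗᵢ 𝕜 _ (measurePreserving_piecewise μ α)).toContinuousLinearMap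

/-- `coordAverage` is `J⋆ J'` for the pullbacks `J`, `J'` along `(x, y) ↦ x` and
`(x, y) ↦ α.piecewise y x`, and these are swapped by the isometry `W` which exchanges the
coordinates in `α`. -/
lemma isSelfAdjoint_coordAverage (α : Finset κ) :
    IsSelfAdjoint (coordAverage (E := E) 𝕜 μ α) := by
  have hex := measurePreserving_exchange μ α
  let W := Lp.compMeasurePreservingₗᵢ 𝕜 (E := E) (p := 2) _ hex
  let J := Lp.compMeasurePreservingₗᵢ 𝕜 (E := E) (p := 2) Prod.fst
    (measurePreserving_fst (μ := Measure.pi μ) (ν := Measure.pi μ))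
  let J' := Lp.compMeasurePreservingₗᵢ 𝕜 (E := E) (p := 2) _ (measurePreserving_piecewise μ α)
  have hJ (u : Lp E 2 (Measure.pi μ)) : W (J u) = J' u :=
    (Lp.compMeasurePreserving_comp_apply u measurePreserving_fst hex).symm
  have hJ' (u : Lp E 2 (Measure.pi μ)) : W (J' u) = J u := by
    have hfst : (fun p => α.piecewise p.2 p.1) ∘ exchange α = (Prod.fst : (κ → X) × (κ → X) → _) :=
      funext fun p => congrArg Prod.fst (exchange_exchange α p)
    refine (Lp.compMeasurePreserving_comp_apply u (measurePreserving_piecewise μ α)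
      hex).symm.trans ?_
    simp only [hfst]
    rfl
  rw [isSelfAdjoint_iff', eq_comm, eq_adjoint_iff]
  intro u v
  calc inner 𝕜 (coordAverage 𝕜 μ α u) v = inner 𝕜 (J' u) (J v) :=
        adjoint_inner_left J.toContinuousLinearMap v (J' u)
    _ = inner 𝕜 (J u) (J' v) := by rw [← W.inner_map_map, hJ, hJ']
    _ = inner 𝕜 u (coordAverage 𝕜 μ α v) :=
        (adjoint_inner_right J.toContinuousLinearMap u (J' v)).symm

variable [NormedSpace ℝ E]

lemma coordAverage_ae_eq (α : Finset κ) (u : Lp E 2 (Measure.pi μ)) :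
    coordAverage 𝕜 μ α u =ᵐ[Measure.pi μ]
      fun x => ∫ y, u (α.piecewise y x) ∂Measure.pi μ := by
  have hu := Measure.ae_ae_of_ae_prod
    (Lp.coeFn_compMeasurePreserving u (measurePreserving_piecewise μ α))
  filter_upwards [hu, adjoint_compMeasurePreserving_fst_ae_eq (𝕜 := 𝕜)
    (Lp.compMeasurePreserving _ (measurePreserving_piecewise μ α) u)] with x hx hadj
  exact hadj.trans (integral_congr_ae hx)

lemma coordAverage_mul (α β : Finset κ) :
    coordAverage (E := E) 𝕜 μ α * coordAverage 𝕜 μ β = coordAverage 𝕜 μ (α ∪ β) := by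
  ext1 u
  refine Lp.ext ?_
  have hu : Integrable u (Measure.pi μ) := (Lp.memLp u).integrable one_le_two
  filter_upwards [coordAverage_ae_eq 𝕜 α (coordAverage 𝕜 μ β u),
    ae_ae_piecewise α (coordAverage_ae_eq 𝕜 β u), coordAverage_ae_eq 𝕜 (α ∪ β) u,
    ae_integrable_piecewise (α ∪ β) hu] with x hα hβ hαβ hint
  calc coordAverage 𝕜 μ α (coordAverage 𝕜 μ β u) x
      = ∫ y, ∫ z, u (β.piecewise z (α.piecewise y x)) ∂Measure.pi μ ∂Measure.pi μ :=
        hα.trans (integral_congr_ae hβ)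
    _ = ∫ y, ∫ z, u ((α ∪ β).piecewise (β.piecewise z y) x) ∂Measure.pi μ ∂Measure.pi μ := by
        simp only [piecewise_union_piecewise]
    _ = ∫ y, u ((α ∪ β).piecewise y x) ∂Measure.pi μ :=
        integral_integral_piecewise β hint
    _ = coordAverage 𝕜 μ (α ∪ β) u x := hαβ.symm

end CoordAverage

section CompLp

variable {𝕜 X E : Type*} [RCLike 𝕜] [MeasurableSpace X] [NormedAddCommGroup E]
  [InnerProductSpace 𝕜 E] [CompleteSpace E]

lemma star_compLpL (μ : Measure X) (T : E →L[𝕜] E) :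
    star (T.compLpL 2 μ) = (star T).compLpL 2 μ := by
  rw [star_eq_adjoint, eq_comm, eq_adjoint_iff]
  intro u v
  rw [L2.inner_def, L2.inner_def]
  refine integral_congr_ae ?_
  filter_upwards [(star T).coeFn_compLpL u, T.coeFn_compLpL v] with x hu hv
  rw [hu, hv, star_eq_adjoint, adjoint_inner_left]

variable (𝕜 E) in
/-- The `⋆`-homomorphism which lets the bounded operators of `E` act pointwise on `L²(μ; E)`. -/
def compLpStarAlgHom (μ : Measure X) : (E →L[𝕜] E) →⋆ₐ[𝕜] (Lp E 2 μ →L[𝕜] Lp E 2 μ) where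
  toFun T := T.compLpL 2 μ
  map_one' := by
    ext1 u
    refine Lp.ext ?_
    filter_upwards [(1 : E →L[𝕜] E).coeFn_compLpL u] with x hx using hx
  map_mul' T T' := by
    ext1 u
    refine Lp.ext ?_
    filter_upwards [(T * T').coeFn_compLpL u, T.coeFn_compLpL (T'.compLpL 2 μ u),
      T'.coeFn_compLpL u] with x hmul hT hT'
    rw [hmul, mul_apply_eq_comp, mul_apply_eq_comp, hT, hT']
  map_zero' := by
    ext1 u
    refine Lp.ext ?_
    filter_upwards [(0 : E →L[𝕜] E).coeFn_compLpL u, Lp.coeFn_zero E 2 μ] with x hx h0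
    simpa [hx] using h0.symm
  map_add' T T' := T.add_compLpL T'
  commutes' c := by
    ext1 u
    refine Lp.ext ?_
    filter_upwards [(algebraMap 𝕜 (E →L[𝕜] E) c).coeFn_compLpL u, Lp.coeFn_smul c u]
      with x hx hc
    exact hx.trans hc.symm
  map_star' T := (star_compLpL μ T).symm

lemma compLpStarAlgHom_ae_eq {μ : Measure X} (T : E →L[𝕜] E) (u : Lp E 2 μ) :
    compLpStarAlgHom 𝕜 E μ T u =ᵐ[μ] fun x => T (u x) := T.coeFn_compLpL u

variable {κ : Type*} [DecidableEq κ] [Fintype κ] {μ : κ → Measure X}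
  [∀ n, IsProbabilityMeasure (μ n)] [NormedSpace ℝ E]

lemma commute_compLpStarAlgHom_coordAverage (T : E →L[𝕜] E) (α : Finset κ) :
    Commute (compLpStarAlgHom 𝕜 E (Measure.pi μ) T) (coordAverage 𝕜 μ α) := by
  ext1 u
  refine Lp.ext ?_
  have hu : Integrable u (Measure.pi μ) := (Lp.memLp u).integrable one_le_two
  filter_upwards [compLpStarAlgHom_ae_eq T (coordAverage 𝕜 μ α u), coordAverage_ae_eq 𝕜 α u,
    coordAverage_ae_eq 𝕜 α (compLpStarAlgHom 𝕜 E _ T u),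
    ae_ae_piecewise α (compLpStarAlgHom_ae_eq T u), ae_integrable_piecewise α hu]
    with x hTP hP hPT hT hint
  rw [mul_apply_eq_comp, mul_apply_eq_comp, hTP, hP, hPT, integral_congr_ae hT,
    T.integral_comp_comm hint]

end CompLp

section Wave

lemma exists_measurable_ne_zero_integral_eq_zero {X : Type*} [MeasurableSpace X] (μ : Measure X)
    [IsProbabilityMeasure μ] (hμ : ∃ s, MeasurableSet s ∧ μ s ≠ 0 ∧ μ s ≠ 1) :
    ∃ φ : X → ℝ, Measurable φ ∧ (∀ t, |φ t| ≤ 1) ∧ (∀ t, φ t ≠ 0) ∧ ∫ t, φ t ∂μ = 0 := by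
  obtain ⟨s, hs, hs0, hs1⟩ := hμ
  have h0 : 0 < μ.real s := ENNReal.toReal_pos hs0 (measure_ne_top μ s)
  have h1 : μ.real s < 1 := measureReal_le_one.lt_of_ne fun h => hs1 <| by
    rw [← ofReal_measureReal, h, ENNReal.ofReal_one]
  have hmeas : Measurable (s.indicator 1 : X → ℝ) := measurable_one.indicator hs
  have hint : Integrable (s.indicator 1 : X → ℝ) μ := (integrable_const 1).indicator hs
  refine ⟨fun t => s.indicator 1 t - μ.real s, hmeas.sub_const _, fun t => ?_, fun t => ?_, ?_⟩
  · by_cases ht : t ∈ s <;>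
      simp only [ht, Set.indicator_of_mem, Set.indicator_of_notMem, not_false_eq_true,
        Pi.one_apply, abs_le] <;>
      constructor <;> linarith
  · by_cases ht : t ∈ s <;> simp [ht] <;> linarith
  · rw [integral_sub hint (integrable_const _), integral_indicator_one hs]
    simp

variable {κ X : Type*} [Fintype κ] [DecidableEq κ]

/-- The product of the factors `φ n (x n)` over the coordinates `n ∉ α`. With mean zero factors, the
averages over the coordinates in `β` fix it for `β ⊆ α` and kill it otherwise. -/
def wave (φ : κ → X → ℝ) (α : Finset κ) (x : κ → X) : ℝ :=
  ∏ n, if n ∈ α then 1 else φ n (x n)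

variable {φ : κ → X → ℝ}

lemma wave_ne_zero (hφ : ∀ n t, φ n t ≠ 0) (α : Finset κ) (x : κ → X) : wave φ α x ≠ 0 :=
  prod_ne_zero_iff.mpr fun n _ => by split_ifs <;> simp [hφ]

lemma abs_wave_le_one (hφ : ∀ n t, |φ n t| ≤ 1) (α : Finset κ) (x : κ → X) :
    |wave φ α x| ≤ 1 := by
  rw [wave, abs_prod]
  exact prod_le_one (fun n _ => abs_nonneg _) fun n _ => by split_ifs <;> simp [hφ]

variable [MeasurableSpace X]

lemma measurable_wave (hφ : ∀ n, Measurable (φ n)) (α : Finset κ) : Measurable (wave φ α) := by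
  refine Finset.measurable_prod _ fun n _ => ?_
  split_ifs
  · exact measurable_const
  · exact (hφ n).comp (measurable_pi_apply n)

lemma integral_wave_piecewise {μ : κ → Measure X} [∀ n, IsProbabilityMeasure (μ n)]
    (hφ : ∀ n, ∫ t, φ n t ∂μ n = 0) (α β : Finset κ) (x : κ → X) :
    ∫ y, wave φ α (β.piecewise y x) ∂Measure.pi μ = if β ⊆ α then wave φ α x else 0 := by
  let g (n : κ) (t : X) : ℝ := if n ∈ α then 1 else if n ∈ β then φ n t else φ n (x n)
  have hg : ∀ y, wave φ α (β.piecewise y x) = ∏ n, g n (y n) := fun y =>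
    prod_congr rfl fun n _ => by by_cases hn : n ∈ β <;> simp [g, hn]
  simp only [hg, integral_fintype_prod_eq_prod]
  split_ifs with hβ
  · refine prod_congr rfl fun n _ => ?_
    by_cases hα : n ∈ α
    · simp [g, hα]
    · simp [g, hα, mt (@hβ n) hα]
  · obtain ⟨m, hmβ, hmα⟩ := not_subset.mp hβ
    exact prod_eq_zero (mem_univ m) (by simpa [g, hmα, hmβ] using hφ m)

end Wave

section AveragingAlgebra

variable {κ X E : Type*} [DecidableEq κ] [Fintype κ] [MeasurableSpace X] (μ : κ → Measure X)
  [∀ n, IsProbabilityMeasure (μ n)] [NormedAddCommGroup E] [CompleteSpace E]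

lemma exists_compLp_ne_zero_and_coordAverage_eq {𝕜 : Type*} [RCLike 𝕜] [InnerProductSpace 𝕜 E]
    [NormedSpace ℝ E]
    (hμ : ∀ n, ∃ s, MeasurableSet s ∧ μ n s ≠ 0 ∧ μ n s ≠ 1) (α : Finset κ) {T : E →L[𝕜] E}
    (hT : T ≠ 0) :
    ∃ w, compLpStarAlgHom 𝕜 E (Measure.pi μ) T w ≠ 0 ∧
      ∀ β, coordAverage 𝕜 μ β w = if β ∈ Iic α then w else 0 := by
  choose φ hφm hφ1 hφ0 hφint using fun n => exists_measurable_ne_zero_integral_eq_zero (μ n) (hμ n)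
  obtain ⟨v, hv⟩ := DFunLike.ne_iff.mp hT
  have hmem : MemLp (fun x => wave φ α x • v) 2 (Measure.pi μ) :=
    .of_bound ((measurable_wave hφm α).aestronglyMeasurable.smul_const v) ‖v‖ <|
      ae_of_all _ fun x => by
        rw [norm_smul]
        exact mul_le_of_le_one_left (norm_nonneg v) (abs_wave_le_one hφ1 α x)
  refine ⟨hmem.toLp _, fun h0 => ?_, fun β => Lp.ext ?_⟩
  · obtain ⟨x, hTx, hx, h0x⟩ := ((compLpStarAlgHom_ae_eq T (hmem.toLp _)).and
      (hmem.coeFn_toLp.and (h0 ▸ Lp.coeFn_zero E 2 (Measure.pi μ)))).exists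
    simp only [hTx, hx, map_real_smul T T.continuous] at h0x
    exact smul_ne_zero (wave_ne_zero hφ0 α x) hv h0x
  · filter_upwards [coordAverage_ae_eq 𝕜 β (hmem.toLp _), hmem.coeFn_toLp,
      ae_ae_piecewise β hmem.coeFn_toLp, Lp.coeFn_zero E 2 (Measure.pi μ)] with x hP hx hpw h0
    rw [hP, integral_congr_ae hpw, integral_smul_const, integral_wave_piecewise hφint]
    simp only [mem_Iic]
    split_ifs
    · exact hx.symm
    · rw [zero_smul, h0, Pi.zero_apply]

theorem norm_sum_compLp_mul_coordAverage [InnerProductSpace ℂ E]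
    (hμ : ∀ n, ∃ s, MeasurableSet s ∧ μ n s ≠ 0 ∧ μ n s ≠ 1) (A : Finset κ → E →L[ℂ] E) :
    ‖∑ α, compLpStarAlgHom ℂ E (Measure.pi μ) (A α) * coordAverage ℂ μ α‖ =
      ⨆ α : Finset κ, ‖∑ β ∈ α.powerset, A β‖ := by
  have hinj : Function.Injective
      (semilatticeRep (compLpStarAlgHom ℂ E (Measure.pi μ)) (coordAverage ℂ μ)) :=
    injective_semilatticeRep fun α T => exists_compLp_ne_zero_and_coordAverage_eq μ hμ α
  have hnorm := norm_semilatticeRep (ρ := compLpStarAlgHom ℂ E (Measure.pi μ))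
    (P := coordAverage ℂ μ) (fun α β => by rw [sup_eq_union, coordAverage_mul])
    (isSelfAdjoint_coordAverage ℂ) commute_compLpStarAlgHom_coordAverage hinj A
  rw [semilatticeRep_apply, pi_norm_eq_iSup] at hnorm
  rw [hnorm]
  simp only [zetaTransform_apply, Iic_eq_powerset]

end AveragingAlgebra

section CubeMeasure

variable {N : ℕ} {h : ℝ}

/-- The uniform probability measure of the interval `[0,h)`. -/
def uniformIco (h : ℝ) : Measure ℝ := ProbabilityTheory.cond volume (Set.Ico 0 h)

/-- The uniform probability measure of the cube `[0,h)^N`, as a product measure. -/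
abbrev uniformCube (N : ℕ) (h : ℝ) : Measure (Fin N → ℝ) := Measure.pi fun _ => uniformIco h

lemma uniformIco_apply (s : Set ℝ) :
    uniformIco h s = (ENNReal.ofReal h)⁻¹ * volume.restrict (Set.Ico 0 h) s := by
  rw [uniformIco, ProbabilityTheory.cond, Measure.smul_apply, smul_eq_mul, Real.volume_Ico,
    sub_zero]

instance isProbabilityMeasure_uniformIco [hh : Fact (0 < h)] :
    IsProbabilityMeasure (uniformIco h) :=
  ProbabilityTheory.cond_isProbabilityMeasure_of_finite (by simpa using hh.out) (by simp)

lemma measurableSet_cube : MeasurableSet (cube N h) :=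
  MeasurableSet.univ_pi fun _ => measurableSet_Ico

variable [hh : Fact (0 < h)]

lemma exists_uniformIco_ne_zero_ne_one :
    ∃ s, MeasurableSet s ∧ uniformIco h s ≠ 0 ∧ uniformIco h s ≠ 1 := by
  have hh' := hh.out
  have hhalf : uniformIco h (Set.Ico 0 (h / 2)) = ENNReal.ofReal (1 / 2) := by
    rw [uniformIco_apply, Measure.restrict_apply measurableSet_Ico,
      Set.inter_eq_left.mpr (Set.Ico_subset_Ico_right (by linarith)), Real.volume_Ico,
      ← ENNReal.ofReal_inv_of_pos hh', ← ENNReal.ofReal_mul (by positivity)]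
    congr 1
    field_simp
    simp
  refine ⟨Set.Ico 0 (h / 2), measurableSet_Ico, ?_, ?_⟩ <;> rw [hhalf]
  · simp
  · simp

lemma volume_restrict_cube :
    volume.restrict (cube N h) = ENNReal.ofReal (h ^ N) • uniformCube N h := by
  rw [cube, volume_pi, Measure.restrict_pi_pi]
  refine Measure.pi_eq fun s _ => ?_
  have hvol (n : Fin N) : volume.restrict (Set.Ico 0 h) (s n) =
      ENNReal.ofReal h * uniformIco h (s n) := by
    rw [uniformIco_apply,
      ENNReal.mul_inv_cancel_left (by simpa using hh.out) ENNReal.ofReal_ne_top]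
  simp [hvol, prod_mul_distrib, ENNReal.ofReal_pow hh.out.le]

lemma ae_uniformCube_iff {p : (Fin N → ℝ) → Prop} :
    (∀ᵐ x ∂uniformCube N h, p x) ↔ ∀ᵐ x ∂volume.restrict (cube N h), p x := by
  rw [volume_restrict_cube, Measure.ae_ennreal_smul_measure_iff]
  simpa using pow_pos hh.out N

lemma memLp_uniformCube_iff {E : Type*} [NormedAddCommGroup E] {f : (Fin N → ℝ) → E} :
    MemLp f 2 (uniformCube N h) ↔ MemLp f 2 (volume.restrict (cube N h)) := by
  have hc : ENNReal.ofReal (h ^ N) ≠ 0 := by simpa using pow_pos hh.out N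
  rw [volume_restrict_cube]
  refine ⟨fun hf => hf.smul_measure ENNReal.ofReal_ne_top, fun hf => ?_⟩
  simpa [smul_smul, ENNReal.inv_mul_cancel hc ENNReal.ofReal_ne_top] using
    hf.smul_measure (ENNReal.inv_ne_top.mpr hc)

lemma setIntegral_cube {E : Type*} [NormedAddCommGroup E] [NormedSpace ℝ E]
    (f : (Fin N → ℝ) → E) :
    ∫ x in cube N h, f x = h ^ N • ∫ x, f x ∂uniformCube N h := by
  rw [volume_restrict_cube, integral_smul_measure, ENNReal.toReal_ofReal (pow_pos hh.out N).le]

end CubeMeasure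

section Translates

variable {N S : ℕ} {h : ℝ} {a : Fin S → Fin N → ℝ}

lemma measurableSet_OmegaI (i : Fin S) : MeasurableSet (OmegaI a h i) :=
  measurableSet_cube.preimage (measurable_id.sub_const (a i))

lemma measurePreserving_translate (i : Fin S) :
    MeasurePreserving (a i + ·) (volume.restrict (cube N h))
      (volume.restrict (OmegaI a h i)) := by
  have hcube : (a i + ·) ⁻¹' OmegaI a h i = cube N h := by
    ext x
    simp [OmegaI]
  simpa only [hcube] using (measurePreserving_add_left volume (a i)).restrict_preimage
    (measurableSet_OmegaI (a := a) (h := h) i)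

lemma ae_restrict_Omega_iff {p : (Fin N → ℝ) → Prop} :
    (∀ᵐ x ∂volume.restrict (Omega a h), p x) ↔
      ∀ i, ∀ᵐ x ∂volume.restrict (cube N h), p (a i + x) := by
  rw [Omega, ae_restrict_iUnion_iff]
  refine forall_congr' fun i => ?_
  rw [← (measurePreserving_translate i).map_eq,
    (measurableEmbedding_addLeft (a i)).ae_map_iff]

variable {E : Type*} [NormedAddCommGroup E]

lemma memLp_restrict_Omega_iff {u : (Fin N → ℝ) → E} :
    MemLp u 2 (volume.restrict (Omega a h)) ↔
      ∀ i, MemLp (fun x => u (a i + x)) 2 (volume.restrict (cube N h)) := by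
  rw [Omega, memLp_two_restrict_iUnion_iff]
  refine forall_congr' fun i => ?_
  rw [← (measurePreserving_translate i).map_eq,
    (measurableEmbedding_addLeft (a i)).memLp_map_measure_iff]
  rfl

lemma setIntegral_Omega [NormedSpace ℝ E] (hdisj : Pairwise (Function.onFun Disjoint (OmegaI a h)))
    {f : (Fin N → ℝ) → E} (hf : IntegrableOn f (Omega a h)) :
    ∫ x in Omega a h, f x = ∑ i, ∫ x in cube N h, f (a i + x) := by
  rw [Omega, integral_iUnion_fintype measurableSet_OmegaI hdisj
    (fun i => hf.mono_set (Set.subset_iUnion _ i))]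
  exact sum_congr rfl fun i _ =>
    ((measurePreserving_translate i).integral_comp (measurableEmbedding_addLeft (a i)) f).symm

end Translates

section Cells

variable {N M S : ℕ} {h : ℝ} {a : Fin S → Fin N → ℝ}

/-- The restrictions `u (a_i + ·)` of a function `u` to the cells `Ω_i`, collected into a single
function on the cube `[0,h)^N` with values in `ℂ^{MS}`. -/
def cells (a : Fin S → Fin N → ℝ) (u : (Fin N → ℝ) → V M) (x : Fin N → ℝ) :
    EuclideanSpace ℂ (Fin S × Fin M) :=
  WithLp.toLp 2 fun p => u (a p.1 + x) p.2

lemma cells_apply (u : (Fin N → ℝ) → V M) (x : Fin N → ℝ) (p : Fin S × Fin M) :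
    cells a u x p = u (a p.1 + x) p.2 := rfl

lemma sq_norm_cells (u : (Fin N → ℝ) → V M) (x : Fin N → ℝ) :
    ‖cells a u x‖ ^ 2 = ∑ i, ‖u (a i + x)‖ ^ 2 := by
  simp only [EuclideanSpace.norm_sq_eq, Fintype.sum_prod_type, cells_apply]

lemma cells_sum {ι : Type*} (s : Finset ι) (u : ι → (Fin N → ℝ) → V M) (x : Fin N → ℝ) :
    cells a (fun z => ∑ k ∈ s, u k z) x = ∑ k ∈ s, cells a (u k) x := by
  ext p
  simp [cells_apply]

lemma memLp_cells_iff [Fact (0 < h)] {u : (Fin N → ℝ) → V M} :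
    MemLp (cells a u) 2 (uniformCube N h) ↔ MemLp u 2 (volume.restrict (Omega a h)) := by
  simp only [memLp_restrict_Omega_iff, memLp_uniformCube_iff, memLp_piLp_iff, cells_apply]
  exact Prod.forall.trans forall_comm

lemma ae_eq_restrict_Omega_iff_cells [Fact (0 < h)] {u v : (Fin N → ℝ) → V M} :
    u =ᵐ[volume.restrict (Omega a h)] v ↔ cells a u =ᵐ[uniformCube N h] cells a v := by
  simp only [Filter.EventuallyEq, ae_restrict_Omega_iff, ae_uniformCube_iff, ← ae_all_iff]
  refine Filter.eventually_congr (.of_forall fun x => ?_)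
  simp only [PiLp.ext_iff, Prod.forall, cells_apply]

lemma exists_cells_eqOn (hdisj : Pairwise (Function.onFun Disjoint (OmegaI a h)))
    (g : (Fin N → ℝ) → EuclideanSpace ℂ (Fin S × Fin M)) :
    ∃ u, Set.EqOn (cells a u) g (cube N h) := by
  refine ⟨fun y => ∑ i, (OmegaI a h i).indicator
    (fun z => WithLp.toLp 2 fun m => g (z - a i) (i, m)) y, fun x hx => ?_⟩
  ext ⟨k, m⟩
  have hk : a k + x ∈ OmegaI a h k := by simpa [OmegaI] using hx
  rw [cells_apply, sum_eq_single k]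
  · simp [hk]
  · exact fun i _ hik => Set.indicator_of_notMem (Set.disjoint_right.mp (hdisj hik) hk) _
  · simp

variable [hh : Fact (0 < h)]

/-- The restriction `cells` to the translates of the cube, as a map of `L²` spaces. It multiplies
norms by `h^{-N/2}`. -/
def cellsLp (u : Lp (V M) 2 (volume.restrict (Omega a h))) :
    Lp (EuclideanSpace ℂ (Fin S × Fin M)) 2 (uniformCube N h) :=
  (memLp_cells_iff.mpr (Lp.memLp u)).toLp (cells a u)

lemma cellsLp_ae_eq (u : Lp (V M) 2 (volume.restrict (Omega a h))) :
    cellsLp u =ᵐ[uniformCube N h] cells a u := MemLp.coeFn_toLp _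

lemma cellsLp_surjective (hdisj : Pairwise (Function.onFun Disjoint (OmegaI a h))) :
    Function.Surjective (cellsLp : Lp (V M) 2 (volume.restrict (Omega a h)) → _) := by
  intro g
  obtain ⟨u, hu⟩ := exists_cells_eqOn hdisj g
  have hug : cells a u =ᵐ[uniformCube N h] g :=
    ae_uniformCube_iff.mpr <| (ae_restrict_mem measurableSet_cube).mono hu
  have hmem := memLp_cells_iff.mp ((memLp_congr_ae hug).mpr (Lp.memLp g))
  refine ⟨hmem.toLp u, Lp.ext ?_⟩
  exact (cellsLp_ae_eq _).trans <|
    (ae_eq_restrict_Omega_iff_cells.mp hmem.coeFn_toLp).trans hug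

lemma norm_cellsLp (hdisj : Pairwise (Function.onFun Disjoint (OmegaI a h)))
    (u : Lp (V M) 2 (volume.restrict (Omega a h))) :
    √(h ^ N) * ‖cellsLp u‖ = ‖u‖ := by
  have hN : 0 ≤ h ^ N := (pow_pos hh.out N).le
  have hu : MemLp u 2 (volume.restrict (Omega a h)) := Lp.memLp u
  refine (pow_left_inj₀ (by positivity) (norm_nonneg u) two_ne_zero).mp ?_
  calc (√(h ^ N) * ‖cellsLp u‖) ^ 2
      = h ^ N * ∫ x, ‖cells a u x‖ ^ 2 ∂uniformCube N h := by
        rw [mul_pow, Real.sq_sqrt hN, sq_norm_eq_integral ℂ,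
          integral_congr_ae ((cellsLp_ae_eq u).mono fun x hx => by rw [hx])]
    _ = ∫ x in cube N h, ∑ i, ‖u (a i + x)‖ ^ 2 := by
        simp only [sq_norm_cells, setIntegral_cube, smul_eq_mul]
    _ = ∑ i, ∫ x in cube N h, ‖u (a i + x)‖ ^ 2 :=
        integral_finsetSum _ fun i _ =>
          (memLp_restrict_Omega_iff.mp hu i).integrable_norm_pow two_ne_zero
    _ = ∫ x in Omega a h, ‖u x‖ ^ 2 :=
        (setIntegral_Omega hdisj (hu.integrable_norm_pow two_ne_zero)).symm
    _ = ‖u‖ ^ 2 := (sq_norm_eq_integral ℂ u).symm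

end Cells

section Elementary

variable {N M S : ℕ} {h : ℝ} {a : Fin S → Fin N → ℝ}

lemma bigSum_ae_eq {EE : Fin S → Fin S → Finset (Fin N) → Matrix (Fin M) (Fin M) ℂ →
      (Lp (V M) 2 (volume.restrict (Omega a h)) →L[ℂ] Lp (V M) 2 (volume.restrict (Omega a h)))}
    (hEE : ∀ i j α A (u : Lp (V M) 2 (volume.restrict (Omega a h))),
      EE i j α A u =ᵐ[volume.restrict (Omega a h)] Efun a h i j α A u)
    (coef : Finset (Fin N) → Fin S → Fin S → Matrix (Fin M) (Fin M) ℂ)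
    (u : Lp (V M) 2 (volume.restrict (Omega a h))) :
    bigSum EE coef u =ᵐ[volume.restrict (Omega a h)]
      fun z => ∑ α, ∑ i, ∑ j, Efun a h i j α (coef α i j) u z := by
  have hsum : bigSum EE coef u =
      ∑ p : Finset (Fin N) × Fin S × Fin S, EE p.2.1 p.2.2 p.1 (coef p.1 p.2.1 p.2.2) u := by
    simp only [bigSum, _root_.sum_apply, Fintype.sum_prod_type]
  rw [hsum]
  filter_upwards [Lp.coeFn_fun_finsetSum univ fun p : Finset (Fin N) × Fin S × Fin S =>
      EE p.2.1 p.2.2 p.1 (coef p.1 p.2.1 p.2.2) u,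
    ae_all_iff.mpr fun p : Finset (Fin N) × Fin S × Fin S =>
      hEE p.2.1 p.2.2 p.1 (coef p.1 p.2.1 p.2.2) u] with z hz hEz
  rw [hz]
  simp only [hEz, Fintype.sum_prod_type]

variable [hh : Fact (0 < h)]

lemma Efun_translate (hdisj : Pairwise (Function.onFun Disjoint (OmegaI a h)))
    (i j k : Fin S) (α : Finset (Fin N)) (A : Matrix (Fin M) (Fin M) ℂ)
    (u : (Fin N → ℝ) → V M) {x : Fin N → ℝ} (hx : x ∈ cube N h) :
    Efun a h i j α A u (a k + x) =
      if k = i then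
        Matrix.toEuclideanCLM (𝕜 := ℂ) A (∫ y, u (a j + α.piecewise y x) ∂uniformCube N h)
      else 0 := by
  have hk : a k + x ∈ OmegaI a h k := by simpa [OmegaI] using hx
  split_ifs with hki
  · subst hki
    have hint : (∫ y in cube N h, (u (a j + combine α y x)).ofLp) =
        (∫ y in cube N h, u (a j + combine α y x)).ofLp :=
      (EuclideanSpace.equiv (Fin M) ℂ).integral_comp_comm _
    have hpow : (h ^ α.card)⁻¹ * (h ^ (N - α.card))⁻¹ = (h ^ N)⁻¹ := by
      rw [← mul_inv, ← pow_add, Nat.add_sub_of_le (card_finset_fin_le α)]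
    rw [Efun, Set.indicator_of_mem hk, hpow, add_sub_cancel_left, hint, setIntegral_cube]
    change (h ^ N)⁻¹ • Matrix.toEuclideanCLM (𝕜 := ℂ) A
      (h ^ N • ∫ y, u (a j + α.piecewise y x) ∂uniformCube N h) = _
    rw [ContinuousLinearMap.map_smul_of_tower, inv_smul_smul₀ (pow_pos hh.out N).ne']
  · exact Set.indicator_of_notMem (Set.disjoint_left.mp (hdisj hki) hk) _

lemma cells_sum_Efun (hdisj : Pairwise (Function.onFun Disjoint (OmegaI a h)))
    (c : Fin S → Fin S → Matrix (Fin M) (Fin M) ℂ) (α : Finset (Fin N))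
    {u : (Fin N → ℝ) → V M} {x : Fin N → ℝ} (hx : x ∈ cube N h)
    (hu : Integrable (fun y => cells a u (α.piecewise y x)) (uniformCube N h)) :
    cells a (fun z => ∑ i, ∑ j, Efun a h i j α (c i j) u z) x =
      Matrix.toEuclideanCLM (𝕜 := ℂ) (blockM c)
        (∫ y, cells a u (α.piecewise y x) ∂uniformCube N h) := by
  have hcoord (j : Fin S) (m : Fin M) :
      (∫ y, cells a u (α.piecewise y x) ∂uniformCube N h) (j, m) =
        (∫ y, u (a j + α.piecewise y x) ∂uniformCube N h) m := by
    have hu' := integrable_piLp_iff.mp hu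
    rw [eval_integral_piLp hu', eval_integral_piLp fun m' => hu' (j, m')]
    rfl
  ext ⟨k, m⟩
  calc cells a (fun z => ∑ i, ∑ j, Efun a h i j α (c i j) u z) x (k, m)
      = ∑ j, Matrix.toEuclideanCLM (𝕜 := ℂ) (c k j)
          (∫ y, u (a j + α.piecewise y x) ∂uniformCube N h) m := by
        rw [cells_apply, sum_comm]
        simp only [Efun_translate hdisj _ _ _ _ _ _ hx, sum_ite_eq, mem_univ, if_true,
          WithLp.ofLp_sum, Finset.sum_apply]
    _ = Matrix.toEuclideanCLM (𝕜 := ℂ) (blockM c)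
          (∫ y, cells a u (α.piecewise y x) ∂uniformCube N h) (k, m) := by
        simp [Matrix.mulVec, dotProduct, Fintype.sum_prod_type, blockM, hcoord]

lemma cells_sum_Efun_ae_eq (hdisj : Pairwise (Function.onFun Disjoint (OmegaI a h)))
    (c : Fin S → Fin S → Matrix (Fin M) (Fin M) ℂ) (α : Finset (Fin N))
    (u : Lp (V M) 2 (volume.restrict (Omega a h))) :
    cells a (fun z => ∑ i, ∑ j, Efun a h i j α (c i j) u z) =ᵐ[uniformCube N h]
      compLpStarAlgHom ℂ _ _ (Matrix.toEuclideanCLM (𝕜 := ℂ) (blockM c))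
        (coordAverage ℂ (fun _ => uniformIco h) α (cellsLp u)) := by
  have hint : Integrable (cells a u) (uniformCube N h) :=
    (memLp_cells_iff.mpr (Lp.memLp u)).integrable one_le_two
  filter_upwards [ae_uniformCube_iff.mpr (ae_restrict_mem measurableSet_cube),
    ae_integrable_piecewise α hint, ae_ae_piecewise α (cellsLp_ae_eq u),
    coordAverage_ae_eq ℂ α (cellsLp u), compLpStarAlgHom_ae_eq
      (Matrix.toEuclideanCLM (𝕜 := ℂ) (blockM c)) (coordAverage ℂ _ α (cellsLp u))]
    with x hx hintx hcells havg hcomp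
  rw [cells_sum_Efun hdisj c α hx hintx, hcomp, havg, integral_congr_ae hcells]

lemma semiconj_cellsLp_bigSum (hdisj : Pairwise (Function.onFun Disjoint (OmegaI a h)))
    {EE : Fin S → Fin S → Finset (Fin N) → Matrix (Fin M) (Fin M) ℂ →
      (Lp (V M) 2 (volume.restrict (Omega a h)) →L[ℂ] Lp (V M) 2 (volume.restrict (Omega a h)))}
    (hEE : ∀ i j α A (u : Lp (V M) 2 (volume.restrict (Omega a h))),
      EE i j α A u =ᵐ[volume.restrict (Omega a h)] Efun a h i j α A u)
    (coef : Finset (Fin N) → Fin S → Fin S → Matrix (Fin M) (Fin M) ℂ) :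
    Function.Semiconj cellsLp (bigSum EE coef)
      (∑ α, compLpStarAlgHom ℂ _ _ (Matrix.toEuclideanCLM (𝕜 := ℂ) (blockM (coef α))) *
        coordAverage ℂ (fun _ => uniformIco h) α :
          Lp (EuclideanSpace ℂ (Fin S × Fin M)) 2 (uniformCube N h) →L[ℂ] _) := by
  intro u
  let T (α : Finset (Fin N)) : Lp (EuclideanSpace ℂ (Fin S × Fin M)) 2 (uniformCube N h) →L[ℂ] _ :=
    compLpStarAlgHom ℂ _ _ (Matrix.toEuclideanCLM (𝕜 := ℂ) (blockM (coef α))) *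
      coordAverage ℂ (fun _ => uniformIco h) α
  change cellsLp (bigSum EE coef u) = (∑ α, T α) (cellsLp u)
  rw [_root_.sum_apply]
  refine Lp.ext ?_
  filter_upwards [cellsLp_ae_eq (bigSum EE coef u),
    ae_eq_restrict_Omega_iff_cells.mp (bigSum_ae_eq hEE coef u),
    ae_all_iff.mpr fun α => cells_sum_Efun_ae_eq hdisj (coef α) α u,
    Lp.coeFn_fun_finsetSum univ fun α => T α (cellsLp u)] with x hcells hbig hT hsum
  rw [hcells, hbig, cells_sum, hsum]
  exact sum_congr rfl fun α _ => hT α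

end Elementary

/-- `‖𝒜‖_{L²→L²} = max_{α⊆{1,...,N}} ‖𝐁_α‖`, where
`𝐁_α = ∑_{β⊆α} 𝐀_β` and `‖𝐁_α‖` is the operator norm of `𝐁_α` on `ℂ^{MS}`
(its largest singular value). -/
theorem operator_norm_eq_max_matrix_norm (N M S : ℕ) (hN : 1 ≤ N)
    (hM : 1 ≤ M) (hS : 1 ≤ S) (h : ℝ) (hh : 0 < h) (a : Fin S → Fin N → ℝ)
    (hdisj : ∀ i j : Fin S, i ≠ j → Disjoint (OmegaI a h i) (OmegaI a h j))
    (EE : Fin S → Fin S → Finset (Fin N) → Matrix (Fin M) (Fin M) ℂ →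
      (Lp (V M) 2 (volume.restrict (Omega a h)) →L[ℂ]
        Lp (V M) 2 (volume.restrict (Omega a h))))
    (hEE : ∀ i j α A (u : Lp (V M) 2 (volume.restrict (Omega a h))),
      (EE i j α A u : (Fin N → ℝ) → V M) =ᵐ[volume.restrict (Omega a h)]
        Efun a h i j α A u)
    (coef : Finset (Fin N) → Fin S → Fin S → Matrix (Fin M) (Fin M) ℂ) :
    ‖bigSum EE coef‖ =
      ⨆ α : Finset (Fin N), matOpNorm (∑ β ∈ α.powerset, blockM (coef β)) := by
  have : Fact (0 < h) := ⟨hh⟩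
  rw [norm_eq_of_semiconj (semiconj_cellsLp_bigSum hdisj hEE coef) (cellsLp_surjective hdisj)
    (Real.sqrt_pos.mpr (pow_pos hh N)) (norm_cellsLp hdisj),
    norm_sum_compLp_mul_coordAverage _ fun _ => exists_uniformIco_ne_zero_ne_one]
  simp only [matOpNorm, map_sum]

end Stmt11
end
end
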